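/- arXiv:2412.09672 — 13 statements merged into one kernel-verified Lean document; each statement's English description precedes it below -/
import Mathlib

section
/- Let d ≥ 1, t ≥ 1, and let (U_m)_{m<M} (M ≥ 1) be a unitary t-design in U(d). Let ψ ∈ ℂ^d be a unit vector. Then the family (U_m ψ)_{m<M} is a complex projective t-design; explicitly, for all tuples p, q : Fin t → Fin d one has (1/M) Σ_{m<M} ∏_{n<t} (U_m ψ)(p n) · conj((U_m ψ)(q n)) = ∫_{U(d)} ∏_{n<t} (U ψ)(p n) · conj((U ψ)(q n)) dHaar(U). -/
open MeasureTheory Matrix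

noncomputable instance Matrix.measurableSpace {m n R : Type*} [MeasurableSpace R] :
    MeasurableSpace (Matrix m n R) := inferInstanceAs (MeasurableSpace (m → n → R))

instance Matrix.borelSpace {m n R : Type*} [Countable m] [Countable n]
    [TopologicalSpace R] [MeasurableSpace R] [BorelSpace R] [SecondCountableTopology R] :
    BorelSpace (Matrix m n R) := inferInstanceAs (BorelSpace (m → n → R))

instance {ι : Type*} [Fintype ι] [DecidableEq ι] :
    BorelSpace (Matrix.unitaryGroup ι ℂ) := Subtype.borelSpace _

theorem design_expand {d t : ℕ} (A : Matrix (Fin d) (Fin d) ℂ) (ψ : Fin d → ℂ)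
    (p q : Fin t → Fin d) :
    ∏ n, A.mulVec ψ (p n) * (starRingEnd ℂ) (A.mulVec ψ (q n)) =
      ∑ f : Fin t → Fin d × Fin d,
        (∏ n, ψ (f n).1 * (starRingEnd ℂ) (ψ (f n).2)) *
          ∏ n, A (p n) (f n).1 * (starRingEnd ℂ) (A (q n) (f n).2) := by
  have h : ∀ n, A.mulVec ψ (p n) * (starRingEnd ℂ) (A.mulVec ψ (q n)) =
      ∑ x : Fin d × Fin d, (ψ x.1 * (starRingEnd ℂ) (ψ x.2)) *
        (A (p n) x.1 * (starRingEnd ℂ) (A (q n) x.2)) := by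
    intro n
    simp only [Matrix.mulVec, dotProduct, map_sum, map_mul]
    rw [Finset.sum_mul_sum, Fintype.sum_prod_type]
    refine Finset.sum_congr rfl fun a _ => Finset.sum_congr rfl fun b _ => ?_
    ring
  simp only [h, ← Finset.prod_mul_distrib]
  rw [Finset.prod_univ_sum, Fintype.piFinset_univ]

theorem design_integrable {d t : ℕ}
    (μ : Measure (Matrix.unitaryGroup (Fin d) ℂ)) [IsProbabilityMeasure μ]
    (p q r s : Fin t → Fin d) :
    Integrable (fun V : Matrix.unitaryGroup (Fin d) ℂ =>
      ∏ n, V (p n) (q n) * (starRingEnd ℂ) (V (r n) (s n))) μ := by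
  have hc : ∀ i j : Fin d, Continuous fun V : Matrix.unitaryGroup (Fin d) ℂ => V i j :=
    fun i j => continuous_subtype_val.matrix_elem i j
  refine Integrable.of_bound (C := 1) ?_ (Filter.Eventually.of_forall fun V => ?_)
  · refine Continuous.aestronglyMeasurable (continuous_finsetProd _ fun n _ => ?_)
    exact (hc _ _).mul (Complex.continuous_conj.comp (hc _ _))
  · rw [norm_prod]
    refine Finset.prod_le_one (fun _ _ => norm_nonneg _) fun n _ => ?_
    rw [norm_mul, RCLike.norm_conj]
    exact mul_le_one₀ (entry_norm_bound_of_unitary V.2 _ _) (norm_nonneg _)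
      (entry_norm_bound_of_unitary V.2 _ _)

/-- A unitary `t`-design acting on a fixed unit vector yields a complex
projective `t`-design. -/
theorem projective_design_of_unitary_design
    (d t M : ℕ) (hd : 1 ≤ d) (ht : 1 ≤ t) (hM : 1 ≤ M)
    (μ : Measure (Matrix.unitaryGroup (Fin d) ℂ)) [μ.IsHaarMeasure] [IsProbabilityMeasure μ]
    (U : Fin M → Matrix.unitaryGroup (Fin d) ℂ)
    (hU : ∀ p q r s : Fin t → Fin d,
      (1 / M : ℂ) * ∑ m, ∏ n, U m (p n) (q n) * (starRingEnd ℂ) (U m (r n) (s n)) =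
        ∫ V : Matrix.unitaryGroup (Fin d) ℂ,
          ∏ n, V (p n) (q n) * (starRingEnd ℂ) (V (r n) (s n)) ∂μ)
    (ψ : Fin d → ℂ) (hψ : ∑ i, ‖ψ i‖ ^ 2 = 1) :
    ∀ p q : Fin t → Fin d,
      (1 / M : ℂ) * ∑ m, ∏ n,
          (U m : Matrix (Fin d) (Fin d) ℂ).mulVec ψ (p n) *
            (starRingEnd ℂ) ((U m : Matrix (Fin d) (Fin d) ℂ).mulVec ψ (q n)) =
        ∫ V : Matrix.unitaryGroup (Fin d) ℂ,
          ∏ n, (V : Matrix (Fin d) (Fin d) ℂ).mulVec ψ (p n) *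
            (starRingEnd ℂ) ((V : Matrix (Fin d) (Fin d) ℂ).mulVec ψ (q n)) ∂μ := by
  intro p q
  simp only [design_expand]
  rw [integral_finsetSum _ fun f _ => (design_integrable μ p (fun n => (f n).1) q
    (fun n => (f n).2)).const_mul _, Finset.sum_comm, Finset.mul_sum]
  refine Finset.sum_congr rfl fun f _ => ?_
  rw [integral_const_mul, ← hU p (fun n => (f n).1) q (fun n => (f n).2), ← Finset.mul_sum]
  ring
end

section
/- Let μ be a probability measure on ℝ^m = (Fin m → ℝ) such that every real polynomial function in m variables is μ-integrable, let t ≥ 0, and let (x_i)_{i<M} (M ≥ 1) be a t-design for μ, i.e. for every f ∈ MvPolynomial (Fin m) ℝ with totalDegree f ≤ t one has (1/M) Σ_{i<M} f(x_i) = ∫ f dμ. Let T : (Fin m → ℝ) → (Fin n → ℝ) be an affine map, T(x) = g(x) + c with g ℝ-linear and c ∈ ℝ^n. Then (T(x_i))_{i<M} is a t-design for the pushforward measure μ.map T: for every h ∈ MvPolynomial (Fin n) ℝ with totalDegree h ≤ t, (1/M) Σ_{i<M} h(T(x_i)) = ∫ h d(μ.map T). -/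
open MeasureTheory

/-- Substituting polynomials of degree at most one does not raise the degree. -/
theorem totalDegree_subst_le {m n : ℕ} (p : Fin n → MvPolynomial (Fin m) ℝ)
    (hp : ∀ j, (p j).totalDegree ≤ 1) (h : MvPolynomial (Fin n) ℝ) :
    (MvPolynomial.bind₁ p h).totalDegree ≤ h.totalDegree := by
  rw [← MvPolynomial.aeval_eq_bind₁, MvPolynomial.aeval_def, MvPolynomial.eval₂_eq]
  apply MvPolynomial.totalDegree_finsetSum_le
  intro d hd
  refine (MvPolynomial.totalDegree_mul _ _).trans ?_
  rw [MvPolynomial.algebraMap_eq, MvPolynomial.totalDegree_C, zero_add]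
  refine (MvPolynomial.totalDegree_finsetProd _ _).trans ?_
  refine le_trans ?_ (MvPolynomial.le_totalDegree hd)
  refine Finset.sum_le_sum fun j _ => ?_
  refine (MvPolynomial.totalDegree_pow _ _).trans ?_
  simpa using Nat.mul_le_mul_left (d j) (hp j)

/-- The image of a `t`-design under an affine map `T x = g x + c` is a
`t`-design for the pushforward measure. -/
theorem affine_pushforward_design (m n t M : ℕ) (hM : 1 ≤ M)
    (μ : Measure (Fin m → ℝ)) [IsProbabilityMeasure μ]
    (hint : ∀ f : MvPolynomial (Fin m) ℝ, Integrable (fun x => MvPolynomial.eval x f) μ)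
    (x : Fin M → (Fin m → ℝ))
    (hdesign : ∀ f : MvPolynomial (Fin m) ℝ, f.totalDegree ≤ t →
      (1 / M : ℝ) * ∑ i, MvPolynomial.eval (x i) f = ∫ y, MvPolynomial.eval y f ∂μ)
    (g : (Fin m → ℝ) →ₗ[ℝ] (Fin n → ℝ)) (c : Fin n → ℝ) :
    ∀ h : MvPolynomial (Fin n) ℝ, h.totalDegree ≤ t →
      (1 / M : ℝ) * ∑ i, MvPolynomial.eval (g (x i) + c) h =
        ∫ y, MvPolynomial.eval y h ∂(μ.map (fun z => g z + c)) := by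
  intro h hh
  let p : Fin n → MvPolynomial (Fin m) ℝ := fun j =>
    ∑ k, MvPolynomial.C (g (Pi.single k 1) j) * MvPolynomial.X k + MvPolynomial.C (c j)
  have hp : ∀ j, (p j).totalDegree ≤ 1 := by
    intro j
    refine (MvPolynomial.totalDegree_add _ _).trans (max_le ?_ (by simp))
    apply MvPolynomial.totalDegree_finsetSum_le
    intro k _
    refine (MvPolynomial.totalDegree_mul _ _).trans ?_
    simp
  have hev : ∀ z, MvPolynomial.eval z (MvPolynomial.bind₁ p h)
      = MvPolynomial.eval (g z + c) h := by
    intro z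
    have hz : (fun j => MvPolynomial.eval z (p j)) = g z + c := by
      funext j
      rw [LinearMap.pi_apply_eq_sum_univ g z]
      simp [p, Finset.sum_apply, mul_comm, Pi.single_comm, Pi.single_apply, ← Pi.single_apply]
    rw [← hz]
    simp only [← MvPolynomial.coe_aeval_eq_eval, RingHom.coe_coe]
    rw [MvPolynomial.aeval_bind₁]
  have hT : Measurable (fun z => g z + c) :=
    (g.continuous_of_finiteDimensional.add continuous_const).measurable
  rw [integral_map hT.aemeasurable
    (MvPolynomial.continuous_eval h).measurable.aestronglyMeasurable]
  simp only [← hev]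
  exact hdesign _ ((totalDegree_subst_le p hp h).trans hh)
end

section
/- (Generalized Simpson rule.) Let d ≥ 2. Parametrize the (d−1)-dimensional probability simplex by T = { y ∈ ℝ^{d−1} : y_i ≥ 0 for all i, and Σ_i y_i ≤ 1 } with Lebesgue measure, via φ(y) = (y_1, …, y_{d−1}, 1 − Σ_i y_i) ∈ ℝ^d. Then for every f ∈ MvPolynomial (Fin d) ℝ with totalDegree f ≤ 2, (1/vol(T)) ∫_T f(φ(y)) dy = (1/(d² + d)) · ( Σ_{i ∈ Fin d} f(e_i) + d² · f(c) ), where e_i ∈ ℝ^d is the i-th standard basis vector, c = (1/d, …, 1/d) ∈ ℝ^d is the center of the simplex, and vol(T) = 1/(d−1)! is the Lebesgue volume of T. In other words, the d vertices with weight 1 together with the center with weight d² (an overall weight ratio 1 : d² : 1 : ⋯ : 1) form a 2-design for the flat measure on the d-point probability simplex. -/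
open MeasureTheory

lemma beta_int (t : ℝ) (q : ℕ) : ∀ p : ℕ, ∫ x in (0:ℝ)..t, x ^ p * (t - x) ^ q =
    t ^ (p + q + 1) * (p.factorial * q.factorial / (p + q + 1).factorial) := by
  induction q with
  | zero =>
    intro p
    simp only [pow_zero, mul_one, integral_pow, add_zero, Nat.factorial_zero, Nat.factorial_succ]
    have : (p.factorial : ℝ) ≠ 0 := by positivity
    push_cast
    field_simp
    simp
  | succ q ih =>
    intro p
    have h := intervalIntegral.integral_eq_sub_of_hasDerivAt (a := 0) (b := t)
      (f := fun x : ℝ => x ^ (p+1) * (t - x) ^ (q+1))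
      (f' := fun x : ℝ => (p+1) * (x ^ p * (t - x) ^ (q+1)) - (q+1) * (x ^ (p+1) * (t - x) ^ q))
      (by
        intro x _
        have h1 := (hasDerivAt_pow (p+1) x).mul (((hasDerivAt_id x).const_sub t).pow (q+1))
        refine h1.congr_deriv ?_
        simp
        ring)
      (by apply Continuous.intervalIntegrable; fun_prop)
    rw [intervalIntegral.integral_sub (by apply Continuous.intervalIntegrable; fun_prop)
      (by apply Continuous.intervalIntegrable; fun_prop),
      intervalIntegral.integral_const_mul, intervalIntegral.integral_const_mul, ih] at h
    simp only [sub_self, ne_eq, Nat.add_eq_zero_iff, one_ne_zero, and_false, not_false_eq_true, zero_pow, mul_zero, zero_mul] at h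
    have hp : (p + 1 : ℝ) ≠ 0 := by positivity
    have e : p + 1 + q + 1 = p + (q + 1) + 1 := by ring
    rw [e, Nat.factorial_succ p] at h
    rw [Nat.factorial_succ q]
    apply mul_left_cancel₀ hp
    rw [sub_eq_zero.1 h]
    push_cast
    ring

noncomputable def dF (n : ℕ) (a : Fin n → ℕ) (b : ℕ) (t : ℝ) (y : Fin n → ℝ) : ℝ :=
  Set.indicator {y : Fin n → ℝ | (∀ i, 0 ≤ y i) ∧ ∑ i, y i ≤ t}
    (fun y => (∏ i, y i ^ a i) * (t - ∑ i, y i) ^ b) y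

lemma meas_T (n : ℕ) (t : ℝ) : MeasurableSet {y : Fin n → ℝ | (∀ i, 0 ≤ y i) ∧ ∑ i, y i ≤ t} := by
  apply IsClosed.measurableSet
  simp only [Set.setOf_and, Set.setOf_forall]
  refine IsClosed.inter (isClosed_iInter fun i => isClosed_le (by fun_prop) (by fun_prop)) 
    (isClosed_le (by fun_prop) (by fun_prop))

lemma dF_meas (n : ℕ) (a : Fin n → ℕ) (b : ℕ) (t : ℝ) : Measurable (dF n a b t) := by
  unfold dF
  refine Measurable.indicator ?_ (meas_T n t)
  fun_prop

lemma dF_cons (n : ℕ) (a : Fin (n+1) → ℕ) (b : ℕ) (t x : ℝ) (y : Fin n → ℝ) :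
    dF (n+1) a b t (Fin.cons x y) =
      (if 0 ≤ x then x ^ a 0 else 0) * dF n (fun i => a i.succ) b (t - x) y := by
  unfold dF
  simp only [Set.indicator_apply, Set.mem_setOf_eq, Fin.forall_fin_succ, Fin.cons_zero,
    Fin.cons_succ, Fin.sum_univ_succ, Fin.prod_univ_succ, le_sub_iff_add_le', sub_sub]
  by_cases h : 0 ≤ x <;> simp [h, mul_assoc]

lemma dF_neg (n : ℕ) (a : Fin n → ℕ) (b : ℕ) (t : ℝ) (ht : t < 0) (y) : dF n a b t y = 0 := by
  unfold dF
  rw [Set.indicator_of_notMem]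
  rintro ⟨h1, h2⟩
  have := Finset.sum_nonneg (fun i (_ : i ∈ Finset.univ) => h1 i)
  linarith

lemma dF_lint (n : ℕ) : ∀ (a : Fin n → ℕ) (b : ℕ) (t : ℝ) (_ : 0 ≤ t),
    ∫⁻ y, ENNReal.ofReal (dF n a b t y) =
      ENNReal.ofReal (t ^ (n + ∑ i, a i + b) *
        ((∏ i, ((a i).factorial : ℝ)) * b.factorial / (n + ∑ i, a i + b).factorial)) := by
  induction n with
  | zero =>
    intro a b t ht
    have : (b.factorial : ℝ) ≠ 0 := by positivity
    rw [MeasureTheory.lintegral_unique]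
    simp [dF, ht, this, Measure.volume_pi_eq_dirac (default : Fin 0 → ℝ)]
  | succ n ih =>
    intro a b t ht
    have mp := (volume_preserving_piFinSuccAbove (fun _ : Fin (n+1) => ℝ) 0).symm
    rw [← mp.lintegral_comp (dF_meas _ a b t).ennreal_ofReal, Measure.volume_eq_prod,
      lintegral_prod (fun z => ENNReal.ofReal (dF (n+1) a b t
        ((MeasurableEquiv.piFinSuccAbove (fun _ : Fin (n+1) => ℝ) 0).symm z)))
        (((dF_meas _ a b t).ennreal_ofReal.comp mp.measurable).aemeasurable)]
    set m := n + ∑ i : Fin n, a i.succ + b with hm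
    set C : ℝ := (∏ i : Fin n, ((a i.succ).factorial : ℝ)) * b.factorial / m.factorial with hC
    have key : ∀ x : ℝ, ∫⁻ y : Fin n → ℝ, ENNReal.ofReal (dF (n+1) a b t
        ((MeasurableEquiv.piFinSuccAbove (fun _ : Fin (n+1) => ℝ) 0).symm (x, y))) =
        (Set.Icc 0 t).indicator (fun x => ENNReal.ofReal (C * (x ^ a 0 * (t - x) ^ m))) x := by
      intro x
      have e : ∀ y : Fin n → ℝ, (MeasurableEquiv.piFinSuccAbove (fun _ : Fin (n+1) => ℝ) 0).symm (x, y)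
        = Fin.cons x y := by
        intro y
        simp [MeasurableEquiv.piFinSuccAbove, Fin.insertNthEquiv]
      simp only [e, dF_cons]
      by_cases h0 : 0 ≤ x
      · by_cases h1 : x ≤ t
        · have hx : 0 ≤ x ^ a 0 := by positivity
          simp only [h0, if_true, ENNReal.ofReal_mul hx]
          rw [lintegral_const_mul _ (dF_meas _ _ _ _).ennreal_ofReal, ih _ _ _ (by linarith),
            ← ENNReal.ofReal_mul hx, Set.indicator_of_mem (by exact ⟨h0, h1⟩)]
          congr 1
          ring
        · rw [Set.indicator_of_notMem (fun h => h1 h.2)]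
          simp [dF_neg _ _ _ _ (by linarith : t - x < 0)]
      · rw [Set.indicator_of_notMem (fun h => h0 h.1)]
        simp [h0]
    simp only [key]
    rw [lintegral_indicator measurableSet_Icc, ← ofReal_integral_eq_lintegral_ofReal,
      integral_Icc_eq_integral_Ioc, ← intervalIntegral.integral_of_le ht,
      intervalIntegral.integral_const_mul, beta_int]
    · have e : a 0 + m + 1 = n + 1 + ∑ i, a i + b := by rw [Fin.sum_univ_succ]; omega
      have : (m.factorial : ℝ) ≠ 0 := by positivity
      rw [e, Fin.prod_univ_succ, hC]
      congr 1
      field_simp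
    · apply Continuous.integrableOn_Icc; fun_prop
    · refine (ae_restrict_iff' measurableSet_Icc).2 (Filter.Eventually.of_forall fun x hx => ?_)
      have h1 := hx.1
      have h2 := sub_nonneg.2 hx.2
      simp only [Pi.zero_apply]
      positivity

lemma compact_T (n : ℕ) : IsCompact {y : Fin n → ℝ | (∀ i, 0 ≤ y i) ∧ ∑ i, y i ≤ 1} := by
  apply (isCompact_Icc (a := (0 : Fin n → ℝ)) (b := 1)).of_isClosed_subset
  · simp only [Set.setOf_and, Set.setOf_forall]
    refine IsClosed.inter (isClosed_iInter fun i => isClosed_le (by fun_prop) (by fun_prop)) 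
      (isClosed_le (by fun_prop) (by fun_prop))
  · rintro y ⟨h1, h2⟩
    exact ⟨h1, fun i => (Finset.single_le_sum (fun i _ => h1 i) (Finset.mem_univ i)).trans h2⟩

lemma vol_T (n : ℕ) : volume {y : Fin n → ℝ | (∀ i, 0 ≤ y i) ∧ ∑ i, y i ≤ 1} =
      ENNReal.ofReal (1 / (Nat.factorial n)) := by
  have h := dF_lint n 0 0 1 zero_le_one
  rw [show (fun y => ENNReal.ofReal (dF n 0 0 1 y)) =
    Set.indicator {y : Fin n → ℝ | (∀ i, 0 ≤ y i) ∧ ∑ i, y i ≤ 1} 1 by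
      ext y; simp [dF, Set.indicator_apply]; split_ifs <;> simp, lintegral_indicator_one (meas_T n 1)] at h
  rw [h]; simp

lemma int_T (n : ℕ) (a : Fin n → ℕ) (b : ℕ) :
    ∫ y in {y : Fin n → ℝ | (∀ i, 0 ≤ y i) ∧ ∑ i, y i ≤ 1}, (∏ i, y i ^ a i) * (1 - ∑ i, y i) ^ b
     = (∏ i, ((a i).factorial : ℝ)) * b.factorial / (n + ∑ i, a i + b).factorial := by
  rw [← integral_indicator (meas_T n 1)]
  change ∫ y, dF n a b 1 y = _
  rw [integral_eq_lintegral_of_nonneg_ae _ (dF_meas n a b 1).aestronglyMeasurable,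
    dF_lint n a b 1 zero_le_one, ENNReal.toReal_ofReal (by positivity)]
  · simp
  · refine Filter.Eventually.of_forall fun y => ?_
    refine Set.indicator_nonneg ?_ y
    rintro y ⟨h1, h2⟩
    exact mul_nonneg (Finset.prod_nonneg fun i _ => pow_nonneg (h1 i) _) (pow_nonneg (by linarith) _)

lemma design_mon (n : ℕ) (s : Fin (n+1) →₀ ℕ) (hs : ∑ i, s i ≤ 2) :
    (∏ i, ((s i).factorial : ℝ)) / (n + ∑ i, s i).factorial =
      (1 / n.factorial) * ((1 / (((n+1:ℕ) : ℝ) ^ 2 + (n+1:ℕ))) *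
        ((∑ i, ∏ j, (Pi.single i (1:ℝ) : Fin (n+1) → ℝ) j ^ s j)
          + ((n+1:ℕ):ℝ)^2 * ∏ j, (1 / ((n+1:ℕ):ℝ)) ^ s j)) := by
  have hn : (n.factorial : ℝ) ≠ 0 := by positivity
  have hn1 : (n + 1 : ℝ) ≠ 0 := by positivity
  rw [Finset.prod_pow_eq_pow_sum]
  by_cases h0 : s = 0
  · subst h0
    simp
    field_simp
    ring
  obtain ⟨i, hi⟩ : ∃ i, s i ≠ 0 := by
    by_contra! h; exact h0 (by ext i; simp [h])
  obtain ⟨s', rfl⟩ : ∃ s', s = s' + Finsupp.single i 1 := 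
    ⟨s - Finsupp.single i 1, by rw [tsub_add_cancel_of_le]; simpa [Nat.one_le_iff_ne_zero] using hi⟩
  have S1 : ∀ i : Fin (n+1), ∑ j, (Finsupp.single i 1 : Fin (n+1) →₀ ℕ) j = 1 := by
    intro i; simp [Finsupp.single_apply]
  have hsum : ∑ j, (s' + Finsupp.single i 1 : Fin (n+1) →₀ ℕ) j = ∑ j, s' j + 1 := by
    simp [Finset.sum_add_distrib, S1]
  rw [hsum] at hs
  have P1 : ∀ (i k : Fin (n+1)), ∏ j, (Pi.single k (1:ℝ) : Fin (n+1) → ℝ) j ^ (Finsupp.single i 1 : Fin (n+1) →₀ ℕ) j = if i = k then 1 else 0 := by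
    intro i k
    rw [Finset.prod_eq_single i]
    · simp [Pi.single_apply]
    · intro j _ hj; simp [Finsupp.single_apply, hj.symm]
    · simp
  by_cases h0 : s' = 0
  · subst h0
    have F1 : ∏ j, (((Finsupp.single i 1 : Fin (n+1) →₀ ℕ) j).factorial : ℝ) = 1 := by
      apply Finset.prod_eq_one; intro j _; rw [Finsupp.single_apply]; split_ifs <;> simp
    simp only [zero_add, S1, P1, F1]
    simp only [Finset.sum_ite_eq, Finset.mem_univ, if_true, Nat.factorial_succ, Finsupp.coe_zero,
      Pi.zero_apply, Finset.sum_const_zero, zero_add]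
    push_cast
    field_simp
    ring
  obtain ⟨k, hk⟩ : ∃ i, s' i ≠ 0 := by
    by_contra! h; exact h0 (by ext i; simp [h])
  obtain ⟨s'', rfl⟩ : ∃ s'', s' = s'' + Finsupp.single k 1 := 
    ⟨s' - Finsupp.single k 1, by rw [tsub_add_cancel_of_le]; simpa [Nat.one_le_iff_ne_zero] using hk⟩
  have hsum' : ∑ j, (s'' + Finsupp.single k 1 : Fin (n+1) →₀ ℕ) j = ∑ j, s'' j + 1 := by
    simp [Finset.sum_add_distrib, S1]
  rw [hsum'] at hs
  have hz : ∑ j, s'' j = 0 := by omega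
  have : s'' = 0 := by
    ext j; exact (Finset.sum_eq_zero_iff.1 hz) j (Finset.mem_univ j)
  subst this
  rw [hsum, hsum']
  simp only [zero_add, Finsupp.add_apply, pow_add, Finset.prod_mul_distrib, P1]
  have F : ∏ j, ((((Finsupp.single k 1 : Fin (n+1) →₀ ℕ) j + (Finsupp.single i 1 : Fin (n+1) →₀ ℕ) j)).factorial : ℝ) = if i = k then 2 else 1 := by
    split_ifs with h
    · subst h
      rw [Finset.prod_eq_single i]
      · simp
      · intro j _ hj; simp [Finsupp.single_apply, hj.symm]
      · simp
    · apply Finset.prod_eq_one; intro j _; simp only [Finsupp.single_apply]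
      split_ifs with h1 h2
      · exact absurd (h2.trans h1.symm) h
      all_goals simp
  rw [F, hz]
  by_cases h : i = k
  · subst h
    simp only [mul_ite, mul_one, mul_zero, ite_self, Finset.sum_ite_eq, Finset.mem_univ, if_true, Nat.factorial_succ, zero_add]
    simp
    field_simp
    ring
  · have h' : ∀ x, (if k = x then (1:ℝ) else 0) * (if i = x then 1 else 0) = 0 := by
      intro x
      by_cases hx : k = x
      · have : ¬ i = x := fun e => h (e.trans hx.symm)
        simp [this]
      · simp [hx]
    simp only [h', h, if_false, Finset.sum_const_zero, Nat.factorial_succ, zero_add]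
    push_cast
    field_simp

lemma simpson_aux (n : ℕ) (f : MvPolynomial (Fin (n+1)) ℝ) (hf : f.totalDegree ≤ 2) :
      (∫ y in {y : Fin n → ℝ | (∀ i, 0 ≤ y i) ∧ ∑ i, y i ≤ 1},
          MvPolynomial.eval
            (fun i : Fin (n+1) => if h : (i : ℕ) < n then y ⟨(i : ℕ), h⟩ else 1 - ∑ j, y j)
            f) =
        (1 / (Nat.factorial n) : ℝ) * ((1 / (((n+1:ℕ) : ℝ) ^ 2 + (n+1:ℕ))) *
          ((∑ i, MvPolynomial.eval (Pi.single i (1 : ℝ)) f) +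
            ((n+1:ℕ) : ℝ) ^ 2 * MvPolynomial.eval (fun _ => (1 / (n+1:ℕ) : ℝ)) f)) := by
  simp only [MvPolynomial.eval_eq']
  rw [integral_finset_sum, Finset.sum_comm, Finset.mul_sum, ← Finset.sum_add_distrib, Finset.mul_sum,
    Finset.mul_sum]
  · refine Finset.sum_congr rfl fun s hs => ?_
    have hd : ∑ i, s i ≤ 2 := by
      have := (MvPolynomial.le_totalDegree hs).trans hf
      rwa [Finsupp.sum_fintype _ _ (by simp)] at this
    rw [integral_const_mul]
    have h1 := int_T n (fun i => s i.castSucc) (s (Fin.last n))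
    have h2 := design_mon n s hd
    simp only [Fin.prod_univ_castSucc (n := n), Fin.sum_univ_castSucc (n := n) (f := s)] at h2 ⊢
    simp only [Fin.val_castSucc, Fin.is_lt, dite_true, Fin.val_last, lt_irrefl, dite_false, Fin.eta]
    rw [h1, add_assoc, h2, ← Finset.mul_sum]
    ring
  · intro s _
    refine ContinuousOn.integrableOn_compact (compact_T n) (Continuous.continuousOn ?_)
    refine continuous_const.mul (continuous_finset_prod _ fun i _ => Continuous.pow ?_ _)
    split_ifs <;> fun_prop

/-- **generalized Simpson rule.** On the `(d−1)`-dimensional probability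
simplex (of Lebesgue volume `1/(d−1)!`), the `d` vertices with weight `1` together with the
center with weight `d²` form a `2`-design for the flat measure. -/
theorem generalized_simpson_rule (d : ℕ) (hd : 2 ≤ d) :
    volume {y : Fin (d - 1) → ℝ | (∀ i, 0 ≤ y i) ∧ ∑ i, y i ≤ 1} =
      ENNReal.ofReal (1 / (Nat.factorial (d - 1))) ∧
    ∀ f : MvPolynomial (Fin d) ℝ, f.totalDegree ≤ 2 →
      (∫ y in {y : Fin (d - 1) → ℝ | (∀ i, 0 ≤ y i) ∧ ∑ i, y i ≤ 1},
          MvPolynomial.eval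
            (fun i : Fin d => if h : (i : ℕ) < d - 1 then y ⟨(i : ℕ), h⟩ else 1 - ∑ j, y j)
            f) =
        (1 / (Nat.factorial (d - 1)) : ℝ) * ((1 / ((d : ℝ) ^ 2 + d)) *
          ((∑ i : Fin d, MvPolynomial.eval (Pi.single i (1 : ℝ)) f) +
            (d : ℝ) ^ 2 * MvPolynomial.eval (fun _ : Fin d => (1 / d : ℝ)) f)) := by
  obtain ⟨n, rfl⟩ : ∃ n, d = n + 1 := ⟨d - 1, by omega⟩
  exact ⟨vol_T n, fun f hf => simpson_aux n f hf⟩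
end

section
/- Let d ≥ 1 and let s : Fin d → ℕ be any exponent vector, with total degree S = Σ_i s_i. Then the Haar moments of the squared amplitudes of the first column of a Haar-random unitary are the moments of the flat (Lebesgue) measure on the d-point probability simplex: ∫_{U(d)} ∏_{i ∈ Fin d} |U_{i,0}|^{2 s_i} dHaar(U) = ( ∏_{i} (s_i)! ) · (d−1)! / (d−1+S)!. -/
open MeasureTheory Matrix

lemma aux_deriv {G : Type*} [Group G] [TopologicalSpace G] [IsTopologicalGroup G] [CompactSpace G]
    [MeasurableSpace G] [BorelSpace G] (μ : Measure G) [μ.IsMulLeftInvariant] [IsFiniteMeasure μ]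
    (f D : G → ℂ) (hf : Continuous f) (hD : Continuous D) (g : ℝ → G)
    (h : ∀ θ U, HasDerivAt (fun t => f (g t * U)) (D (g θ * U)) θ) : ∫ U, D U ∂μ = 0 := by
  obtain ⟨C, hC⟩ : ∃ C, ∀ U, ‖D U‖ ≤ C := by
    obtain ⟨C, hC⟩ := isCompact_univ.exists_bound_of_continuousOn hD.continuousOn
    exact ⟨C, fun U => hC U trivial⟩
  have key := (hasDerivAt_integral_of_dominated_loc_of_deriv_le (μ := μ) (𝕜 := ℝ) (x₀ := (0:ℝ))
    (F := fun t U => f (g t * U)) (F' := fun t U => D (g t * U)) (bound := fun _ => C)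
    (s := Set.univ) Filter.univ_mem
    (Filter.Eventually.of_forall fun t =>
      (hf.comp (continuous_const.mul continuous_id)).aestronglyMeasurable_of_compactSpace)
    ((hf.comp (continuous_const.mul continuous_id)).integrable_of_hasCompactSupport (HasCompactSupport.of_compactSpace _))
    ((hD.comp (continuous_const.mul continuous_id)).aestronglyMeasurable_of_compactSpace)
    (Filter.Eventually.of_forall fun U t _ => hC _)
    (integrable_const _)
    (Filter.Eventually.of_forall fun U t _ => h t U)).2
  simp only [integral_mul_left_eq_self] at key
  exact key.unique (hasDerivAt_const _ _)

section
attribute [local instance] Matrix.linftyOpNormedRing Matrix.linftyOpNormedAlgebra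
lemma aux_exp {d : ℕ} (A : Matrix (Fin d) (Fin d) ℂ) (hA : star A = -A) :
    ∃ g : ℝ → Matrix.unitaryGroup (Fin d) ℂ, ∀ θ (U : Matrix.unitaryGroup (Fin d) ℂ) k l,
      HasDerivAt (fun t => (g t * U : Matrix.unitaryGroup (Fin d) ℂ) k l)
        ((A * ((g θ * U : Matrix.unitaryGroup (Fin d) ℂ) : Matrix (Fin d) (Fin d) ℂ)) k l) θ := by
  refine ⟨fun t => ⟨NormedSpace.exp (t • A), ?_⟩, ?_⟩
  · have h1 : star (t • A) = -(t • A) := by simp [star_smul, hA]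
    rw [Matrix.mem_unitaryGroup_iff, Matrix.star_eq_conjTranspose, ← Matrix.exp_conjTranspose,
      ← Matrix.star_eq_conjTranspose, h1, ← Matrix.exp_add_of_commute _ _ (Commute.refl (t • A)).neg_right]
    simp
  · intro θ U k l
    have h := hasDerivAt_exp_smul_const' (𝕂 := ℝ) A θ
    have h2 := h.mul_const (U : Matrix (Fin d) (Fin d) ℂ)
    rw [mul_assoc] at h2
    exact hasDerivAt_pi.1 (hasDerivAt_pi.1 h2 k) l
end


instance aux_cpt {d : ℕ} : CompactSpace (Matrix.unitaryGroup (Fin d) ℂ) := by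
  apply isCompact_iff_compactSpace.1
  have h1 : IsCompact (Set.univ.pi fun _ : Fin d => Set.univ.pi fun _ : Fin d =>
      Metric.closedBall (0 : ℂ) 1) :=
    isCompact_univ_pi fun _ => isCompact_univ_pi fun _ => isCompact_closedBall _ _
  refine IsCompact.of_isClosed_subset (X := Matrix (Fin d) (Fin d) ℂ) h1 ?_ ?_
  · have : ((Matrix.unitaryGroup (Fin d) ℂ : Submonoid (Matrix (Fin d) (Fin d) ℂ)) :
        Set (Matrix (Fin d) (Fin d) ℂ)) = {A | A * star A = 1} := by
      ext A
      exact Matrix.mem_unitaryGroup_iff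
    rw [this]
    exact isClosed_eq (continuous_id.mul continuous_star) continuous_const
  · intro A hA i _ j _
    simpa using entry_norm_bound_of_unitary hA i j

lemma aux_cont {d : ℕ} (k l : Fin d) :
    Continuous (fun U : Matrix.unitaryGroup (Fin d) ℂ => U k l) :=
  (continuous_apply_apply k l).comp continuous_subtype_val

lemma aux_normsq (z : ℂ) (n : ℕ) : ((‖z‖ ^ (2 * n) : ℝ) : ℂ) = z ^ n * (star z) ^ n := by
  rw [← mul_pow, pow_mul]
  push_cast
  congr 1
  exact (Complex.mul_conj' z).symm

lemma aux_split {d : ℕ} (s : Fin d → ℕ) (j : Fin d) (x : Fin d → ℝ) :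
    ∏ k, x k ^ (2 * (s + Pi.single j 1 : Fin d → ℕ) k) = x j ^ 2 * ∏ k, x k ^ (2 * s k) := by
  simp only [Pi.add_apply, mul_add, pow_add, Finset.prod_mul_distrib]
  rw [mul_comm]
  congr 1
  rw [Finset.prod_eq_single j]
  · simp
  · intro b _ hb
    simp [hb]
  · simp

lemma aux_phase {d : ℕ} (i : Fin d) : ∃ V : Matrix.unitaryGroup (Fin d) ℂ,
    ∀ (U : Matrix.unitaryGroup (Fin d) ℂ) k l, (V * U : Matrix.unitaryGroup (Fin d) ℂ) k l =
      (if k = i then Complex.I else 1) * U k l := by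
  refine ⟨⟨Matrix.diagonal fun k => if k = i then Complex.I else 1, ?_⟩, ?_⟩
  · rw [Matrix.mem_unitaryGroup_iff, Matrix.star_eq_conjTranspose, Matrix.diagonal_conjTranspose,
      Matrix.diagonal_mul_diagonal, ← Matrix.diagonal_one]
    congr 1
    ext k
    by_cases h : k = i <;> simp [h]
  · intro U k l
    exact Matrix.diagonal_mul _ _ _ _

lemma aux_pder (a b : ℝ → ℂ) (θ : ℝ) (ha : HasDerivAt a (-b θ) θ) (hb : HasDerivAt b (a θ) θ)
    (p q : ℕ) (c : ℂ) :
    HasDerivAt (fun t => a t ^ (p + 1) * star (a t) ^ p * b t ^ q * star (b t) ^ (q + 1) * c)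
      ((q + 1) * (((‖a θ‖ ^ 2 * (‖a θ‖ ^ (2 * p) * ‖b θ‖ ^ (2 * q)) : ℝ) : ℂ) * c) -
       (p + 1) * (((‖b θ‖ ^ 2 * (‖a θ‖ ^ (2 * p) * ‖b θ‖ ^ (2 * q)) : ℝ) : ℂ) * c) +
      (q * (a θ) ^ (p + 2) * star (a θ) ^ p * (b θ) ^ (q - 1) * star (b θ) ^ (q + 1) -
       p * (a θ) ^ (p + 1) * star (a θ) ^ (p - 1) * (b θ) ^ q * star (b θ) ^ (q + 2)) * c) θ := by
  have h := ((((ha.pow (p + 1)).mul (ha.star.pow p)).mul (hb.pow q)).mul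
    (hb.star.pow (q + 1))).mul_const c
  refine h.congr_deriv ?_
  have e : ∀ z : ℂ, ((‖z‖ ^ 2 : ℝ) : ℂ) = z * star z := fun z => by
    simpa using aux_normsq z 1
  simp only [Complex.ofReal_mul, e, aux_normsq]
  simp only [Pi.mul_apply, Pi.pow_apply, star_neg, Nat.add_sub_cancel, Nat.cast_add, Nat.cast_one]
  generalize star (a θ) = a'
  generalize star (b θ) = b'
  generalize a θ = a
  generalize b θ = b
  cases p <;> cases q <;> simp <;> ring

lemma aux_core {G : Type*} [Group G] [TopologicalSpace G] [IsTopologicalGroup G] [CompactSpace G]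
    [MeasurableSpace G] [BorelSpace G] (μ : Measure G) [μ.IsMulLeftInvariant] [IsFiniteMeasure μ]
    (x y : G → ℂ) (P : G → ℝ) (hxc : Continuous x) (hyc : Continuous y) (hPc : Continuous P)
    (g : ℝ → G) (V : G)
    (hgx : ∀ θ U, HasDerivAt (fun t => x (g t * U)) (-y (g θ * U)) θ)
    (hgy : ∀ θ U, HasDerivAt (fun t => y (g t * U)) (x (g θ * U)) θ)
    (hPg : ∀ t U, P (g t * U) = P (g 0 * U))
    (hVx : ∀ U, x (V * U) = Complex.I * x U) (hVy : ∀ U, y (V * U) = y U)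
    (hPV : ∀ U, P (V * U) = P U) (p q : ℕ) :
    ((p : ℝ) + 1) * ∫ U, ‖y U‖ ^ 2 * (‖x U‖ ^ (2 * p) * (‖y U‖ ^ (2 * q) * P U)) ∂μ =
    (q + 1) * ∫ U, ‖x U‖ ^ 2 * (‖x U‖ ^ (2 * p) * (‖y U‖ ^ (2 * q) * P U)) ∂μ := by
  let T : G → ℂ := fun U =>
    (q * (x U) ^ (p + 2) * star (x U) ^ p * (y U) ^ (q - 1) * star (y U) ^ (q + 1) -
    p * (x U) ^ (p + 1) * star (x U) ^ (p - 1) * (y U) ^ q * star (y U) ^ (q + 2)) * P U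
  have hTc : Continuous T := by
    simp only [T]
    fun_prop
  have hT : ∫ U, T U ∂μ = 0 := by
    have h1 : ∀ U, T (V * U) = - T U := by
      intro U
      have e1 : ∀ n : ℕ, Complex.I ^ n * (star Complex.I) ^ n = 1 := by
        intro n
        rw [← mul_pow]; simp
      simp only [T, hPV, hVx, hVy, star_mul', mul_pow]
      have e2 : Complex.I ^ (p + 2) * (star Complex.I) ^ p = -1 := by
        rw [pow_add, mul_right_comm, e1]; simp
      have e3 : (p : ℂ) * (Complex.I ^ (p + 1) * (star Complex.I) ^ (p - 1)) = -p := by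
        cases p with
        | zero => simp
        | succ p =>
          rw [add_assoc, pow_add, Nat.add_sub_cancel, mul_right_comm, e1]; simp
      linear_combination
        (q * (x U) ^ (p + 2) * star (x U) ^ p * (y U) ^ (q - 1) * star (y U) ^ (q + 1)) *
          P U * e2 - 
        ((x U) ^ (p + 1) * star (x U) ^ (p - 1) * (y U) ^ q * star (y U) ^ (q + 2)) *
          P U * e3
    have h2 := integral_mul_left_eq_self (μ := μ) T V
    simp only [h1, integral_neg] at h2
    linear_combination -h2 / 2
  let A : G → ℝ := fun U =>
    ‖y U‖ ^ 2 * (‖x U‖ ^ (2 * p) * (‖y U‖ ^ (2 * q) * P U))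
  let B : G → ℝ := fun U =>
    ‖x U‖ ^ 2 * (‖x U‖ ^ (2 * p) * (‖y U‖ ^ (2 * q) * P U))
  have hAc : Continuous A := by
    simp only [A]
    fun_prop
  have hBc : Continuous B := by
    simp only [B]
    fun_prop
  have int : ∀ f : G → ℂ, Continuous f → Integrable f μ := fun f hf =>
    hf.integrable_of_hasCompactSupport (HasCompactSupport.of_compactSpace _)
  have main := aux_deriv μ (fun U => (x U) ^ (p + 1) * star (x U) ^ p * (y U) ^ q *
      star (y U) ^ (q + 1) * P U)
    (fun U => (q + 1) * (B U : ℂ) - (p + 1) * (A U : ℂ) + T U)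
    (by fun_prop) (by fun_prop) g (by
      intro θ U
      have hfun : (fun t => x (g t * U) ^ (p + 1) * star (x (g t * U)) ^ p * y (g t * U) ^ q *
          star (y (g t * U)) ^ (q + 1) * (P (g t * U) : ℂ)) = fun t => x (g t * U) ^ (p + 1) *
          star (x (g t * U)) ^ p * y (g t * U) ^ q * star (y (g t * U)) ^ (q + 1) *
          (P (g 0 * U) : ℂ) := by
        ext t; rw [hPg t U]
      rw [hfun]
      refine (aux_pder _ _ θ (hgx θ U) (hgy θ U) p q (P (g 0 * U))).congr_deriv ?_
      simp only [A, B, T]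
      rw [hPg θ U]
      push_cast
      ring)
  rw [integral_add (int _ (by fun_prop)) (int _ hTc), hT, add_zero,
    integral_sub (int _ (by fun_prop)) (int _ (by fun_prop)), integral_const_mul,
    integral_const_mul, integral_complex_ofReal, integral_complex_ofReal] at main
  have : ((p : ℝ) + 1) * ∫ U, A U ∂μ = (q + 1) * ∫ U, B U ∂μ := by
    have h : (((p : ℝ) + 1 : ℝ) : ℂ) * ((∫ U, A U ∂μ : ℝ) : ℂ) =
      (((q : ℝ) + 1 : ℝ) : ℂ) * ((∫ U, B U ∂μ : ℝ) : ℂ) := by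
      push_cast
      linear_combination -main
    exact_mod_cast h
  exact this

lemma aux_exchange {d : ℕ} (μ : Measure (Matrix.unitaryGroup (Fin d) ℂ))
    [μ.IsMulLeftInvariant] [IsFiniteMeasure μ] (s : Fin d → ℕ) (o i j : Fin d) (hij : i ≠ j) :
    (s i + 1) * ∫ U : Matrix.unitaryGroup (Fin d) ℂ,
        ∏ k, ‖U k o‖ ^ (2 * (s + Pi.single j 1 : Fin d → ℕ) k) ∂μ =
    (s j + 1) * ∫ U : Matrix.unitaryGroup (Fin d) ℂ,
        ∏ k, ‖U k o‖ ^ (2 * (s + Pi.single i 1 : Fin d → ℕ) k) ∂μ := by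
  obtain ⟨g, hg⟩ := aux_exp (Matrix.single j i (1:ℂ) - Matrix.single i j 1) (by
    simp [Matrix.star_eq_conjTranspose])
  have hgi : ∀ θ (U : Matrix.unitaryGroup (Fin d) ℂ), HasDerivAt
      (fun t => (g t * U : Matrix.unitaryGroup (Fin d) ℂ) i o)
      (-(g θ * U : Matrix.unitaryGroup (Fin d) ℂ) j o) θ := by
    intro θ U
    simpa [sub_mul, hij] using hg θ U i o
  have hgj : ∀ θ (U : Matrix.unitaryGroup (Fin d) ℂ), HasDerivAt
      (fun t => (g t * U : Matrix.unitaryGroup (Fin d) ℂ) j o)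
      ((g θ * U : Matrix.unitaryGroup (Fin d) ℂ) i o) θ := by
    intro θ U
    simpa [sub_mul, hij.symm] using hg θ U j o
  have hgk : ∀ θ (U : Matrix.unitaryGroup (Fin d) ℂ) k, k ≠ i → k ≠ j → 
      (g θ * U : Matrix.unitaryGroup (Fin d) ℂ) k o =
      (g 0 * U : Matrix.unitaryGroup (Fin d) ℂ) k o := by
    intro θ U k hi hj
    have h0 : ∀ θ, HasDerivAt
      (fun t => (g t * U : Matrix.unitaryGroup (Fin d) ℂ) k o) 0 θ := by
      intro θ
      simpa [sub_mul, hi, hj] using hg θ U k o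
    exact is_const_of_deriv_eq_zero (fun x => (h0 x).differentiableAt) (fun x => (h0 x).deriv) _ _
  let P : Matrix.unitaryGroup (Fin d) ℂ → ℝ := fun U =>
    ∏ k ∈ (Finset.univ.erase i).erase j, ‖U k o‖ ^ (2 * s k)
  have hPg : ∀ t U, P (g t * U) = P (g 0 * U) := by
    intro t U
    refine Finset.prod_congr rfl fun k hk => ?_
    simp only [Finset.mem_erase] at hk
    rw [hgk t U k hk.2.1 hk.1]
  have hPc : Continuous P := by
    refine continuous_finsetProd _ fun k _ => ?_
    exact ((aux_cont k o).norm).pow _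
  have hPs : ∀ U : Matrix.unitaryGroup (Fin d) ℂ, ∏ k, ‖U k o‖ ^ (2 * s k) =
      ‖U i o‖ ^ (2 * s i) * (‖U j o‖ ^ (2 * s j) * P U) := by
    intro U
    rw [← Finset.mul_prod_erase _ _ (Finset.mem_univ i), ← Finset.mul_prod_erase _ _
      (Finset.mem_erase.2 ⟨hij.symm, Finset.mem_univ j⟩)]
  simp only [aux_split s _ (fun k => ‖_‖), hPs]
  obtain ⟨V, hV⟩ := aux_phase i
  have hPV : ∀ U, P (V * U) = P U := by
    intro U
    refine Finset.prod_congr rfl fun k hk => ?_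
    simp only [Finset.mem_erase] at hk
    rw [hV, if_neg hk.2.1, one_mul]
  clear_value P
  clear hPs
  exact aux_core μ (fun U => U i o) (fun U => U j o) P (aux_cont i o) (aux_cont j o) hPc g V hgi hgj hPg
    (fun U => by simp [hV]) (fun U => by simp [hV, hij.symm]) hPV _ _

lemma aux_sum {d : ℕ} (U : Matrix.unitaryGroup (Fin d) ℂ) (o : Fin d) :
    ∑ k, ‖U k o‖ ^ 2 = 1 := by
  have h := congrFun (congrFun (Matrix.mem_unitaryGroup_iff'.1 U.2) o) o
  rw [Matrix.mul_apply] at h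
  simp only [Matrix.star_apply, Matrix.one_apply_eq] at h
  have h2 : ((∑ k, ‖U k o‖ ^ 2 : ℝ) : ℂ) = 1 := by
    rw [← h]
    push_cast
    exact Finset.sum_congr rfl fun k _ => (Complex.conj_mul' _).symm
  exact_mod_cast h2

/-- The Haar moments of the squared amplitudes of the first column of a
Haar-random unitary are the moments of the flat (Dirichlet(1,…,1)) measure on the
`d`-point probability simplex. -/
theorem haar_column_moments_eq_simplex_moments (d : ℕ) (hd : 1 ≤ d)
    (μ : Measure (Matrix.unitaryGroup (Fin d) ℂ)) [μ.IsHaarMeasure] [IsProbabilityMeasure μ]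
    (s : Fin d → ℕ) :
    ∫ U : Matrix.unitaryGroup (Fin d) ℂ, ∏ i, ‖U i (⟨0, hd⟩ : Fin d)‖ ^ (2 * s i) ∂μ =
      (∏ i, Nat.factorial (s i) : ℝ) * Nat.factorial (d - 1) /
        Nat.factorial (d - 1 + ∑ i, s i) := by
  set o : Fin d := ⟨0, hd⟩
  obtain ⟨n, hn⟩ : ∃ n, ∑ i, s i = n := ⟨_, rfl⟩
  induction n generalizing s with
  | zero =>
    have h0 : ∀ i, s i = 0 := by simpa using hn
    simp [h0]
    field_simp
  | succ n ih =>
    obtain ⟨i, hi⟩ : ∃ i, s i ≠ 0 := by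
      by_contra! h
      simp [h] at hn
    obtain ⟨t, rfl⟩ : ∃ t : Fin d → ℕ, s = t + Pi.single i 1 := by
      refine ⟨s - Pi.single i 1, ?_⟩
      ext k
      by_cases hk : k = i
      · subst hk; simp; omega
      · simp [hk]
    have ht : ∑ i, t i = n := by
      simpa [Finset.sum_add_distrib] using hn
    have e1 : ∀ j, ((t i : ℝ) + 1) * ∫ U : Matrix.unitaryGroup (Fin d) ℂ,
        ∏ k, ‖U k o‖ ^ (2 * (t + Pi.single j 1 : Fin d → ℕ) k) ∂μ =
      (t j + 1) * ∫ U : Matrix.unitaryGroup (Fin d) ℂ,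
        ∏ k, ‖U k o‖ ^ (2 * (t + Pi.single i 1 : Fin d → ℕ) k) ∂μ := by
      intro j
      by_cases hij : i = j
      · subst hij; rfl
      · exact aux_exchange μ t o i j hij
    have e2 : ∑ j, ∫ U : Matrix.unitaryGroup (Fin d) ℂ,
        ∏ k, ‖U k o‖ ^ (2 * (t + Pi.single j 1 : Fin d → ℕ) k) ∂μ =
        ∫ U : Matrix.unitaryGroup (Fin d) ℂ, ∏ k, ‖U k o‖ ^ (2 * t k) ∂μ := by
      rw [← integral_finsetSum]
      · simp only [aux_split t _ (fun k => ‖_‖), ← Finset.sum_mul, aux_sum, one_mul]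
      · intro j _
        refine Continuous.integrable_of_hasCompactSupport ?_ (HasCompactSupport.of_compactSpace _)
        exact continuous_finsetProd _ fun k _ => ((aux_cont k o).norm).pow _
    have e3 := Finset.sum_congr (rfl : (Finset.univ : Finset (Fin d)) = _) fun j _ => e1 j
    rw [← Finset.mul_sum, e2, ← Finset.sum_mul, ih t ht, Finset.sum_add_distrib] at e3
    have ht' : ∑ i, (t i : ℝ) = n := by exact_mod_cast ht
    rw [ht', ht] at e3
    rw [hn]
    have e4 : (∏ k, (Nat.factorial ((t + Pi.single i 1 : Fin d → ℕ) k) : ℝ)) =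
        (t i + 1) * ∏ k, (Nat.factorial (t k) : ℝ) := by
      rw [← Finset.mul_prod_erase _ _ (Finset.mem_univ i),
        ← Finset.mul_prod_erase _ (fun k => (Nat.factorial (t k) : ℝ)) (Finset.mem_univ i),
        ← mul_assoc]
      congr 1
      · simp [Nat.factorial_succ]
      · refine Finset.prod_congr rfl fun k hk => ?_
        simp [Finset.ne_of_mem_erase hk]
    rw [e4]
    have e5 : (Nat.factorial (d - 1 + (n + 1)) : ℝ) = (n + d) * Nat.factorial (d - 1 + n) := by
      rw [← add_assoc, Nat.factorial_succ]
      push_cast [Nat.cast_sub hd]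
      ring
    rw [e5]
    have hpos : (0:ℝ) < n + d := by
      have : (0:ℝ) < d := by exact_mod_cast hd
      positivity
    have hf : (0:ℝ) < Nat.factorial (d - 1 + n) := by positivity
    simp only [Finset.sum_const, Finset.card_univ, Fintype.card_fin, nsmul_eq_mul, mul_one] at e3
    rw [eq_div_iff (by positivity)]
    field_simp at e3
    linear_combination -e3
end

section
/- (Simplex designs from projective designs.) Let d ≥ 1, t ≥ 1, and let (ψ_m)_{m<M} (M ≥ 1) be a complex projective t-design of unit vectors in ℂ^d. Then the decohered probability vectors p_m = (|ψ_m(i)|²)_{i ∈ Fin d} form a t-design for the flat measure on the d-point probability simplex: for every exponent vector s : Fin d → ℕ with S = Σ_i s_i ≤ t, (1/M) Σ_{m<M} ∏_{i ∈ Fin d} |ψ_m(i)|^{2 s_i} = ( ∏_i (s_i)! ) · (d−1)! / (d−1+S)!. -/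
open MeasureTheory Matrix

namespace SD

set_option linter.unusedSectionVars false

abbrev UG (d : ℕ) : Type := Matrix.unitaryGroup (Fin d) ℂ

/-- monomial -/
def mon1 {d : ℕ} (α : Fin d → ℕ) (φ : Fin d → ℂ) : ℂ := ∏ i, φ i ^ α i

lemma mon1_add {d : ℕ} (α β : Fin d → ℕ) (φ : Fin d → ℂ) :
    mon1 (α + β) φ = mon1 α φ * mon1 β φ := by
  simp [mon1, pow_add, Finset.prod_mul_distrib]

lemma mon1_single {d : ℕ} (i : Fin d) (n : ℕ) (φ : Fin d → ℂ) :
    mon1 (Pi.single i n) φ = φ i ^ n := by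
  unfold mon1
  rw [Finset.prod_eq_single i]
  · simp
  · intro b _ hb; simp [hb]
  · simp

lemma mon1_congr {d : ℕ} (α : Fin d → ℕ) (φ χ : Fin d → ℂ) (h : ∀ i, α i ≠ 0 → φ i = χ i) :
    mon1 α φ = mon1 α χ := by
  unfold mon1
  refine Finset.prod_congr rfl fun i _ => ?_
  by_cases hi : α i = 0
  · simp [hi]
  · rw [h i hi]

lemma continuous_mon1 {d : ℕ} (α : Fin d → ℕ) : Continuous (mon1 α) := by
  unfold mon1; fun_prop

instance compactU {d : ℕ} : CompactSpace (UG d) := by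
  apply isCompact_iff_compactSpace.mp
  have hb : ((Matrix.unitaryGroup (Fin d) ℂ : Submonoid _) : Set (Matrix (Fin d) (Fin d) ℂ)) ⊆
      Set.pi Set.univ (fun _ => Set.pi Set.univ fun _ => Metric.closedBall (0:ℂ) 1) := by
    intro U hU i _ j _
    simpa using entry_norm_bound_of_unitary hU i j
  refine IsCompact.of_isClosed_subset ?_ ?_ hb
  · exact isCompact_univ_pi fun _ => isCompact_univ_pi fun _ => isCompact_closedBall _ _
  · have : ((Matrix.unitaryGroup (Fin d) ℂ : Submonoid _) : Set (Matrix (Fin d) (Fin d) ℂ)) =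
      {U | U * star U = 1} := by
      ext U; exact Matrix.mem_unitaryGroup_iff
    rw [this]
    exact isClosed_eq (by fun_prop) continuous_const

section
variable {d : ℕ} (μ : Measure (Matrix.unitaryGroup (Fin d) ℂ)) [μ.IsHaarMeasure]
  [IsProbabilityMeasure μ] (ψ₀ : Fin d → ℂ)

/-- expectation -/
noncomputable def E (f : (Fin d → ℂ) → ℂ) : ℂ :=
  ∫ V : Matrix.unitaryGroup (Fin d) ℂ, f ((V : Matrix (Fin d) (Fin d) ℂ).mulVec ψ₀) ∂μ

lemma integ (f : (Fin d → ℂ) → ℂ) (hf : Continuous f) :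
    Integrable (fun V : UG d => f ((V : Matrix (Fin d) (Fin d) ℂ).mulVec ψ₀)) μ := by
  have hc : Continuous (fun V : UG d => f ((V : Matrix (Fin d) (Fin d) ℂ).mulVec ψ₀)) := by
    apply hf.comp
    exact Continuous.matrix_mulVec continuous_subtype_val continuous_const
  exact hc.integrable_of_hasCompactSupport (HasCompactSupport.of_compactSpace _)

lemma E_sum {ι : Type*} (s : Finset ι) (f : ι → (Fin d → ℂ) → ℂ) (hf : ∀ i, Continuous (f i)) :
    E μ ψ₀ (fun φ => ∑ i ∈ s, f i φ) = ∑ i ∈ s, E μ ψ₀ (f i) := by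
  unfold E
  exact integral_finsetSum _ fun i _ => integ μ ψ₀ _ (hf i)

lemma E_mul (c : ℂ) (f : (Fin d → ℂ) → ℂ) :
    E μ ψ₀ (fun φ => c * f φ) = c * E μ ψ₀ f := by
  unfold E
  exact integral_const_mul _ _

lemma E_inv (W : Matrix (Fin d) (Fin d) ℂ) (hW : W ∈ Matrix.unitaryGroup (Fin d) ℂ)
    (f : (Fin d → ℂ) → ℂ) :
    E μ ψ₀ (fun φ => f (W.mulVec φ)) = E μ ψ₀ f := by
  unfold E
  have h := integral_mul_left_eq_self (μ := μ)
    (fun V : Matrix.unitaryGroup (Fin d) ℂ => f ((V : Matrix (Fin d) (Fin d) ℂ).mulVec ψ₀))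
    (⟨W, hW⟩ : Matrix.unitaryGroup (Fin d) ℂ)
  rw [← h]
  simp [Matrix.mulVec_mulVec]

/-- monomial with conj -/
noncomputable def mon (α β : Fin d → ℕ) (φ : Fin d → ℂ) : ℂ :=
  mon1 α φ * (starRingEnd ℂ) (mon1 β φ)

lemma continuous_mon (α β : Fin d → ℕ) : Continuous (mon α β) := by
  have := continuous_mon1 α
  have := continuous_mon1 β
  unfold mon; fun_prop

lemma mon1_diag (w : ℂ) (i : Fin d) (α : Fin d → ℕ) (φ : Fin d → ℂ) :
    mon1 α ((Matrix.diagonal (Function.update 1 i w)).mulVec φ) = w ^ α i * mon1 α φ := by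
  simp only [mon1, Matrix.mulVec_diagonal, mul_pow, Finset.prod_mul_distrib]
  congr 1
  rw [Finset.prod_eq_single i]
  · simp
  · intro b _ hb; simp [hb]
  · simp

lemma phase_lt (α β : Fin d → ℕ) (i : Fin d) (h : α i ≠ β i) : E μ ψ₀ (mon α β) = 0 := by
  obtain ⟨w, hw1, hw2⟩ : ∃ w : ℂ, w * (starRingEnd ℂ) w = 1 ∧
      w ^ α i * (starRingEnd ℂ) (w ^ β i) = -1 := by
    have hn : ((α i : ℂ) - β i) ≠ 0 := by
      rw [sub_ne_zero]; exact_mod_cast h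
    refine ⟨Complex.exp (Real.pi / ((α i : ℂ) - β i) * Complex.I), ?_, ?_⟩
    · rw [← Complex.exp_conj, ← Complex.exp_add]
      simp
    · rw [← Complex.exp_nat_mul, ← Complex.exp_nat_mul, ← Complex.exp_conj, ← Complex.exp_add,
        ← Complex.exp_pi_mul_I]
      congr 1
      simp
      field_simp
      ring
  have hW : Matrix.diagonal (Function.update (1 : Fin d → ℂ) i w) ∈
      Matrix.unitaryGroup (Fin d) ℂ := by
    rw [Matrix.mem_unitaryGroup_iff, Matrix.star_eq_conjTranspose, Matrix.diagonal_conjTranspose,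
      Matrix.diagonal_mul_diagonal, ← Matrix.diagonal_one]
    congr 1
    funext k
    by_cases hk : k = i
    · subst hk; simpa using hw1
    · simp [hk]
  have h1 := E_inv μ ψ₀ _ hW (mon α β)
  have h2 : (fun φ => mon α β ((Matrix.diagonal (Function.update (1 : Fin d → ℂ) i w)).mulVec φ))
      = fun φ => (-1) * mon α β φ := by
    funext φ
    simp only [mon, mon1_diag, map_mul]
    rw [← hw2]; ring
  rw [h2, E_mul] at h1
  have h3 : (2 : ℂ) * E μ ψ₀ (mon α β) = 0 := by linear_combination -h1
  simpa using h3

lemma givens (i j : Fin d) (hij : i ≠ j) (a b : ℝ) (hab : a ^ 2 + b ^ 2 = 1) :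
    ∃ W ∈ Matrix.unitaryGroup (Fin d) ℂ, ∀ φ : Fin d → ℂ,
      W.mulVec φ i = a * φ i + b * φ j ∧ ∀ k, k ≠ i → k ≠ j → W.mulVec φ k = φ k := by
  have hab' : (a : ℂ) ^ 2 + (b : ℂ) ^ 2 = 1 := by exact_mod_cast hab
  refine ⟨1 + Matrix.single i i ((a : ℂ) - 1) + Matrix.single j j ((a : ℂ) - 1) +
    Matrix.single i j (b : ℂ) - Matrix.single j i (b : ℂ), ?_, ?_⟩
  · rw [Matrix.mem_unitaryGroup_iff, Matrix.star_eq_conjTranspose]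
    simp only [Matrix.conjTranspose_add, Matrix.conjTranspose_sub, Matrix.conjTranspose_one,
      Matrix.conjTranspose_single]
    simp only [add_mul, mul_add, sub_mul, mul_sub, one_mul, mul_one, Matrix.single_mul_single_same,
      Matrix.single_mul_single_of_ne _ _ _ _ hij, Matrix.single_mul_single_of_ne _ _ _ _ hij.symm]
    ext k l
    simp [Matrix.single_apply]
    split_ifs <;> simp_all <;> first | (ring1) | (linear_combination hab')
  · intro φ
    constructor
    · simp [Matrix.sub_mulVec, Matrix.add_mulVec, Matrix.single_mulVec, hij]
      ring
    · intro k hi hj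
      simp [Matrix.sub_mulVec, Matrix.add_mulVec, Matrix.single_mulVec, hi, hj]

lemma pair_poly (i j : Fin d) (hij : i ≠ j) (r : Fin d → ℕ) (hi : r i = 0) (hj : r j = 0)
    (k : ℕ) (x : ℝ) :
    ∑ a ∈ Finset.range (k + 1), ((k.choose a : ℂ) ^ 2 *
      E μ ψ₀ (mon (r + Pi.single i (k - a) + Pi.single j a)
        (r + Pi.single i (k - a) + Pi.single j a))) * ((x : ℂ) ^ 2) ^ a =
    ∑ a ∈ Finset.range (k + 1), ((k.choose a : ℂ) *
      E μ ψ₀ (mon (r + Pi.single i k) (r + Pi.single i k))) * ((x : ℂ) ^ 2) ^ a := by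
  have hpos : 0 < 1 + x ^ 2 := by positivity
  set N : ℝ := Real.sqrt (1 + x ^ 2) with hN
  have hN2 : N ^ 2 = 1 + x ^ 2 := Real.sq_sqrt hpos.le
  have hN0 : N ≠ 0 := (Real.sqrt_pos.mpr hpos).ne'
  obtain ⟨W, hW, hWφ⟩ := givens i j hij (1 / N) (x / N) (by field_simp; linarith)
  have h1 := E_inv μ ψ₀ W hW (mon (r + Pi.single i k) (r + Pi.single i k))
  have hNC : (N : ℂ) ≠ 0 := by exact_mod_cast hN0
  have hNC2 : (N : ℂ) ^ 2 = 1 + (x : ℂ) ^ 2 := by exact_mod_cast hN2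
  have h2 : (fun φ => ((1 + (x : ℂ) ^ 2) ^ k) *
      mon (r + Pi.single i k) (r + Pi.single i k) (W.mulVec φ)) =
      fun φ => ∑ a ∈ Finset.range (k + 1), ∑ b ∈ Finset.range (k + 1),
        ((k.choose a : ℂ) * k.choose b * (x : ℂ) ^ (a + b)) *
        mon (r + Pi.single i (k - a) + Pi.single j a) (r + Pi.single i (k - b) + Pi.single j b) φ := by
    funext φ
    have e1 : W.mulVec φ i = (x * φ j + φ i) / N := by
      rw [(hWφ φ).1]; push_cast; field_simp; ring
    have e2 : mon1 r (W.mulVec φ) = mon1 r φ := by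
      apply mon1_congr
      intro l hl
      apply (hWφ φ).2
      · rintro rfl; exact hl hi
      · rintro rfl; exact hl hj
    simp only [mon, mon1_add, mon1_single, e1, e2, map_mul, map_pow, map_div₀, map_add,
      Complex.conj_ofReal]
    have e3 : (1 + (x : ℂ) ^ 2) ^ k * (mon1 r φ * ((x * φ j + φ i) / N) ^ k *
        ((starRingEnd ℂ) (mon1 r φ) *
          ((x * (starRingEnd ℂ) (φ j) + (starRingEnd ℂ) (φ i)) / N) ^ k)) =
        mon1 r φ * (starRingEnd ℂ) (mon1 r φ) * ((x * φ j + φ i) ^ k *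
          (x * (starRingEnd ℂ) (φ j) + (starRingEnd ℂ) (φ i)) ^ k) := by
      rw [← hNC2, div_pow, div_pow, ← pow_mul, mul_comm 2 k, pow_mul]
      field_simp
    rw [e3, add_pow, add_pow, Finset.sum_mul_sum, Finset.mul_sum]
    refine Finset.sum_congr rfl fun a _ => ?_
    rw [Finset.mul_sum]
    refine Finset.sum_congr rfl fun b _ => ?_
    rw [mul_pow, mul_pow, pow_add]
    ring
  have h3 := congrArg (E μ ψ₀) h2
  rw [E_mul, h1, E_sum] at h3
  swap
  · intro a
    refine continuous_finsetSum _ fun b _ => ?_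
    exact continuous_const.mul (continuous_mon _ _)
  have h4 : ∀ a ∈ Finset.range (k + 1), E μ ψ₀ (fun φ => ∑ b ∈ Finset.range (k + 1),
        ((k.choose a : ℂ) * k.choose b * (x : ℂ) ^ (a + b)) *
        mon (r + Pi.single i (k - a) + Pi.single j a)
          (r + Pi.single i (k - b) + Pi.single j b) φ) =
      ((k.choose a : ℂ) ^ 2 *
      E μ ψ₀ (mon (r + Pi.single i (k - a) + Pi.single j a)
        (r + Pi.single i (k - a) + Pi.single j a))) * ((x : ℂ) ^ 2) ^ a := by
    intro a ha
    rw [E_sum]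
    swap
    · intro b
      exact continuous_const.mul (continuous_mon _ _)
    rw [Finset.sum_eq_single_of_mem a ha]
    · rw [E_mul]; ring
    · intro b _ hb
      rw [E_mul, phase_lt μ ψ₀ _ _ j, mul_zero]
      simp [hij.symm, hb.symm]
  rw [Finset.sum_congr rfl h4] at h3
  rw [← h3, add_comm (1 : ℂ), add_pow, Finset.sum_mul]
  refine Finset.sum_congr rfl fun a _ => ?_
  simp
  ring

lemma pair_coeff (i j : Fin d) (hij : i ≠ j) (r : Fin d → ℕ) (hi : r i = 0) (hj : r j = 0)
    (k a : ℕ) (ha : a ≤ k) :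
    (k.choose a : ℂ) * E μ ψ₀ (mon (r + Pi.single i (k - a) + Pi.single j a)
        (r + Pi.single i (k - a) + Pi.single j a)) =
      E μ ψ₀ (mon (r + Pi.single i k) (r + Pi.single i k)) := by
  have key : ∀ u v : ℕ → ℂ, (∀ x : ℝ, ∑ a ∈ Finset.range (k + 1), u a * ((x : ℂ) ^ 2) ^ a =
      ∑ a ∈ Finset.range (k + 1), v a * ((x : ℂ) ^ 2) ^ a) → u a = v a := by
    intro u v h
    have hp : (∑ a ∈ Finset.range (k + 1), Polynomial.monomial a (u a)) =
        ∑ a ∈ Finset.range (k + 1), Polynomial.monomial a (v a) := by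
      apply Polynomial.eq_of_infinite_eval_eq
      refine Set.Infinite.mono (s := Set.range fun n : ℕ => ((n : ℂ) ^ 2)) ?_ ?_
      · rintro _ ⟨n, rfl⟩
        have := h n
        simpa [Polynomial.eval_finsetSum] using this
      · apply Set.infinite_range_of_injective
        intro m n hmn
        simp only at hmn
        have : m ^ 2 = n ^ 2 := by exact_mod_cast hmn
        exact Nat.pow_left_injective (n := 2) (by norm_num) this
    have := congrArg (fun p => Polynomial.coeff p a) hp
    simpa [Polynomial.finsetSum_coeff, Polynomial.coeff_monomial, Nat.lt_succ_iff, ha] using this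
  have h := key _ _ (pair_poly μ ψ₀ i j hij r hi hj k)
  have hc : (k.choose a : ℂ) ≠ 0 := by exact_mod_cast (Nat.choose_pos ha).ne'
  apply mul_left_cancel₀ hc
  linear_combination h

lemma swap_rec (s : Fin d → ℕ) (i j : Fin d) :
    ((s j : ℂ) + 1) * E μ ψ₀ (mon (s + Pi.single i 1) (s + Pi.single i 1)) =
    ((s i : ℂ) + 1) * E μ ψ₀ (mon (s + Pi.single j 1) (s + Pi.single j 1)) := by
  by_cases hij : i = j
  · subst hij; rfl
  set r : Fin d → ℕ := Function.update (Function.update s i 0) j 0 with hr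
  have hi : r i = 0 := by simp [hr, hij]
  have hj : r j = 0 := by simp [hr]
  have hs : ∀ l, l ≠ i → l ≠ j → r l = s l := by
    intro l h1 h2; simp [hr, h1, h2]
  have A := pair_coeff μ ψ₀ i j hij r hi hj (s i + s j + 1) (s j) (by omega)
  have B := pair_coeff μ ψ₀ i j hij r hi hj (s i + s j + 1) (s j + 1) (by omega)
  have eA : r + Pi.single i (s i + s j + 1 - s j) + Pi.single j (s j) = s + Pi.single i 1 := by
    funext l
    by_cases h1 : l = i
    · subst h1; simp [hi, hij]; omega
    · by_cases h2 : l = j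
      · subst h2; simp [hj, h1]
      · simp [h1, h2, hs l h1 h2]
  have eB : r + Pi.single i (s i + s j + 1 - (s j + 1)) + Pi.single j (s j + 1)
      = s + Pi.single j 1 := by
    funext l
    by_cases h1 : l = i
    · subst h1; simp [hi, hij]
    · by_cases h2 : l = j
      · subst h2; simp [hj, h1]
      · simp [h1, h2, hs l h1 h2]
  rw [eA] at A
  rw [eB] at B
  have hch := Nat.choose_succ_right_eq (s i + s j + 1) (s j)
  rw [show s i + s j + 1 - s j = s i + 1 by omega] at hch
  have hch' : ((s i + s j + 1).choose (s j + 1) : ℂ) * (s j + 1) =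
      (s i + s j + 1).choose (s j) * (s i + 1) := by exact_mod_cast hch
  have hc : ((s i + s j + 1).choose (s j) : ℂ) ≠ 0 := by
    exact_mod_cast (Nat.choose_pos (by omega)).ne'
  apply mul_left_cancel₀ hc
  linear_combination ((s j : ℂ) + 1) * (A - B) +
    E μ ψ₀ (mon (s + Pi.single j 1) (s + Pi.single j 1)) * hch'

lemma mon_self (α : Fin d → ℕ) (φ : Fin d → ℂ) :
    mon α α φ = ((∏ i, ‖φ i‖ ^ (2 * α i) : ℝ) : ℂ) := by
  simp only [mon, mon1, map_prod, ← Finset.prod_mul_distrib, map_pow, ← mul_pow]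
  push_cast
  refine Finset.prod_congr rfl fun i _ => ?_
  rw [Complex.mul_conj', pow_mul]

lemma mon_rec (s : Fin d → ℕ) (φ : Fin d → ℂ) (hφ : ∑ i, ‖φ i‖ ^ 2 = 1) :
    ∑ i, mon (s + Pi.single i 1) (s + Pi.single i 1) φ = mon s s φ := by
  have h : ∀ i, mon (s + Pi.single i 1) (s + Pi.single i 1) φ =
      mon s s φ * ((‖φ i‖ ^ 2 : ℝ) : ℂ) := by
    intro i
    simp only [mon, mon1_add, mon1_single, map_mul, pow_one]
    push_cast
    rw [← Complex.mul_conj']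
    ring
  simp only [h, ← Finset.mul_sum]
  rw [← Complex.ofReal_sum, hφ]; simp

lemma norm_unitary (hψ₀ : ∑ i, ‖ψ₀ i‖ ^ 2 = 1) (V : UG d) :
    ∑ i, ‖(V : Matrix (Fin d) (Fin d) ℂ).mulVec ψ₀ i‖ ^ 2 = 1 := by
  have key : ∀ φ : Fin d → ℂ, ((∑ i, ‖φ i‖ ^ 2 : ℝ) : ℂ) = star φ ⬝ᵥ φ := by
    intro φ
    simp only [dotProduct, Pi.star_apply, RCLike.star_def]
    push_cast
    exact Finset.sum_congr rfl fun i _ => (Complex.conj_mul' _).symm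
  have h : ((∑ i, ‖(V : Matrix (Fin d) (Fin d) ℂ).mulVec ψ₀ i‖ ^ 2 : ℝ) : ℂ) = 1 := by
    rw [key, Matrix.star_mulVec, ← Matrix.dotProduct_mulVec, Matrix.mulVec_mulVec,
      ← Matrix.star_eq_conjTranspose, Matrix.mem_unitaryGroup_iff'.mp V.2, Matrix.one_mulVec,
      ← key, hψ₀]
    simp
  exact_mod_cast h

lemma E_rec (hψ₀ : ∑ i, ‖ψ₀ i‖ ^ 2 = 1) (s : Fin d → ℕ) :
    ∑ i, E μ ψ₀ (mon (s + Pi.single i 1) (s + Pi.single i 1)) = E μ ψ₀ (mon s s) := by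
  rw [← E_sum μ ψ₀ _ _ (fun i => continuous_mon _ _)]
  unfold E
  congr 1
  funext V
  exact mon_rec s _ (norm_unitary ψ₀ hψ₀ V)

lemma exists_pred (s : Fin d → ℕ) (n : ℕ) (h : ∑ i, s i = n + 1) :
    ∃ (j : Fin d) (s' : Fin d → ℕ), s = s' + Pi.single j 1 ∧ ∑ i, s' i = n := by
  obtain ⟨j, -, hj⟩ := Finset.exists_ne_zero_of_sum_ne_zero (s := Finset.univ) (f := s) (by omega)
  have e : s = (s - Pi.single j 1) + Pi.single j 1 := by
    funext l
    by_cases hl : l = j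
    · subst hl; simp; omega
    · simp [hl]
  refine ⟨j, s - Pi.single j 1, e, ?_⟩
  have h2 := h
  rw [e] at h2
  simp only [Pi.add_apply, Finset.sum_add_distrib, Finset.sum_pi_single'] at h2
  simp at h2
  simpa using h2

lemma E_formula (hd : 1 ≤ d) (hψ₀ : ∑ i, ‖ψ₀ i‖ ^ 2 = 1) (n : ℕ) :
    ∀ s : Fin d → ℕ, ∑ i, s i = n → E μ ψ₀ (mon s s) =
      (∏ i, (Nat.factorial (s i) : ℂ)) * Nat.factorial (d - 1) / Nat.factorial (d - 1 + n) := by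
  induction n with
  | zero =>
    intro s hs
    have : s = 0 := by funext i; simpa using (Finset.sum_eq_zero_iff.mp hs) i (Finset.mem_univ i)
    subst this
    have : (Nat.factorial (d - 1) : ℂ) ≠ 0 := by exact_mod_cast Nat.factorial_ne_zero _
    simp [E, mon, mon1, this]
  | succ n ih =>
    intro s hs
    obtain ⟨j, s', rfl, hs'⟩ := exists_pred s n hs
    have h1 := ih s' hs'
    have h2 := E_rec μ ψ₀ hψ₀ s'
    have h3 : ((s' j : ℂ) + 1) * E μ ψ₀ (mon s' s') =
        ((n : ℂ) + d) * E μ ψ₀ (mon (s' + Pi.single j 1) (s' + Pi.single j 1)) := by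
      rw [← h2, Finset.mul_sum, Finset.sum_congr rfl fun i _ => swap_rec μ ψ₀ s' i j,
        ← Finset.sum_mul, ← hs']
      simp [Finset.sum_add_distrib]
    have h4 : (∏ i, (Nat.factorial ((s' + Pi.single j 1 : Fin d → ℕ) i) : ℂ)) =
        (s' j + 1) * ∏ i, (Nat.factorial (s' i) : ℂ) := by
      rw [← Finset.mul_prod_erase _ _ (Finset.mem_univ j),
        ← Finset.mul_prod_erase (a := j) _ _ (Finset.mem_univ j), ← mul_assoc]
      congr 1
      · simp [Nat.factorial_succ]
      · refine Finset.prod_congr rfl fun l hl => ?_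
        simp [Finset.ne_of_mem_erase hl]
    have hnd : ((n : ℂ) + d) ≠ 0 := by
      have : n + d ≠ 0 := by omega
      exact_mod_cast this
    have hf : (Nat.factorial (d - 1 + n) : ℂ) ≠ 0 := by exact_mod_cast Nat.factorial_ne_zero _
    have h5 : (Nat.factorial (d - 1 + (n + 1)) : ℂ) = (n + d) * Nat.factorial (d - 1 + n) := by
      rw [← add_assoc, Nat.factorial_succ]
      have : d - 1 + n + 1 = n + d := by omega
      rw [this]; push_cast; ring
    rw [h4, h5]
    rw [h1] at h3
    apply mul_left_cancel₀ hnd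
    rw [← h3]
    field_simp

end

lemma exists_p {d : ℕ} (t : ℕ) : ∀ s : Fin d → ℕ, ∑ i, s i = t →
    ∃ p : Fin t → Fin d, ∀ f : Fin d → ℂ, ∏ n, f (p n) = mon1 s f := by
  induction t with
  | zero =>
    intro s hs
    have : s = 0 := by funext i; simpa using (Finset.sum_eq_zero_iff.mp hs) i (Finset.mem_univ i)
    subst this
    exact ⟨Fin.elim0, fun f => by simp [mon1]⟩
  | succ n ih =>
    intro s hs
    obtain ⟨j, s', rfl, hs'⟩ := exists_pred s n hs
    obtain ⟨p, hp⟩ := ih s' hs'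
    refine ⟨Fin.cons j p, fun f => ?_⟩
    rw [Fin.prod_univ_succ, mon1_add, mon1_single]
    simp [hp, mul_comm]

end SD

/-- **simplex designs from projective designs.** The decohered probability
vectors of a complex projective `t`-design form a `t`-design for the flat measure on the
`d`-point probability simplex. -/
theorem simplex_design_of_projective_design
    (d t M : ℕ) (hd : 1 ≤ d) (ht : 1 ≤ t) (hM : 1 ≤ M)
    (μ : Measure (Matrix.unitaryGroup (Fin d) ℂ)) [μ.IsHaarMeasure] [IsProbabilityMeasure μ]
    (ψ₀ : Fin d → ℂ) (hψ₀ : ∑ i, ‖ψ₀ i‖ ^ 2 = 1)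
    (ψ : Fin M → (Fin d → ℂ)) (hψ : ∀ m, ∑ i, ‖ψ m i‖ ^ 2 = 1)
    (hdesign : ∀ p q : Fin t → Fin d,
      (1 / M : ℂ) * ∑ m, ∏ n, ψ m (p n) * (starRingEnd ℂ) (ψ m (q n)) =
        ∫ V : Matrix.unitaryGroup (Fin d) ℂ,
          ∏ n, (V : Matrix (Fin d) (Fin d) ℂ).mulVec ψ₀ (p n) *
            (starRingEnd ℂ) ((V : Matrix (Fin d) (Fin d) ℂ).mulVec ψ₀ (q n)) ∂μ) :
    ∀ s : Fin d → ℕ, (∑ i, s i) ≤ t →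
      (1 / M : ℝ) * ∑ m, ∏ i, ‖ψ m i‖ ^ (2 * s i) =
        (∏ i, Nat.factorial (s i) : ℝ) * Nat.factorial (d - 1) /
          Nat.factorial (d - 1 + ∑ i, s i) := by
  have main : ∀ k : ℕ, ∀ s : Fin d → ℕ, (∑ i, s i) + k = t →
      (1 / M : ℂ) * ∑ m, SD.mon s s (ψ m) = SD.E μ ψ₀ (SD.mon s s) := by
    intro k
    induction k with
    | zero =>
      intro s hs
      obtain ⟨p, hp⟩ := SD.exists_p t s (by simpa using hs)
      have h := hdesign p p
      simp only [Finset.prod_mul_distrib, ← map_prod, hp] at h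
      exact h
    | succ k ih =>
      intro s hs
      rw [← SD.E_rec μ ψ₀ hψ₀ s, Finset.sum_congr rfl fun m _ => (SD.mon_rec s (ψ m) (hψ m)).symm,
        Finset.sum_comm, Finset.mul_sum]
      refine Finset.sum_congr rfl fun i _ => ih _ ?_
      rw [← hs]
      simp only [Pi.add_apply, Finset.sum_add_distrib, Finset.sum_pi_single']
      simp
      ring
  intro s hs
  have h := main (t - ∑ i, s i) s (by omega)
  rw [SD.E_formula μ ψ₀ hd hψ₀ _ s rfl] at h
  simp only [SD.mon_self] at h
  apply Complex.ofReal_injective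
  push_cast
  push_cast at h
  exact h
end

section
/- Let D ≥ 1 and let ι be an index type with D elements. For all p, q, r, s ∈ ι, the first-moment Haar integral over the unitary group is ∫_{U(ι)} U_{p,q} · conj(U_{r,s}) dHaar(U) = (if p = r ∧ q = s then 1 else 0) / D. -/
open MeasureTheory Matrix

theorem haar_aux_int {ι : Type} [Fintype ι] [DecidableEq ι]
    (μ : Measure (Matrix.unitaryGroup ι ℂ)) [IsProbabilityMeasure μ] (p q r s : ι) :
    Integrable (fun U : Matrix.unitaryGroup ι ℂ => U p q * (starRingEnd ℂ) (U r s)) μ := by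
  have hc : ∀ a b : ι, Continuous (fun U : Matrix.unitaryGroup ι ℂ => U a b) := fun a b =>
    (continuous_apply_apply a b).comp continuous_subtype_val
  refine Integrable.of_bound (C := 1) ?_ (Filter.Eventually.of_forall fun U => ?_)
  · exact ((hc p q).mul (Complex.continuous_conj.comp (hc r s))).measurable.aestronglyMeasurable
  · rw [norm_mul, RCLike.norm_conj]
    exact mul_le_one₀ (entry_norm_bound_of_unitary U.2 p q) (norm_nonneg _)
      (entry_norm_bound_of_unitary U.2 r s)

theorem haar_aux_zero {ι : Type} [Fintype ι] [DecidableEq ι]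
    (μ : Measure (Matrix.unitaryGroup ι ℂ)) [μ.IsHaarMeasure] (p q r s : ι) (h : p ≠ r) :
    ∫ U : Matrix.unitaryGroup ι ℂ, U p q * (starRingEnd ℂ) (U r s) ∂μ = 0 := by
  let V : Matrix.unitaryGroup ι ℂ := ⟨diagonal (fun i => if i = p then -1 else 1), by
    rw [Matrix.mem_unitaryGroup_iff, star_eq_conjTranspose, diagonal_conjTranspose,
      diagonal_mul_diagonal, ← diagonal_one]
    congr 1
    funext i
    by_cases hi : i = p <;> simp [hi]⟩
  have h1 := integral_mul_left_eq_self (μ := μ)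
    (fun U : Matrix.unitaryGroup ι ℂ => U p q * (starRingEnd ℂ) (U r s)) V
  have h2 : ∀ (U : Matrix.unitaryGroup ι ℂ) (a b : ι),
      (V * U) a b = (if a = p then -1 else 1) * U a b := fun U a b => by
    rw [Matrix.UnitaryGroup.mul_apply]
    exact Matrix.diagonal_mul _ _ _ _
  simp only [h2, if_true, if_neg h.symm, one_mul, neg_mul] at h1
  rw [integral_neg] at h1
  exact self_eq_neg.mp h1.symm

theorem haar_aux_perm {ι : Type} [Fintype ι] [DecidableEq ι]
    (μ : Measure (Matrix.unitaryGroup ι ℂ)) [μ.IsHaarMeasure] (p r q s : ι) :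
    ∫ U : Matrix.unitaryGroup ι ℂ, U r q * (starRingEnd ℂ) (U r s) ∂μ =
    ∫ U : Matrix.unitaryGroup ι ℂ, U p q * (starRingEnd ℂ) (U p s) ∂μ := by
  let e := Equiv.swap p r
  let V : Matrix.unitaryGroup ι ℂ := ⟨(1 : Matrix ι ι ℂ).submatrix e id, by
    rw [Matrix.mem_unitaryGroup_iff, star_eq_conjTranspose, conjTranspose_submatrix,
      conjTranspose_one, ← submatrix_mul _ _ _ _ _ Function.bijective_id, one_mul,
      submatrix_one_equiv]⟩
  have h1 := integral_mul_left_eq_self (μ := μ)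
    (fun U : Matrix.unitaryGroup ι ℂ => U p q * (starRingEnd ℂ) (U p s)) V
  have h2 : ∀ (U : Matrix.unitaryGroup ι ℂ) (b : ι),
      (V * U) p b = U r b := fun U b => by
    rw [Matrix.UnitaryGroup.mul_apply]
    change ∑ j, (1 : Matrix ι ι ℂ) (e p) j * U j b = _
    simp [e, Matrix.one_apply]
  simpa only [h2] using h1


/-- First-moment Haar integral over the unitary group:
`∫ U_{p,q} conj(U_{r,s}) dU = δ_{pr} δ_{qs} / D`. -/
theorem haar_first_moment (D : ℕ) (hD : 1 ≤ D) (ι : Type) [Fintype ι] [DecidableEq ι]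
    (hcard : Fintype.card ι = D)
    (μ : Measure (Matrix.unitaryGroup ι ℂ)) [μ.IsHaarMeasure] [IsProbabilityMeasure μ]
    (p q r s : ι) :
    ∫ U : Matrix.unitaryGroup ι ℂ, U p q * (starRingEnd ℂ) (U r s) ∂μ =
      (if p = r ∧ q = s then (1 : ℂ) else 0) / (D : ℂ) := by

  by_cases h : p = r
  · subst h
    have hD0 : (D : ℂ) ≠ 0 := by exact_mod_cast (by omega : D ≠ 0)
    rw [eq_div_iff hD0]
    have h1 : ∑ i : ι, ∫ U : Matrix.unitaryGroup ι ℂ, U i q * (starRingEnd ℂ) (U i s) ∂μ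
        = if q = s then 1 else 0 := by
      rw [← integral_finsetSum _ fun i _ => haar_aux_int μ i q i s]
      have h3 : ∀ U : Matrix.unitaryGroup ι ℂ,
          ∑ i : ι, U i q * (starRingEnd ℂ) (U i s) = if q = s then 1 else 0 := fun U => by
        have h4 := congrFun (congrFun (Matrix.mem_unitaryGroup_iff'.mp U.2) s) q
        rw [Matrix.mul_apply, Matrix.one_apply] at h4
        simp only [eq_comm (a := q)]
        rw [← h4]
        exact Finset.sum_congr rfl fun i _ => mul_comm _ _
      simp [h3]
    rw [Finset.sum_congr rfl fun i _ => haar_aux_perm μ p i q s] at h1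
    simp only [Finset.sum_const, Finset.card_univ, hcard, nsmul_eq_mul] at h1
    rw [mul_comm, h1]
    simp
  · rw [haar_aux_zero μ p q r s h]
    simp [h]
end

section
/- (Second-moment Weingarten formula.) Let D ≥ 2 and let ι be an index type with D elements. For all i₁, i₂, i₁', i₂', j₁, j₂, j₁', j₂' ∈ ι, ∫_{U(ι)} U_{i₁,j₁} U_{i₂,j₂} conj(U_{i₁',j₁'}) conj(U_{i₂',j₂'}) dHaar(U) = (δ_{i₁ i₁'} δ_{i₂ i₂'} δ_{j₁ j₁'} δ_{j₂ j₂'} + δ_{i₁ i₂'} δ_{i₂ i₁'} δ_{j₁ j₂'} δ_{j₂ j₁'})/(D² − 1) − (δ_{i₁ i₂'} δ_{i₂ i₁'} δ_{j₁ j₁'} δ_{j₂ j₂'} + δ_{i₁ i₁'} δ_{i₂ i₂'} δ_{j₁ j₂'} δ_{j₂ j₁'})/(D(D² − 1)). -/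
open MeasureTheory Matrix

/-- Kronecker delta with values in `ℂ`. -/
noncomputable def δ {α : Type*} [DecidableEq α] (x y : α) : ℂ := if x = y then 1 else 0

section helpers

variable {ι : Type} [Fintype ι] [DecidableEq ι]

theorem hsm_entry_cont (i j : ι) : Continuous fun U : Matrix.unitaryGroup ι ℂ => U i j := by
  have h : Continuous fun U : Matrix.unitaryGroup ι ℂ => (U : Matrix ι ι ℂ) := continuous_subtype_val
  exact h.matrix_elem i j

theorem hsm_integrable (μ : Measure (Matrix.unitaryGroup ι ℂ)) [IsProbabilityMeasure μ]
    (a b c d a' b' c' d' : ι) :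
    Integrable (fun U : Matrix.unitaryGroup ι ℂ =>
      U a a' * U b b' * (starRingEnd ℂ) (U c c') * (starRingEnd ℂ) (U d d')) μ := by
  have hm : Continuous (fun U : Matrix.unitaryGroup ι ℂ =>
      U a a' * U b b' * (starRingEnd ℂ) (U c c') * (starRingEnd ℂ) (U d d')) :=
    (((hsm_entry_cont a a').mul (hsm_entry_cont b b')).mul
      (Complex.continuous_conj.comp (hsm_entry_cont c c'))).mul
      (Complex.continuous_conj.comp (hsm_entry_cont d d'))
  refine Integrable.of_bound hm.measurable.aestronglyMeasurable 1 (Filter.Eventually.of_forall ?_)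
  intro U
  have hb : ∀ i j, ‖U i j‖ ≤ 1 := fun i j => entry_norm_bound_of_unitary U.2 i j
  simp only [norm_mul, RCLike.norm_conj]
  have := hb a a'
  have := hb b b'
  have := hb c c'
  have := hb d d'
  exact mul_le_one₀ (mul_le_one₀ (mul_le_one₀ (hb _ _) (norm_nonneg _) (hb _ _)) (norm_nonneg _)
    (hb _ _)) (norm_nonneg _) (hb _ _)

noncomputable def hsmF (μ : Measure (Matrix.unitaryGroup ι ℂ)) (a' b' c' d' a b c d : ι) : ℂ :=
  ∫ U : Matrix.unitaryGroup ι ℂ,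
      U a a' * U b b' * (starRingEnd ℂ) (U c c') * (starRingEnd ℂ) (U d d') ∂μ

theorem hsm_inv (μ : Measure (Matrix.unitaryGroup ι ℂ)) [μ.IsHaarMeasure] [IsProbabilityMeasure μ]
    (a' b' c' d' : ι) (V : Matrix.unitaryGroup ι ℂ) (a b c d : ι) :
    hsmF μ a' b' c' d' a b c d = ∑ k, ∑ l, ∑ m, ∑ n,
      V a k * V b l * (starRingEnd ℂ) (V c m) * (starRingEnd ℂ) (V d n)
        * hsmF μ a' b' c' d' k l m n := by
  unfold hsmF
  rw [← integral_mul_left_eq_self _ V]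
  simp_rw [← integral_const_mul]
  have hI : ∀ k l m n, Integrable (fun U : Matrix.unitaryGroup ι ℂ =>
      V a k * V b l * (starRingEnd ℂ) (V c m) * (starRingEnd ℂ) (V d n) *
      (U k a' * U l b' * (starRingEnd ℂ) (U m c') * (starRingEnd ℂ) (U n d'))) μ := fun k l m n =>
    (hsm_integrable μ k l m n a' b' c' d').const_mul _
  have e : ∀ U : Matrix.unitaryGroup ι ℂ,
      (V * U) a a' * (V * U) b b' * (starRingEnd ℂ) ((V * U) c c') * (starRingEnd ℂ) ((V * U) d d')
      = ∑ k, ∑ l, ∑ m, ∑ n, V a k * V b l * (starRingEnd ℂ) (V c m) * (starRingEnd ℂ) (V d n) *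
      (U k a' * U l b' * (starRingEnd ℂ) (U m c') * (starRingEnd ℂ) (U n d')) := by
    intro U
    simp only [Matrix.UnitaryGroup.mul_apply, Matrix.mul_apply, map_sum, map_mul]
    rw [Finset.sum_mul_sum, Finset.sum_mul, Finset.sum_mul]
    refine Finset.sum_congr rfl fun k _ => ?_
    rw [Finset.sum_mul, Finset.sum_mul]
    refine Finset.sum_congr rfl fun l _ => ?_
    rw [mul_assoc, Finset.sum_mul_sum, Finset.mul_sum]
    refine Finset.sum_congr rfl fun m _ => ?_
    rw [Finset.mul_sum]
    refine Finset.sum_congr rfl fun n _ => ?_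
    ring
  simp_rw [e]
  rw [integral_finsetSum _ fun k _ => integrable_finsetSum _ fun l _ =>
    integrable_finsetSum _ fun m _ => integrable_finsetSum _ fun n _ => hI k l m n]
  refine Finset.sum_congr rfl fun k _ => ?_
  rw [integral_finsetSum _ fun l _ =>
    integrable_finsetSum _ fun m _ => integrable_finsetSum _ fun n _ => hI k l m n]
  refine Finset.sum_congr rfl fun l _ => ?_
  rw [integral_finsetSum _ fun m _ => integrable_finsetSum _ fun n _ => hI k l m n]
  refine Finset.sum_congr rfl fun m _ => ?_
  rw [integral_finsetSum _ fun n _ => hI k l m n]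

/-- Tensors invariant under the unitary group. -/
def HsmInv (T : ι → ι → ι → ι → ℂ) : Prop :=
  ∀ (V : Matrix ι ι ℂ), V ∈ Matrix.unitaryGroup ι ℂ → ∀ a b c d, T a b c d = ∑ k, ∑ l, ∑ m, ∑ n,
      V a k * V b l * (starRingEnd ℂ) (V c m) * (starRingEnd ℂ) (V d n) * T k l m n

theorem hsm_nest {T : ι → ι → ι → ι → ℂ} (hT : HsmInv T) (f : ι → ι → ℂ)
    (hV : Matrix.of f ∈ Matrix.unitaryGroup ι ℂ) (a b c d : ι) :
    T a b c d = ∑ k, f a k * ∑ l, f b l * ∑ m, (starRingEnd ℂ) (f c m) *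
      ∑ n, (starRingEnd ℂ) (f d n) * T k l m n := by
  rw [hT _ hV]
  simp only [Matrix.of_apply, Finset.mul_sum, mul_assoc]

theorem hsm_diag {T : ι → ι → ι → ι → ℂ} (hT : HsmInv T) (e a b c d : ι) :
    T a b c d = (if a = e then Complex.I else 1) * (if b = e then Complex.I else 1) *
      (if c = e then -Complex.I else 1) * (if d = e then -Complex.I else 1) * T a b c d := by
  have h := hsm_nest hT
    (fun i j => (Matrix.diagonal fun i => if i = e then Complex.I else 1 : Matrix ι ι ℂ) i j) (by
    change (Matrix.diagonal fun i => if i = e then Complex.I else 1 : Matrix ι ι ℂ) ∈ _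
    rw [Matrix.mem_unitaryGroup_iff, Matrix.star_eq_conjTranspose, Matrix.diagonal_conjTranspose,
      Matrix.diagonal_mul_diagonal, ← Matrix.diagonal_one]
    congr 1
    funext i
    by_cases hi : i = e <;> simp [hi]) a b c d
  simp only [Matrix.diagonal_apply, apply_ite (starRingEnd ℂ), map_zero, map_one, Complex.conj_I,
    ite_mul, zero_mul, Finset.sum_ite_eq, Finset.mem_univ, if_true] at h
  refine h.trans ?_
  split_ifs <;> ring

theorem hsm_perm {T : ι → ι → ι → ι → ℂ} (hT : HsmInv T) (σ : Equiv.Perm ι) (a b c d : ι) :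
    T a b c d = T (σ a) (σ b) (σ c) (σ d) := by
  have h := hsm_nest hT (fun i k => if σ i = k then 1 else 0) (by
    rw [Matrix.mem_unitaryGroup_iff]
    ext i j
    simp [Matrix.mul_apply, Matrix.star_apply, Matrix.one_apply, eq_comm]) a b c d
  simpa [apply_ite (starRingEnd ℂ)] using h

theorem hsm_zero {T : ι → ι → ι → ι → ℂ} (hT : HsmInv T) (a b c d : ι)
    (h1 : ¬ (a = c ∧ b = d)) (h2 : ¬ (a = d ∧ b = c)) : T a b c d = 0 := by
  by_contra hne
  have key : ∀ e, (if a = e then Complex.I else 1) * (if b = e then Complex.I else 1) *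
      (if c = e then -Complex.I else 1) * (if d = e then -Complex.I else 1) = 1 := fun e =>
    mul_right_cancel₀ hne (by rw [one_mul]; exact (hsm_diag hT e a b c d).symm)
  have n1 : Complex.I ≠ 1 := fun h => by simpa using congrArg Complex.re h
  have n2 : (-1 : ℂ) ≠ 1 := by norm_num
  have n3 : -Complex.I ≠ 1 := fun h => by simpa using congrArg Complex.re h
  have n4 := Complex.I_mul_I
  have ka := key a
  have kb := key b
  grind

theorem hsm_sum2 (a b : ι) (s α β : ℂ) (f : ι → ℂ) :
    ∑ k, (s * ((if a = k then α else 0) + (if b = k then β else 0))) * f k =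
      s * (α * f a + β * f b) := by
  simp [mul_assoc, ← Finset.mul_sum, add_mul, Finset.sum_add_distrib]

theorem hsm_mix {T : ι → ι → ι → ι → ℂ} (hT : HsmInv T) (a b : ι) (hab : a ≠ b) :
    4 * T a a a a = 2 * T a b a b + 2 * T a b b a + T a a a a + T b b b b
      + (T b a b a - T a b a b) + (T b a a b - T a b b a) := by
  have hs : (((√2 : ℝ) : ℂ)⁻¹) ^ 2 = 1 / 2 := by
    rw [inv_pow, ← Complex.ofReal_pow, Real.sq_sqrt (by norm_num)]; norm_num
  set s : ℂ := (((√2 : ℝ) : ℂ)⁻¹) with hsd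
  have hc : (starRingEnd ℂ) s = s := by simp [hsd]
  have h := hsm_nest hT (fun i k => s * ((if i = k then 1 else 0) +
      (if Equiv.swap a b i = k then Complex.I else 0))) (by
    rw [Matrix.mem_unitaryGroup_iff]
    ext i j
    simp only [Matrix.mul_apply, Matrix.star_apply, Matrix.one_apply, Matrix.of_apply, Complex.star_def, map_mul,
      map_add, hc, apply_ite (starRingEnd ℂ), map_zero, map_one, Complex.conj_I]
    have : ∀ k, s * ((if i = k then 1 else 0) + (if Equiv.swap a b i = k then Complex.I else 0)) *
      (s * ((if j = k then 1 else 0) + (if Equiv.swap a b j = k then -Complex.I else 0))) =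
      (1/2) * ((if i = k then if j = k then 1 else 0 else 0) + 
        (if i = k then if Equiv.swap a b j = k then -Complex.I else 0 else 0) +
        (if Equiv.swap a b i = k then if j = k then Complex.I else 0 else 0) +
        (if Equiv.swap a b i = k then if Equiv.swap a b j = k then 1 else 0 else 0)) := by
      intro k
      rw [← hs]
      have hI := Complex.I_mul_I
      generalize Complex.I = w at hI ⊢
      split_ifs <;> first | ring1 | linear_combination (-s ^ 2) * hI
    simp only [this, ← Finset.mul_sum, Finset.sum_add_distrib, Finset.sum_ite_eq, Finset.mem_univ,
      if_true]
    have e1 : (Equiv.swap a b j = i) ↔ j = Equiv.swap a b i := by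
      constructor
      · rintro rfl; simp
      · rintro rfl; simp
    simp only [e1, EmbeddingLike.apply_eq_iff_eq, eq_comm (a := j) (b := i)]
    split_ifs <;> ring) a a a a
  simp only [Equiv.swap_apply_left, map_mul, map_add, hc, apply_ite (starRingEnd ℂ), map_zero,
    map_one, Complex.conj_I, hsm_sum2] at h
  have hba := hab.symm
  have z1 := hsm_zero hT
  rw [z1 a a a b (by grind) (by grind), z1 a a b a (by grind) (by grind),
    z1 a b a a (by grind) (by grind), z1 b a a a (by grind) (by grind),
    z1 b b b a (by grind) (by grind), z1 b b a b (by grind) (by grind),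
    z1 b a b b (by grind) (by grind), z1 a b b b (by grind) (by grind),
    z1 a a b b (by grind) (by grind), z1 b b a a (by grind) (by grind)] at h
  have h4 : s ^ 2 * s ^ 2 = (1/4 : ℂ) := by rw [hs]; norm_num
  have hI := Complex.I_mul_I
  generalize Complex.I = w at h hI
  have hh : T a a a a = s ^ 2 * s ^ 2 * (T a a a a + (w * w) * (w * w) * T b b b b -
      (w * w) * (T a b a b + T b a b a + T a b b a + T b a a b)) := h.trans (by ring)
  rw [h4, hI] at hh
  linear_combination 4 * hh

theorem hsm_structure {T : ι → ι → ι → ι → ℂ} (hT : HsmInv T) (hD : 2 ≤ Fintype.card ι) :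
    ∃ y z : ℂ, ∀ a b c d, T a b c d = y * (δ a c * δ b d) + z * (δ a d * δ b c) := by
  obtain ⟨p, q, hpq⟩ := Fintype.exists_pair_of_one_lt_card (α := ι) (by omega)
  have tr : ∀ a b, a ≠ b → ∃ σ : Equiv.Perm ι, σ a = p ∧ σ b = q := by
    intro a b hab
    refine ⟨Equiv.swap (Equiv.swap a p b) q * Equiv.swap a p, ?_, by simp⟩
    simp only [Equiv.Perm.mul_apply, Equiv.swap_apply_left]
    apply Equiv.swap_apply_of_ne_of_ne _ hpq
    intro h
    have h2 : Equiv.swap a p a = Equiv.swap a p b := by rw [← h]; simp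
    exact hab ((Equiv.swap a p).injective h2)
  have hy : ∀ a b, a ≠ b → T a b a b = T p q p q := by
    intro a b hab
    obtain ⟨σ, h1, h2⟩ := tr a b hab
    rw [hsm_perm hT σ, h1, h2]
  have hz : ∀ a b, a ≠ b → T a b b a = T p q q p := by
    intro a b hab
    obtain ⟨σ, h1, h2⟩ := tr a b hab
    rw [hsm_perm hT σ, h1, h2]
  have hx0 : ∀ a, T a a a a = T p p p p := by
    intro a
    rw [hsm_perm hT (Equiv.swap a p)]; simp
  have hx : T p p p p = T p q p q + T p q q p := by
    have h := hsm_mix hT p q hpq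
    rw [hx0 q, hy q p hpq.symm, hz q p hpq.symm] at h
    linear_combination h / 2
  refine ⟨T p q p q, T p q q p, fun a b c d => ?_⟩
  by_cases h1 : a = c ∧ b = d
  · obtain ⟨rfl, rfl⟩ := h1
    by_cases hab : a = b
    · subst hab
      simp [δ, hx0, hx]
    · simp [δ, hab, hy a b hab]
  · by_cases h2 : a = d ∧ b = c
    · obtain ⟨rfl, rfl⟩ := h2
      have hab : a ≠ b := fun h => h1 ⟨h, h.symm⟩
      simp [δ, hab, hz a b hab]
    · rw [hsm_zero hT a b c d h1 h2]
      have e1 : δ a c * δ b d = 0 := by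
        unfold δ; grind
      have e2 : δ a d * δ b c = 0 := by
        unfold δ; grind
      rw [e1, e2]; simp

theorem hsm_orth (U : Matrix.unitaryGroup ι ℂ) (j k : ι) :
    ∑ i, U i j * (starRingEnd ℂ) (U i k) = δ j k := by
  have h := congrFun (congrFun (Matrix.UnitaryGroup.star_mul_self U) k) j
  rw [Matrix.mul_apply, Matrix.one_apply] at h
  unfold δ
  simp only [eq_comm (a := j) (b := k)]
  rw [← h]
  refine Finset.sum_congr rfl fun i _ => ?_
  rw [Matrix.star_apply, mul_comm]; rfl

theorem hsm_sum1 (μ : Measure (Matrix.unitaryGroup ι ℂ)) [IsProbabilityMeasure μ]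
    (a' b' c' d' : ι) :
    ∑ a, ∑ b, hsmF μ a' b' c' d' a b a b = δ a' c' * δ b' d' := by
  unfold hsmF
  have e : ∀ a, ∑ b, ∫ U : Matrix.unitaryGroup ι ℂ,
      U a a' * U b b' * (starRingEnd ℂ) (U a c') * (starRingEnd ℂ) (U b d') ∂μ =
      ∫ U : Matrix.unitaryGroup ι ℂ, ∑ b,
      U a a' * U b b' * (starRingEnd ℂ) (U a c') * (starRingEnd ℂ) (U b d') ∂μ := fun a =>
    (integral_finsetSum _ fun b _ => hsm_integrable μ _ _ _ _ _ _ _ _).symm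
  simp_rw [e]
  rw [← integral_finsetSum _ fun a _ => integrable_finsetSum _ fun b _ =>
    hsm_integrable μ _ _ _ _ _ _ _ _]
  have : ∀ U : Matrix.unitaryGroup ι ℂ, ∑ a, ∑ b,
      U a a' * U b b' * (starRingEnd ℂ) (U a c') * (starRingEnd ℂ) (U b d') =
      δ a' c' * δ b' d' := by
    intro U
    rw [← hsm_orth U, ← hsm_orth U, Finset.sum_mul_sum]
    refine Finset.sum_congr rfl fun k _ => Finset.sum_congr rfl fun l _ => ?_
    ring
  simp_rw [this]
  simp

theorem hsm_swap (μ : Measure (Matrix.unitaryGroup ι ℂ)) (a' b' c' d' a b c d : ι) :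
    hsmF μ a' b' c' d' a b c d = hsmF μ a' b' d' c' a b d c := by
  unfold hsmF
  congr 1
  funext U
  ring

end helpers

/-- **second-moment Weingarten formula.** -/
theorem haar_second_moment (D : ℕ) (hD : 2 ≤ D) (ι : Type) [Fintype ι] [DecidableEq ι]
    (hcard : Fintype.card ι = D)
    (μ : Measure (Matrix.unitaryGroup ι ℂ)) [μ.IsHaarMeasure] [IsProbabilityMeasure μ]
    (i₁ i₂ i₁' i₂' j₁ j₂ j₁' j₂' : ι) :
    ∫ U : Matrix.unitaryGroup ι ℂ,
        U i₁ j₁ * U i₂ j₂ * (starRingEnd ℂ) (U i₁' j₁') * (starRingEnd ℂ) (U i₂' j₂') ∂μ =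
      (δ i₁ i₁' * δ i₂ i₂' * δ j₁ j₁' * δ j₂ j₂' + δ i₁ i₂' * δ i₂ i₁' * δ j₁ j₂' * δ j₂ j₁') /
          ((D : ℂ) ^ 2 - 1) -
        (δ i₁ i₂' * δ i₂ i₁' * δ j₁ j₁' * δ j₂ j₂' + δ i₁ i₁' * δ i₂ i₂' * δ j₁ j₂' * δ j₂ j₁') /
          ((D : ℂ) * ((D : ℂ) ^ 2 - 1)) := by
  classical
  obtain ⟨y, z, h⟩ := hsm_structure (T := hsmF μ j₁ j₂ j₁' j₂')
    (fun V hV a b c d => hsm_inv μ j₁ j₂ j₁' j₂' ⟨V, hV⟩ a b c d) (by omega)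
  have s1 := hsm_sum1 μ j₁ j₂ j₁' j₂'
  have s2 := hsm_sum1 μ j₁ j₂ j₂' j₁'
  simp_rw [fun a b => hsm_swap μ j₁ j₂ j₂' j₁' a b a b] at s2
  simp_rw [h] at s1 s2
  have g := h i₁ i₂ i₁' i₂'
  unfold hsmF at g
  rw [g]
  have dd : ∀ x : ι, δ x x = 1 := fun x => by simp [δ]
  have q1 : ∑ a : ι, ∑ b : ι, (δ a b * δ b a : ℂ) = D := by
    simp [δ, hcard]
  have q2 : ∑ a : ι, ∑ b : ι, (1 : ℂ) = (D : ℂ) ^ 2 := by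
    simp [hcard, sq]
  simp only [dd, one_mul, Finset.sum_add_distrib, ← Finset.mul_sum, q1, q2] at s1 s2
  have hD0 : (D : ℂ) ≠ 0 := by exact_mod_cast (by omega : D ≠ 0)
  have hD1 : (D : ℂ) ^ 2 - 1 ≠ 0 := by
    rw [sub_ne_zero]
    exact_mod_cast (by nlinarith : D ^ 2 ≠ 1)
  have hy : y = δ j₁ j₁' * δ j₂ j₂' / ((D : ℂ) ^ 2 - 1) -
      δ j₁ j₂' * δ j₂ j₁' / ((D : ℂ) * ((D : ℂ) ^ 2 - 1)) := by
    rw [← s1, ← s2]; field_simp; ring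
  have hz : z = δ j₁ j₂' * δ j₂ j₁' / ((D : ℂ) ^ 2 - 1) -
      δ j₁ j₁' * δ j₂ j₂' / ((D : ℂ) * ((D : ℂ) ^ 2 - 1)) := by
    rw [← s1, ← s2]; field_simp; ring
  rw [hy, hz]
  field_simp
  ring
end

section
/- (Averaged channel for t = 1; independence of the environment dimension.) Let d ≥ 1, k ≥ 1, and consider the unitary group U(Fin d × Fin k) with its Haar probability measure. Fix the environment state 0 ∈ Fin k. Then for all a, b, i, j ∈ Fin d, the entries of the Haar-averaged Choi–Jamiołkowski state satisfy (1/d) Σ_{l ∈ Fin k} ∫_{U(Fin d × Fin k)} U_{(i,l),(a,0)} · conj(U_{(j,l),(b,0)}) dHaar(U) = (if a = b ∧ i = j then 1 else 0) / d². In particular the right-hand side does not depend on k, so the Haar-averaged channel is the maximally depolarising channel for every environment dimension k; consequently a channel [1,k]-design is a channel [1,k']-design for every k'. -/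
open MeasureTheory Matrix

section Aux

variable {ι : Type*} [Fintype ι] [DecidableEq ι]

lemma aux_cont_s11 (p q : ι) : Continuous fun U : Matrix.unitaryGroup ι ℂ => U p q := by
  have h : Continuous fun U : Matrix.unitaryGroup ι ℂ => (U : Matrix ι ι ℂ) :=
    continuous_subtype_val
  exact h.matrix_elem p q

lemma aux_int (μ : Measure (Matrix.unitaryGroup ι ℂ)) [IsProbabilityMeasure μ] (p q r s : ι) :
    Integrable (fun U : Matrix.unitaryGroup ι ℂ => U p r * (starRingEnd ℂ) (U q s)) μ := by
  refine Integrable.of_bound (C := 1) ?_ (Filter.Eventually.of_forall fun U => ?_)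
  · exact ((aux_cont_s11 p r).mul
      (Complex.continuous_conj.comp (aux_cont_s11 q s))).aestronglyMeasurable
  · rw [norm_mul, RCLike.norm_conj]
    exact mul_le_one₀ (entry_norm_bound_of_unitary U.2 p r) (norm_nonneg _)
      (entry_norm_bound_of_unitary U.2 q s)

lemma aux_inv (μ : Measure (Matrix.unitaryGroup ι ℂ)) [μ.IsHaarMeasure]
    (V : Matrix.unitaryGroup ι ℂ) (p q r s : ι) :
    ∫ U : Matrix.unitaryGroup ι ℂ, U p r * (starRingEnd ℂ) (U q s) ∂μ =
    ∫ U : Matrix.unitaryGroup ι ℂ, (V * U) p r * (starRingEnd ℂ) ((V * U) q s) ∂μ :=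
  (integral_mul_left_eq_self
    (fun U : Matrix.unitaryGroup ι ℂ => U p r * (starRingEnd ℂ) (U q s)) V).symm

lemma aux_off (μ : Measure (Matrix.unitaryGroup ι ℂ)) [μ.IsHaarMeasure]
    (p q r s : ι) (h : p ≠ q) :
    ∫ U : Matrix.unitaryGroup ι ℂ, U p r * (starRingEnd ℂ) (U q s) ∂μ = 0 := by
  have hV : Matrix.diagonal (fun x : ι => if x = p then (-1 : ℂ) else 1) ∈
      Matrix.unitaryGroup ι ℂ := by
    rw [Matrix.mem_unitaryGroup_iff, Matrix.star_eq_conjTranspose,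
      Matrix.diagonal_conjTranspose, Matrix.diagonal_mul_diagonal, ← Matrix.diagonal_one]
    congr 1
    funext x
    by_cases hx : x = p <;> simp [hx]
  have := aux_inv μ ⟨_, hV⟩ p q r s
  have h2 : ∀ U : Matrix.unitaryGroup ι ℂ,
      ((⟨_, hV⟩ : Matrix.unitaryGroup ι ℂ) * U) p r *
        (starRingEnd ℂ) (((⟨_, hV⟩ : Matrix.unitaryGroup ι ℂ) * U) q s) =
      - (U p r * (starRingEnd ℂ) (U q s)) := by
    intro U
    simp [Matrix.UnitaryGroup.mul_apply, Matrix.diagonal_mul, h.symm]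
  simp only [h2] at this
  rw [integral_neg] at this
  exact self_eq_neg.mp this

lemma aux_diag (μ : Measure (Matrix.unitaryGroup ι ℂ)) [μ.IsHaarMeasure]
    (p q r s : ι) :
    ∫ U : Matrix.unitaryGroup ι ℂ, U p r * (starRingEnd ℂ) (U p s) ∂μ =
    ∫ U : Matrix.unitaryGroup ι ℂ, U q r * (starRingEnd ℂ) (U q s) ∂μ := by
  have hV : (Equiv.swap p q).toPEquiv.toMatrix ∈ Matrix.unitaryGroup ι ℂ := by
    rw [Matrix.mem_unitaryGroup_iff]
    ext x y
    rw [PEquiv.toMatrix_toPEquiv_mul]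
    simp [Matrix.star_apply, PEquiv.toMatrix_apply, Matrix.one_apply, eq_comm]
  rw [aux_inv μ ⟨_, hV⟩ p p r s]
  refine integral_congr_ae (Filter.Eventually.of_forall fun U => ?_)
  simp [Matrix.UnitaryGroup.mul_apply, PEquiv.toMatrix_toPEquiv_mul]

lemma aux_main (μ : Measure (Matrix.unitaryGroup ι ℂ)) [μ.IsHaarMeasure]
    [IsProbabilityMeasure μ] (p r s : ι) :
    (Fintype.card ι : ℂ) * ∫ U : Matrix.unitaryGroup ι ℂ, U p r * (starRingEnd ℂ) (U p s) ∂μ =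
      if r = s then 1 else 0 := by
  have h1 : ∑ q : ι, ∫ U : Matrix.unitaryGroup ι ℂ, U q r * (starRingEnd ℂ) (U q s) ∂μ =
      if r = s then 1 else 0 := by
    rw [← integral_finsetSum _ (fun q _ => aux_int μ q q r s)]
    have : ∀ U : Matrix.unitaryGroup ι ℂ, ∑ q : ι, U q r * (starRingEnd ℂ) (U q s) =
        if r = s then 1 else 0 := by
      intro U
      have h := congrFun (congrFun (Matrix.mem_unitaryGroup_iff'.mp U.2) s) r
      rw [Matrix.mul_apply, Matrix.one_apply] at h
      simp only [eq_comm (a := s)] at h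
      rw [← h]
      refine Finset.sum_congr rfl fun q _ => ?_
      rw [Matrix.star_apply, mul_comm]
      rfl
    simp [this]
  rw [← h1, Finset.sum_congr rfl (fun q _ => aux_diag μ q p r s)]
  simp

end Aux

/-- The Haar-averaged channel (Choi–Jamiołkowski state) for `t = 1` is the
maximally depolarising channel, independently of the environment dimension `k`; hence a
channel `[1,k]`-design is a channel `[1,k']`-design for every `k'`. -/
theorem averaged_choi_t_one (d k : ℕ) (hd : 1 ≤ d) (hk : 1 ≤ k)
    (μ : Measure (Matrix.unitaryGroup (Fin d × Fin k) ℂ)) [μ.IsHaarMeasure]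
    [IsProbabilityMeasure μ] (a b i j : Fin d) :
    (1 / d : ℂ) * ∑ l : Fin k,
        ∫ U : Matrix.unitaryGroup (Fin d × Fin k) ℂ,
          U (i, l) (a, (⟨0, hk⟩ : Fin k)) *
            (starRingEnd ℂ) (U (j, l) (b, (⟨0, hk⟩ : Fin k))) ∂μ =
      (if a = b ∧ i = j then (1 : ℂ) else 0) / (d : ℂ) ^ 2 := by
  have hd0 : (d : ℂ) ≠ 0 := by exact_mod_cast (by omega : d ≠ 0)
  have hk0 : (k : ℂ) ≠ 0 := by exact_mod_cast (by omega : k ≠ 0)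
  by_cases hij : i = j
  · subst hij
    have h : ∀ l : Fin k, ∫ U : Matrix.unitaryGroup (Fin d × Fin k) ℂ,
          U (i, l) (a, (⟨0, hk⟩ : Fin k)) *
            (starRingEnd ℂ) (U (i, l) (b, (⟨0, hk⟩ : Fin k))) ∂μ =
        (if a = b then (1 : ℂ) else 0) / (d * k) := by
      intro l
      have := aux_main μ (i, l) (a, (⟨0, hk⟩ : Fin k)) (b, (⟨0, hk⟩ : Fin k))
      rw [eq_div_iff (mul_ne_zero hd0 hk0), mul_comm]
      simpa using this
    simp only [h]
    simp only [Finset.sum_const, Finset.card_univ, Fintype.card_fin, nsmul_eq_mul, and_true]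
    field_simp
  · rw [Finset.sum_eq_zero]
    · simp [hij]
    · intro l _
      exact aux_off μ _ _ _ _ (by simp [hij])
end

section
/- (Averaged two-copy Choi state over U(dk).) Let d ≥ 1, k ≥ 1 with D = dk ≥ 2, and consider the unitary group U(Fin d × Fin k) with its Haar probability measure; fix the environment state 0 ∈ Fin k. Then for all a₁, a₂, b₁, b₂, i₁, i₂, j₁, j₂ ∈ Fin d, (1/d²) Σ_{l₁, l₂ ∈ Fin k} ∫_{U(Fin d × Fin k)} U_{(i₁,l₁),(a₁,0)} U_{(i₂,l₂),(a₂,0)} conj(U_{(j₁,l₁),(b₁,0)}) conj(U_{(j₂,l₂),(b₂,0)}) dHaar(U) = [ k² δ_{a₁b₁}δ_{a₂b₂}δ_{i₁j₁}δ_{i₂j₂} + k δ_{a₁b₂}δ_{a₂b₁}δ_{i₁j₂}δ_{i₂j₁} − (k²/D) δ_{a₁b₂}δ_{a₂b₁}δ_{i₁j₁}δ_{i₂j₂} − (k/D) δ_{a₁b₁}δ_{a₂b₂}δ_{i₁j₂}δ_{i₂j₁} ] / (d²(D² − 1)). -/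
open MeasureTheory Matrix

section Aux
variable {ι : Type*} [Fintype ι] [DecidableEq ι]

/-- Second moment tensor. -/
noncomputable def momT (μ : Measure (Matrix.unitaryGroup ι ℂ)) (A B C D : ι) (i j p q : ι) : ℂ :=
  ∫ U : Matrix.unitaryGroup ι ℂ,
    U i A * U j B * (starRingEnd ℂ) (U p C) * (starRingEnd ℂ) (U q D) ∂μ

lemma momT_cont (A B C D i j p q : ι) : Continuous (fun U : Matrix.unitaryGroup ι ℂ =>
    U i A * U j B * (starRingEnd ℂ) (U p C) * (starRingEnd ℂ) (U q D)) := by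
  have h : ∀ i A : ι, Continuous (fun U : Matrix.unitaryGroup ι ℂ => U i A) := by
    intro i A
    exact (continuous_subtype_val).matrix_elem i A
  have h' : ∀ i A : ι, Continuous (fun U : Matrix.unitaryGroup ι ℂ => (starRingEnd ℂ) (U i A)) :=
    fun i A => Complex.continuous_conj.comp (h i A)
  exact (((h _ _).mul (h _ _)).mul (h' _ _)).mul (h' _ _)

lemma momT_int (μ : Measure (Matrix.unitaryGroup ι ℂ)) [IsProbabilityMeasure μ]
    (A B C D i j p q : ι) : Integrable (fun U : Matrix.unitaryGroup ι ℂ =>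
    U i A * U j B * (starRingEnd ℂ) (U p C) * (starRingEnd ℂ) (U q D)) μ := by
  refine Integrable.of_bound (momT_cont A B C D i j p q).aestronglyMeasurable 1 ?_
  refine Filter.Eventually.of_forall fun U => ?_
  have h : ∀ i A : ι, ‖U i A‖ ≤ 1 := fun i A => entry_norm_bound_of_unitary U.2 i A
  simp only [norm_mul, RCLike.norm_conj]
  have := mul_le_one₀ (mul_le_one₀ (mul_le_one₀ (h i A) (norm_nonneg _) (h j B))
    (norm_nonneg _) (h p C)) (norm_nonneg _) (h q D)
  exact this

lemma momT_inv (μ : Measure (Matrix.unitaryGroup ι ℂ)) [μ.IsHaarMeasure]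
    (V : Matrix.unitaryGroup ι ℂ) (A B C D i j p q : ι) :
    momT μ A B C D i j p q = ∫ U : Matrix.unitaryGroup ι ℂ,
      (V.1 * U.1) i A * (V.1 * U.1) j B * (starRingEnd ℂ) ((V.1 * U.1) p C)
        * (starRingEnd ℂ) ((V.1 * U.1) q D) ∂μ := by
  unfold momT
  rw [← integral_mul_left_eq_self _ V]
  rfl

lemma momT_perm (μ : Measure (Matrix.unitaryGroup ι ℂ)) [μ.IsHaarMeasure]
    (σ : Equiv.Perm ι) (A B C D i j p q : ι) :
    momT μ A B C D i j p q = momT μ A B C D (σ i) (σ j) (σ p) (σ q) := by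
  have hV : σ.permMatrix ℂ ∈ Matrix.unitaryGroup ι ℂ := by
    rw [Matrix.mem_unitaryGroup_iff]
    ext x y
    rw [Matrix.mul_apply]
    simp [Matrix.star_apply, PEquiv.toMatrix_apply, Equiv.toPEquiv_apply, Matrix.one_apply]
  rw [momT_inv μ ⟨_, hV⟩]
  have : ∀ (U : Matrix.unitaryGroup ι ℂ) x y, (σ.permMatrix ℂ * U.1) x y = U (σ x) y := by
    intro U x y
    rw [Matrix.mul_apply]
    simp [PEquiv.toMatrix_apply, Equiv.toPEquiv_apply]
  simp only [this]
  rfl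

lemma momT_phase (μ : Measure (Matrix.unitaryGroup ι ℂ)) [μ.IsHaarMeasure]
    (v : ι → ℂ) (hv : ∀ x, v x * (starRingEnd ℂ) (v x) = 1) (A B C D i j p q : ι) :
    momT μ A B C D i j p q =
      (v i * v j * (starRingEnd ℂ) (v p) * (starRingEnd ℂ) (v q)) * momT μ A B C D i j p q := by
  have hV : Matrix.diagonal v ∈ Matrix.unitaryGroup ι ℂ := by
    rw [Matrix.mem_unitaryGroup_iff, Matrix.star_eq_conjTranspose, Matrix.diagonal_conjTranspose,
      Matrix.diagonal_mul_diagonal, ← Matrix.diagonal_one]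
    congr 1
    funext x
    exact hv x
  conv_lhs => rw [momT_inv μ ⟨_, hV⟩]
  unfold momT
  rw [← integral_const_mul]
  congr 1
  funext U
  simp only [Matrix.diagonal_mul, map_mul]
  ring

/-- The integrand vanishes on average unless index multisets agree. -/
lemma momT_zero (μ : Measure (Matrix.unitaryGroup ι ℂ)) [μ.IsHaarMeasure]
    (A B C D i j p q : ι) (h1 : ¬ (i = p ∧ j = q)) (h2 : ¬ (i = q ∧ j = p)) :
    momT μ A B C D i j p q = 0 := by
  have key : ∀ x : ι, momT μ A B C D i j p q = _ := fun x =>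
    momT_phase μ (fun y => if y = x then Complex.I else 1) (by
      intro y; by_cases h : y = x <;> simp [h]) A B C D i j p q
  have fin : ∀ c z : ℂ, z = c * z → c ≠ 1 → z = 0 := by
    intro c z h hc
    have : (1 - c) * z = 0 := by linear_combination h
    rcases mul_eq_zero.mp this with h | h
    · exact absurd (sub_eq_zero.mp h).symm hc
    · exact h
  have n1 : Complex.I ≠ 1 := by intro h; simpa using congrArg Complex.re h
  have n2 : -Complex.I ≠ 1 := by intro h; simpa using congrArg Complex.re h
  have n3 : (-1 : ℂ) ≠ 1 := by norm_num
  by_cases hip : i = p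
  · have hjq : j ≠ q := fun h => h1 ⟨hip, h⟩
    refine fin _ _ (key j) ?_
    subst hip
    by_cases hij : i = j
    · simp [hij, hjq.symm, n1]
    · simp [hij, hjq.symm, n1]
  · by_cases hiq : i = q
    · have hjp : j ≠ p := fun h => h2 ⟨hiq, h⟩
      refine fin _ _ (key j) ?_
      subst hiq
      by_cases hij : i = j
      · simp [hij, hjp.symm, n1]
      · simp [hij, hjp.symm, n1]
    · refine fin _ _ (key i) ?_
      by_cases hij : j = i
      · simp [hij, Ne.symm hip, Ne.symm hiq, n3]
      · simp [hij, Ne.symm hip, Ne.symm hiq, n1]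

lemma exists_perm2 (i j p q : ι) (hij : i ≠ j) (hpq : p ≠ q) :
    ∃ σ : Equiv.Perm ι, σ i = p ∧ σ j = q := by
  refine ⟨Equiv.swap (Equiv.swap i p j) q * Equiv.swap i p, ?_, ?_⟩
  · have : p ≠ Equiv.swap i p j := by
      intro h
      apply hij
      apply (Equiv.swap i p).injective
      rw [Equiv.swap_apply_left]; exact h
    simp [Equiv.swap_apply_of_ne_of_ne this hpq]
  · simp

/-- Hadamard rotation in the plane `p, q`. -/
noncomputable def had (p q : ι) : Matrix ι ι ℂ := fun x y =>
  if x = p then (if y = p then ((√2 : ℝ) : ℂ)⁻¹ else if y = q then ((√2 : ℝ) : ℂ)⁻¹ else 0)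
  else if x = q then (if y = p then ((√2 : ℝ) : ℂ)⁻¹ else if y = q then -((√2 : ℝ) : ℂ)⁻¹ else 0)
  else if x = y then 1 else 0

lemma sqrt2_sq : (((√2 : ℝ) : ℂ)⁻¹) * (((√2 : ℝ) : ℂ)⁻¹) = 1 / 2 := by
  rw [← mul_inv, ← Complex.ofReal_mul, Real.mul_self_sqrt (by norm_num)]; norm_num

lemma had_mul (p q : ι) (hpq : p ≠ q) (M : Matrix ι ι ℂ) (x y : ι) :
    (had p q * M) x y = if x = p then ((√2 : ℝ) : ℂ)⁻¹ * (M p y + M q y)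
      else if x = q then ((√2 : ℝ) : ℂ)⁻¹ * (M p y - M q y) else M x y := by
  rw [Matrix.mul_apply]
  by_cases hx : x = p
  · have : ∀ z, had p q x z * M z y = (if z = p then ((√2 : ℝ) : ℂ)⁻¹ * M p y else 0)
        + (if z = q then ((√2 : ℝ) : ℂ)⁻¹ * M q y else 0) := by
      intro z
      by_cases hz : z = p
      · simp [had, hx, hz, hpq]
      · by_cases hz' : z = q
        · simp [had, hx, hz', hpq.symm]
        · simp [had, hx, hz, hz']
    simp only [this, Finset.sum_add_distrib, if_true, Finset.sum_ite_eq', Finset.mem_univ]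
    rw [if_pos hx]
    ring
  · by_cases hx' : x = q
    · have : ∀ z, had p q x z * M z y = (if z = p then ((√2 : ℝ) : ℂ)⁻¹ * M p y else 0)
        + (if z = q then -((√2 : ℝ) : ℂ)⁻¹ * M q y else 0) := by
        intro z
        by_cases hz : z = p
        · simp [had, hx', hz, hpq, hpq.symm]
        · by_cases hz' : z = q
          · simp [had, hx', hz', hpq.symm]
          · simp [had, hx', hz, hz', hpq.symm]
      simp only [this, Finset.sum_add_distrib, Finset.sum_ite_eq', Finset.mem_univ, if_true]
      rw [if_neg hx, if_pos hx']
      ring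
    · simp [had, hx, hx']

lemma had_mem (p q : ι) (hpq : p ≠ q) : had p q ∈ Matrix.unitaryGroup ι ℂ := by
  have hs : star (had p q) = had p q := by
    ext x y
    simp only [Matrix.star_apply, had]
    by_cases hx : x = p <;> by_cases hx' : x = q <;> by_cases hy : y = p <;>
      by_cases hy' : y = q <;> simp_all [eq_comm]
    all_goals split_ifs <;> simp
  rw [Matrix.mem_unitaryGroup_iff, hs]
  ext x y
  rw [had_mul p q hpq]
  have := sqrt2_sq
  by_cases hx : x = p
  · rw [if_pos hx, hx]
    by_cases hy : y = p
    · subst hy; simp [had, hpq.symm]; linear_combination 2 * this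
    · by_cases hy' : y = q
      · simp [had, hy', hpq.symm, hpq]
      · simp [had, hy, hy', hpq.symm, Ne.symm hy]
  · by_cases hx' : x = q
    · rw [if_neg hx, if_pos hx', hx']
      by_cases hy : y = p
      · simp [had, hy, hpq.symm]
      · by_cases hy' : y = q
        · subst hy'; simp [had, hpq.symm]; linear_combination 2 * this
        · simp [had, hy, hy', hpq.symm, Ne.symm hy']
    · simp [had, hx, hx', Matrix.one_apply]

lemma momT_diag (μ : Measure (Matrix.unitaryGroup ι ℂ)) [μ.IsHaarMeasure] [IsProbabilityMeasure μ]
    (A B C D p q : ι) (hpq : p ≠ q) :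
    momT μ A B C D p p p p = momT μ A B C D p q p q + momT μ A B C D p q q p := by
  set T := momT μ A B C D with hT
  have e : T p p p p = (1/4) * (T p p p p + T p p p q + T p p q p + T p p q q
      + T p q p p + T p q p q + T p q q p + T p q q q
      + T q p p p + T q p p q + T q p q p + T q p q q
      + T q q p p + T q q p q + T q q q p + T q q q q) := by
    conv_lhs => rw [hT, momT_inv μ ⟨_, had_mem p q hpq⟩]
    rw [hT]
    unfold momT
    have hi := momT_int μ A B C D
    repeat rw [← integral_add (by fun_prop) (hi _ _ _ _)]
    rw [← integral_const_mul]
    congr 1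
    funext U
    simp only [had_mul p q hpq, if_true, map_mul, map_add, map_inv₀, Complex.conj_ofReal]
    have := sqrt2_sq
    have h4 : (((√2 : ℝ) : ℂ)⁻¹) ^ 4 = 1 / 4 := by
      linear_combination ((((√2 : ℝ) : ℂ)⁻¹) ^ 2 + 1/2) * this
    rw [← h4]
    ring
  have z : ∀ i j r s, ¬ (i = r ∧ j = s) → ¬ (i = s ∧ j = r) → T i j r s = 0 :=
    momT_zero μ A B C D
  obtain ⟨σ, h1, h2⟩ := exists_perm2 p q q p hpq hpq.symm
  have e1 : T p p p p = T q q q q := by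
    have := momT_perm μ σ A B C D p p p p
    rwa [h1] at this
  have e2 : T p q p q = T q p q p := by
    have := momT_perm μ σ A B C D p q p q
    rwa [h1, h2] at this
  have e3 : T p q q p = T q p p q := by
    have := momT_perm μ σ A B C D p q q p
    rwa [h1, h2] at this
  rw [z p p p q (by simp [hpq]) (by simp [hpq]), z p p q p (by simp [hpq]) (by simp [hpq]),
    z p p q q (by simp [hpq]) (by simp [hpq]), z p q p p (by simp [hpq.symm]) (by simp [hpq.symm]),
    z p q q q (by simp [hpq]) (by simp [hpq]), z q p p p (by simp [hpq.symm]) (by simp [hpq.symm]),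
    z q p q q (by simp [hpq]) (by simp [hpq]), z q q p p (by simp [hpq.symm]) (by simp [hpq.symm]),
    z q q p q (by simp [hpq.symm]) (by simp [hpq.symm]),
    z q q q p (by simp [hpq.symm]) (by simp [hpq.symm]), ← e1, ← e2, ← e3] at e
  linear_combination 2 * e

lemma momT_form (μ : Measure (Matrix.unitaryGroup ι ℂ)) [μ.IsHaarMeasure] [IsProbabilityMeasure μ]
    (hc : 2 ≤ Fintype.card ι) (A B C D : ι) : ∃ α β : ℂ, ∀ i j r s,
      momT μ A B C D i j r s = α * (δ i r * δ j s) + β * (δ i s * δ j r) := by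
  obtain ⟨p, q, hpq⟩ := Fintype.one_lt_card_iff.mp hc
  refine ⟨momT μ A B C D p q p q, momT μ A B C D p q q p, fun i j r s => ?_⟩
  by_cases h1 : i = r ∧ j = s
  · obtain ⟨rfl, rfl⟩ := h1
    by_cases hij : i = j
    · subst hij
      simp only [δ, if_true, mul_one]
      rw [← momT_diag μ A B C D p q hpq]
      rw [momT_perm μ (Equiv.swap i p)]; simp
    · obtain ⟨σ, h1, h2⟩ := exists_perm2 i j p q hij hpq
      rw [momT_perm μ σ, h1, h2]
      simp [δ, hij]
  · by_cases h2 : i = s ∧ j = r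
    · obtain ⟨rfl, rfl⟩ := h2
      have hij : i ≠ j := fun h => h1 ⟨h, h.symm⟩
      obtain ⟨σ, h1, h2⟩ := exists_perm2 i j p q hij hpq
      rw [momT_perm μ σ, h1, h2]
      simp [δ, hij]
    · rw [momT_zero μ A B C D i j r s h1 h2]
      have e1 : δ i r * δ j s = 0 := by
        simp only [δ]; split_ifs <;> simp_all
      have e2 : δ i s * δ j r = 0 := by
        simp only [δ]; split_ifs <;> simp_all
      rw [e1, e2]; simp

lemma unit_contract (U : Matrix.unitaryGroup ι ℂ) (A C : ι) :
    ∑ i, U i A * (starRingEnd ℂ) (U i C) = δ A C := by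
  have h := congrFun (congrFun (Matrix.mem_unitaryGroup_iff'.mp U.2) C) A
  rw [Matrix.mul_apply] at h
  simp only [Matrix.star_apply, Matrix.one_apply] at h
  rw [δ]
  simp only [eq_comm (a := A)]
  rw [← h]
  exact Finset.sum_congr rfl fun i _ => mul_comm _ _

lemma contract1 (μ : Measure (Matrix.unitaryGroup ι ℂ)) [IsProbabilityMeasure μ]
    (A B C D : ι) : ∑ i, ∑ j, momT μ A B C D i j i j = δ A C * δ B D := by
  unfold momT
  have hi := momT_int μ A B C D
  simp_rw [← integral_finsetSum Finset.univ (fun j _ => hi _ j _ j)]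
  rw [← integral_finsetSum Finset.univ
    (fun i _ => integrable_finsetSum Finset.univ (fun j _ => hi i j i j))]
  have : ∀ U : Matrix.unitaryGroup ι ℂ, ∑ i, ∑ j,
      U i A * U j B * (starRingEnd ℂ) (U i C) * (starRingEnd ℂ) (U j D) = δ A C * δ B D := by
    intro U
    rw [← unit_contract U, ← unit_contract U, Finset.sum_mul_sum]
    refine Finset.sum_congr rfl fun i _ => Finset.sum_congr rfl fun j _ => by ring
  simp [this]

lemma contract2 (μ : Measure (Matrix.unitaryGroup ι ℂ)) [IsProbabilityMeasure μ]
    (A B C D : ι) : ∑ i, ∑ j, momT μ A B C D i j j i = δ A D * δ B C := by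
  rw [← contract1 μ A B D C]
  refine Finset.sum_congr rfl fun i _ => Finset.sum_congr rfl fun j _ => ?_
  unfold momT
  congr 1
  funext U
  ring

lemma momT_eq (μ : Measure (Matrix.unitaryGroup ι ℂ)) [μ.IsHaarMeasure] [IsProbabilityMeasure μ]
    (hc : 2 ≤ Fintype.card ι) (N : ℂ) (hN : N = Fintype.card ι) (A B C D i j r s : ι) :
      momT μ A B C D i j r s =
       ((δ A C * δ B D - (δ A D * δ B C) / N) * (δ i r * δ j s)
        + (δ A D * δ B C - (δ A C * δ B D) / N) * (δ i s * δ j r)) / (N ^ 2 - 1) := by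
  obtain ⟨α, β, h⟩ := momT_form μ hc A B C D
  have c1 := contract1 μ A B C D
  have c2 := contract2 μ A B C D
  simp only [h, Finset.sum_add_distrib, ← Finset.mul_sum] at c1 c2
  have s1 : ∑ i : ι, ∑ j : ι, δ i i * δ j j = N ^ 2 := by
    simp [δ, hN, sq]
  have s2 : ∑ i : ι, ∑ j : ι, δ i j * δ j i = N := by
    simp [δ, hN]
  simp only [← Finset.mul_sum] at s1
  rw [s1, s2] at c1 c2
  have hN0 : N ≠ 0 := by
    rw [hN]; exact_mod_cast (by omega)
  have hN1 : N ^ 2 - 1 ≠ 0 := by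
    rw [hN, sub_ne_zero]; norm_cast
    nlinarith
  rw [h]
  rw [← c1, ← c2]
  field_simp
  ring

end Aux

/-- Entries of the Haar-averaged two-copy Choi–Jamiołkowski state over
`U(dk)`, with environment of dimension `k` initialised in `|0⟩`. -/
theorem averaged_choi_t_two (d k : ℕ) (hd : 1 ≤ d) (hk : 1 ≤ k) (hD : 2 ≤ d * k)
    (μ : Measure (Matrix.unitaryGroup (Fin d × Fin k) ℂ)) [μ.IsHaarMeasure]
    [IsProbabilityMeasure μ] (a₁ a₂ b₁ b₂ i₁ i₂ j₁ j₂ : Fin d) :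
    (1 / (d : ℂ) ^ 2) * ∑ l₁ : Fin k, ∑ l₂ : Fin k,
        ∫ U : Matrix.unitaryGroup (Fin d × Fin k) ℂ,
          U (i₁, l₁) (a₁, (⟨0, hk⟩ : Fin k)) * U (i₂, l₂) (a₂, (⟨0, hk⟩ : Fin k)) *
            (starRingEnd ℂ) (U (j₁, l₁) (b₁, (⟨0, hk⟩ : Fin k))) *
            (starRingEnd ℂ) (U (j₂, l₂) (b₂, (⟨0, hk⟩ : Fin k))) ∂μ =
      ((k : ℂ) ^ 2 * (δ a₁ b₁ * δ a₂ b₂ * δ i₁ j₁ * δ i₂ j₂) +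
          (k : ℂ) * (δ a₁ b₂ * δ a₂ b₁ * δ i₁ j₂ * δ i₂ j₁) -
          ((k : ℂ) ^ 2 / ((d : ℂ) * k)) * (δ a₁ b₂ * δ a₂ b₁ * δ i₁ j₁ * δ i₂ j₂) -
          ((k : ℂ) / ((d : ℂ) * k)) * (δ a₁ b₁ * δ a₂ b₂ * δ i₁ j₂ * δ i₂ j₁)) /
        ((d : ℂ) ^ 2 * (((d : ℂ) * k) ^ 2 - 1)) := by
  have hc : 2 ≤ Fintype.card (Fin d × Fin k) := by simpa using hD
  have hN : (d : ℂ) * k = Fintype.card (Fin d × Fin k) := by simp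
  have hm := momT_eq μ hc _ hN
  unfold momT at hm
  simp only [hm]
  have dp : ∀ (x y : Fin d) (u v : Fin k), δ (x, u) (y, v) = δ x y * δ u v := by
    intro x y u v
    simp only [δ, Prod.mk.injEq]
    split_ifs <;> simp_all
  have d1 : ∀ u : Fin k, δ u u = 1 := fun u => by simp [δ]
  have s2 : ∑ u : Fin k, ∑ v : Fin k, δ u v * δ v u = (k : ℂ) := by simp [δ]
  simp only [dp, d1, mul_one]
  set N : ℂ := (d : ℂ) * k with hNd
  set P := δ a₁ b₁ * δ a₂ b₂ with hP
  set Q := δ a₁ b₂ * δ a₂ b₁ with hQ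
  have : ∀ u v : Fin k, ((P - Q / N) * (δ i₁ j₁ * δ i₂ j₂) +
      (Q - P / N) * (δ i₁ j₂ * δ u v * (δ i₂ j₁ * δ v u))) / (N ^ 2 - 1)
      = ((P - Q / N) * (δ i₁ j₁ * δ i₂ j₂)) / (N ^ 2 - 1) +
      ((Q - P / N) * (δ i₁ j₂ * δ i₂ j₁)) / (N ^ 2 - 1) * (δ u v * δ v u) := by
    intro u v; ring
  simp only [this, Finset.sum_add_distrib, ← Finset.mul_sum, s2]
  simp only [Finset.sum_const, Finset.card_univ, Fintype.card_fin, nsmul_eq_mul]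
  simp only [div_eq_mul_inv, mul_inv]
  ring
end

section
/- (Unitary 2-designs induce channel [2,k]-designs.) Let d ≥ 1, k ≥ 1 with D = dk ≥ 2, and let (U_m)_{m<M} (M ≥ 1) be a unitary 2-design in U(Fin d × Fin k); fix the environment state 0 ∈ Fin k. Then for all a₁, a₂, b₁, b₂, i₁, i₂, j₁, j₂ ∈ Fin d, (1/M) Σ_{m<M} (1/d²) Σ_{l₁, l₂ ∈ Fin k} (U_m)_{(i₁,l₁),(a₁,0)} (U_m)_{(i₂,l₂),(a₂,0)} conj((U_m)_{(j₁,l₁),(b₁,0)}) conj((U_m)_{(j₂,l₂),(b₂,0)}) = [ k² δ_{a₁b₁}δ_{a₂b₂}δ_{i₁j₁}δ_{i₂j₂} + k δ_{a₁b₂}δ_{a₂b₁}δ_{i₁j₂}δ_{i₂j₁} − (k²/D) δ_{a₁b₂}δ_{a₂b₁}δ_{i₁j₁}δ_{i₂j₂} − (k/D) δ_{a₁b₁}δ_{a₂b₂}δ_{i₁j₂}δ_{i₂j₁} ] / (d²(D² − 1)); that is, the channels Φ_m(ρ) = Tr_E[U_m(ρ⊗|0⟩⟨0|)U_m†] have two-copy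 Choi average equal to the Haar two-copy Choi average, so they form a channel [2,k]-design. -/
open MeasureTheory Matrix

section aux
variable {ι : Type*} [Fintype ι] [DecidableEq ι]

/-- fourth-moment integral -/
noncomputable def mom (μ : Measure (Matrix.unitaryGroup ι ℂ)) (q₁ q₂ s₁ s₂ p₁ p₂ r₁ r₂ : ι) : ℂ :=
  ∫ V : Matrix.unitaryGroup ι ℂ, V p₁ q₁ * V p₂ q₂ * (starRingEnd ℂ) (V r₁ s₁) *
    (starRingEnd ℂ) (V r₂ s₂) ∂μ

theorem mom_integrable (μ : Measure (Matrix.unitaryGroup ι ℂ)) [IsProbabilityMeasure μ]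
    (q₁ q₂ s₁ s₂ p₁ p₂ r₁ r₂ : ι) :
    Integrable (fun V : Matrix.unitaryGroup ι ℂ => V p₁ q₁ * V p₂ q₂ * (starRingEnd ℂ) (V r₁ s₁) *
      (starRingEnd ℂ) (V r₂ s₂)) μ := by
  have hc : ∀ i j : ι, Continuous fun V : Matrix.unitaryGroup ι ℂ => V i j := fun i j =>
    continuous_subtype_val.matrix_elem i j
  refine Integrable.of_bound (C := 1) ?_ (Filter.Eventually.of_forall fun V => ?_)
  · refine Continuous.aestronglyMeasurable ?_
    exact (((hc _ _).mul (hc _ _)).mul (Complex.continuous_conj.comp (hc _ _))).mul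
      (Complex.continuous_conj.comp (hc _ _))
  · have h : ∀ i j : ι, ‖V i j‖ ≤ 1 := fun i j => entry_norm_bound_of_unitary V.2 i j
    rw [norm_mul, norm_mul, norm_mul, RCLike.norm_conj, RCLike.norm_conj]
    exact mul_le_one₀ (mul_le_one₀ (mul_le_one₀ (h _ _) (norm_nonneg _) (h _ _))
      (norm_nonneg _) (h _ _)) (norm_nonneg _) (h _ _)

theorem mom_inv (μ : Measure (Matrix.unitaryGroup ι ℂ)) [μ.IsHaarMeasure]
    (g : Matrix.unitaryGroup ι ℂ) (q₁ q₂ s₁ s₂ p₁ p₂ r₁ r₂ : ι) :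
    mom μ q₁ q₂ s₁ s₂ p₁ p₂ r₁ r₂ = ∫ V : Matrix.unitaryGroup ι ℂ,
      (g * V) p₁ q₁ * (g * V) p₂ q₂ * (starRingEnd ℂ) ((g * V) r₁ s₁) *
        (starRingEnd ℂ) ((g * V) r₂ s₂) ∂μ :=
  (integral_mul_left_eq_self (fun V : Matrix.unitaryGroup ι ℂ =>
    V p₁ q₁ * V p₂ q₂ * (starRingEnd ℂ) (V r₁ s₁) * (starRingEnd ℂ) (V r₂ s₂)) g).symm

/-- phase -/
noncomputable def phs (x y : ι) : ℂ := if y = x then Complex.I else 1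

theorem mom_phase (μ : Measure (Matrix.unitaryGroup ι ℂ)) [μ.IsHaarMeasure]
    (x q₁ q₂ s₁ s₂ p₁ p₂ r₁ r₂ : ι) :
    mom μ q₁ q₂ s₁ s₂ p₁ p₂ r₁ r₂ = (phs x p₁ * phs x p₂ * (starRingEnd ℂ) (phs x r₁) *
      (starRingEnd ℂ) (phs x r₂)) * mom μ q₁ q₂ s₁ s₂ p₁ p₂ r₁ r₂ := by
  have hg : Matrix.diagonal (phs x) ∈ Matrix.unitaryGroup ι ℂ := by
    rw [Matrix.mem_unitaryGroup_iff, Matrix.star_eq_conjTranspose, Matrix.diagonal_conjTranspose,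
      Matrix.diagonal_mul_diagonal, ← Matrix.diagonal_one]
    congr 1
    funext i
    by_cases h : i = x <;> simp [phs, h]
  have h := mom_inv μ ⟨_, hg⟩ q₁ q₂ s₁ s₂ p₁ p₂ r₁ r₂
  refine h.trans ?_
  rw [mom, ← integral_const_mul]
  congr 1
  funext V
  simp only [Matrix.UnitaryGroup.mul_val, Matrix.diagonal_mul, map_mul]
  ring

theorem mom_perm (μ : Measure (Matrix.unitaryGroup ι ℂ)) [μ.IsHaarMeasure]
    (σ : Equiv.Perm ι) (q₁ q₂ s₁ s₂ p₁ p₂ r₁ r₂ : ι) :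
    mom μ q₁ q₂ s₁ s₂ p₁ p₂ r₁ r₂ = mom μ q₁ q₂ s₁ s₂ (σ p₁) (σ p₂) (σ r₁) (σ r₂) := by
  have hg : σ.permMatrix ℂ ∈ Matrix.unitaryGroup ι ℂ := by
    rw [Matrix.mem_unitaryGroup_iff, Matrix.star_eq_conjTranspose, Matrix.conjTranspose_permMatrix,
      ← Matrix.permMatrix_mul]
    simp
  rw [mom_inv μ ⟨_, hg⟩ q₁ q₂ s₁ s₂ p₁ p₂ r₁ r₂, mom]
  congr 1
  funext V
  simp only [Matrix.UnitaryGroup.mul_val, Equiv.Perm.permMatrix, PEquiv.toMatrix_toPEquiv_mul,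
    Matrix.submatrix_apply, id]

theorem mom_zero (μ : Measure (Matrix.unitaryGroup ι ℂ)) [μ.IsHaarMeasure]
    (q₁ q₂ s₁ s₂ p₁ p₂ r₁ r₂ : ι) (h : ¬ ((p₁ = r₁ ∧ p₂ = r₂) ∨ (p₁ = r₂ ∧ p₂ = r₁))) :
    mom μ q₁ q₂ s₁ s₂ p₁ p₂ r₁ r₂ = 0 := by
  have key : ∀ c m : ℂ, m = c * m → c ≠ 1 → m = 0 := by
    intro c m h1 h2
    have : (c - 1) * m = 0 := by linear_combination -h1
    rcases mul_eq_zero.1 this with h3 | h3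
    · exact absurd (sub_eq_zero.1 h3) h2
    · exact h3
  have hI : Complex.I ≠ 1 := by intro h; simpa using congrArg Complex.re h
  have hI' : -Complex.I ≠ 1 := by intro h; simpa using congrArg Complex.re h
  have hn : (-1 : ℂ) ≠ 1 := by norm_num
  by_cases h1 : r₁ = p₁ ∨ r₁ = p₂
  · by_cases h2 : r₂ = p₁ ∨ r₂ = p₂
    · have h3 : r₁ = r₂ ∧ p₁ ≠ p₂ := by grind
      obtain ⟨h3, h4⟩ := h3
      subst h3
      apply key _ _ (mom_phase μ r₁ q₁ q₂ s₁ s₂ p₁ p₂ r₁ r₁)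
      rcases h1 with h1 | h1
      · subst h1; simp [phs, h4.symm, hI, hI']
      · subst h1; simp [phs, h4, hI, hI']
    · push Not at h2
      apply key _ _ (mom_phase μ r₂ q₁ q₂ s₁ s₂ p₁ p₂ r₁ r₂)
      by_cases h3 : r₁ = r₂ <;> simp [phs, h2.1.symm, h2.2.symm, h3, hI, hI', hn]
  · push Not at h1
    apply key _ _ (mom_phase μ r₁ q₁ q₂ s₁ s₂ p₁ p₂ r₁ r₂)
    by_cases h3 : r₂ = r₁ <;> simp [phs, h1.1.symm, h1.2.symm, h3, hI, hI', hn]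

theorem mom_rot (μ : Measure (Matrix.unitaryGroup ι ℂ)) [μ.IsHaarMeasure] [IsProbabilityMeasure μ]
    (q₁ q₂ s₁ s₂ x y : ι) (hxy : x ≠ y) (hs : ∀ p₁ p₂ r₁ r₂ : ι,
      mom μ q₁ q₂ s₁ s₂ p₁ p₂ r₁ r₂ = mom μ q₁ q₂ s₁ s₂ (Equiv.swap x y p₁) (Equiv.swap x y p₂)
        (Equiv.swap x y r₁) (Equiv.swap x y r₂)) :
    mom μ q₁ q₂ s₁ s₂ x x x x = mom μ q₁ q₂ s₁ s₂ x y x y + mom μ q₁ q₂ s₁ s₂ x y y x := by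
  set v : ι → ℂ := Pi.single x (3/5) + Pi.single y (4/5) with hv
  have hvx : v x = 3/5 := by simp [hv, hxy]
  have hvy : v y = 4/5 := by simp [hv, hxy.symm]
  have hdot : ∀ w : ι → ℂ, v ⬝ᵥ w = 3/5 * w x + 4/5 * w y := by
    intro w; simp [hv, add_dotProduct]
  have hstar : star v = v := by
    funext i
    simp only [hv, Pi.star_apply, Pi.add_apply, Pi.single_apply]
    split_ifs <;> simp
  have hg : (1 - (2:ℂ) • Matrix.vecMulVec v v) ∈ Matrix.unitaryGroup ι ℂ := by
    have hP : Matrix.vecMulVec v v * Matrix.vecMulVec v v = Matrix.vecMulVec v v := by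
      rw [Matrix.vecMulVec_mul_vecMulVec, hdot, hvx, hvy]
      norm_num
    have hH : star (1 - (2:ℂ) • Matrix.vecMulVec v v) = 1 - (2:ℂ) • Matrix.vecMulVec v v := by
      rw [Matrix.star_eq_conjTranspose, Matrix.conjTranspose_sub, Matrix.conjTranspose_smul,
        Matrix.conjTranspose_vecMulVec, hstar]
      simp
    rw [Matrix.mem_unitaryGroup_iff, hH]
    simp only [sub_mul, mul_sub, one_mul, mul_one, smul_mul_assoc, mul_smul_comm, hP]
    module
  have he : ∀ (V : Matrix.unitaryGroup ι ℂ) (q : ι),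
      ((⟨_, hg⟩ : Matrix.unitaryGroup ι ℂ) * V) x q = 7/25 * V x q - 24/25 * V y q := by
    intro V q
    simp only [Matrix.UnitaryGroup.mul_val, Matrix.sub_mul, Matrix.one_mul, Matrix.smul_mul,
      Matrix.vecMulVec_mul, Matrix.sub_apply, Matrix.smul_apply, Matrix.vecMulVec_apply,
      Matrix.vecMul, hdot, hvx, smul_eq_mul]
    ring
  have h := mom_inv μ ⟨_, hg⟩ q₁ q₂ s₁ s₂ x x x x
  have h2 : mom μ q₁ q₂ s₁ s₂ x x x x =
      ∑ a : Bool, ∑ b : Bool, ∑ c : Bool, ∑ e : Bool,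
        (cond a (7/25) (-24/25) * cond b (7/25) (-24/25) * cond c (7/25) (-24/25)
          * cond e (7/25) (-24/25)) *
        mom μ q₁ q₂ s₁ s₂ (cond a x y) (cond b x y) (cond c x y) (cond e x y) := by
    rw [h]
    simp only [mom, ← integral_const_mul]
    have hi := fun (a b c e : Bool) => (mom_integrable μ q₁ q₂ s₁ s₂ (cond a x y) (cond b x y)
      (cond c x y) (cond e x y)).const_mul ((cond a (7/25) (-24/25) * cond b (7/25) (-24/25) *
        cond c (7/25) (-24/25) * cond e (7/25) (-24/25) : ℂ))
    simp_rw [← integral_finsetSum Finset.univ (fun e _ => hi _ _ _ e)]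
    simp_rw [← integral_finsetSum Finset.univ (fun c _ => integrable_finsetSum Finset.univ
      (fun e _ => hi _ _ c e))]
    simp_rw [← integral_finsetSum Finset.univ (fun b _ => integrable_finsetSum Finset.univ
      (fun c _ => integrable_finsetSum Finset.univ (fun e _ => hi _ b c e)))]
    rw [← integral_finsetSum Finset.univ (fun a _ => integrable_finsetSum Finset.univ
      (fun b _ => integrable_finsetSum Finset.univ
      (fun c _ => integrable_finsetSum Finset.univ (fun e _ => hi a b c e))))]
    congr 1
    funext V
    simp only [he, Fintype.sum_bool, cond_true, cond_false, map_sub, map_mul, map_div₀, map_ofNat]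
    ring
  simp only [Fintype.sum_bool, cond_true, cond_false] at h2
  have z := fun p₁ p₂ r₁ r₂ => mom_zero μ q₁ q₂ s₁ s₂ p₁ p₂ r₁ r₂
  rw [z x x x y (by grind), z x x y x (by grind), z x x y y (by grind), z x y x x (by grind),
    z x y y y (by grind), z y x x x (by grind), z y x y y (by grind), z y y x x (by grind),
    z y y x y (by grind), z y y y x (by grind)] at h2
  have e1 := hs x y x y
  have e2 := hs x y y x
  have e3 := hs x x x x
  simp only [Equiv.swap_apply_left, Equiv.swap_apply_right] at e1 e2 e3
  rw [← e1, ← e2, ← e3] at h2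
  linear_combination (390625 / 56448 : ℂ) * h2

theorem perm_pair (x y x' y' : ι) (h : x ≠ y) (h' : x' ≠ y') :
    ∃ σ : Equiv.Perm ι, σ x = x' ∧ σ y = y' := by
  refine ⟨Equiv.swap x x' |>.trans (Equiv.swap (Equiv.swap x x' y) y'), ?_, ?_⟩
  · simp only [Equiv.trans_apply, Equiv.swap_apply_left]
    apply Equiv.swap_apply_of_ne_of_ne _ h'
    intro e
    have := (Equiv.swap x x').injective ((Equiv.swap_apply_left x x').trans e)
    exact h this
  · simp

theorem mom_form (μ : Measure (Matrix.unitaryGroup ι ℂ)) [μ.IsHaarMeasure] [IsProbabilityMeasure μ]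
    (q₁ q₂ s₁ s₂ x y : ι) (hxy : x ≠ y) (p₁ p₂ r₁ r₂ : ι) :
    mom μ q₁ q₂ s₁ s₂ p₁ p₂ r₁ r₂ = mom μ q₁ q₂ s₁ s₂ x y x y * (δ p₁ r₁ * δ p₂ r₂) +
      mom μ q₁ q₂ s₁ s₂ x y y x * (δ p₁ r₂ * δ p₂ r₁) := by
  by_cases h : (p₁ = r₁ ∧ p₂ = r₂) ∨ (p₁ = r₂ ∧ p₂ = r₁)
  · by_cases hp : p₁ = p₂
    · have h3 : r₁ = p₁ ∧ r₂ = p₁ := by grind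
      obtain ⟨rfl, rfl⟩ := h3
      subst hp
      rw [mom_perm μ (Equiv.swap r₂ x)]
      simp [δ]
      exact mom_rot μ q₁ q₂ s₁ s₂ x y hxy (mom_perm μ _ q₁ q₂ s₁ s₂)
    · obtain ⟨σ, h1, h2⟩ := perm_pair p₁ p₂ x y hp hxy
      rw [mom_perm μ σ]
      rcases h with ⟨rfl, rfl⟩ | ⟨rfl, rfl⟩
      · simp [δ, h1, h2, hp, Ne.symm hp]
      · simp [δ, h1, h2, hp, Ne.symm hp]
  · rw [mom_zero μ _ _ _ _ _ _ _ _ h]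
    simp only [δ]
    grind

theorem unit_col (V : Matrix.unitaryGroup ι ℂ) (q s : ι) :
    ∑ p, V p q * (starRingEnd ℂ) (V p s) = δ q s := by
  have h := congrFun (congrFun (Matrix.mem_unitaryGroup_iff'.1 V.2) s) q
  rw [Matrix.mul_apply, Matrix.one_apply] at h
  simp only [Matrix.star_apply] at h
  simp only [δ, eq_comm (a := q), ← h]
  exact Finset.sum_congr rfl fun _ _ => mul_comm _ _

theorem sum_mom1 (μ : Measure (Matrix.unitaryGroup ι ℂ)) [IsProbabilityMeasure μ]
    (q₁ q₂ s₁ s₂ : ι) : ∑ a, ∑ b, mom μ q₁ q₂ s₁ s₂ a b a b = δ q₁ s₁ * δ q₂ s₂ := by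
  simp only [mom]
  simp_rw [← integral_finsetSum Finset.univ (fun b _ => mom_integrable μ q₁ q₂ s₁ s₂ _ b _ b)]
  rw [← integral_finsetSum Finset.univ (fun a _ => integrable_finsetSum Finset.univ
      (fun b _ => mom_integrable μ q₁ q₂ s₁ s₂ a b a b))]
  have : ∀ V : Matrix.unitaryGroup ι ℂ, ∑ a, ∑ b, V a q₁ * V b q₂ * (starRingEnd ℂ) (V a s₁) *
      (starRingEnd ℂ) (V b s₂) = δ q₁ s₁ * δ q₂ s₂ := by
    intro V
    rw [← unit_col V, ← unit_col V, Finset.sum_mul_sum]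
    exact Finset.sum_congr rfl fun _ _ => Finset.sum_congr rfl fun _ _ => by ring
  simp [this]

theorem sum_mom2 (μ : Measure (Matrix.unitaryGroup ι ℂ)) [IsProbabilityMeasure μ]
    (q₁ q₂ s₁ s₂ : ι) : ∑ a, ∑ b, mom μ q₁ q₂ s₁ s₂ a b b a = δ q₁ s₂ * δ q₂ s₁ := by
  rw [← sum_mom1 μ]
  refine Finset.sum_congr rfl fun _ _ => Finset.sum_congr rfl fun _ _ => ?_
  simp only [mom]
  congr 1
  funext V
  ring

theorem mom_eq (μ : Measure (Matrix.unitaryGroup ι ℂ)) [μ.IsHaarMeasure] [IsProbabilityMeasure μ]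
    (hc : 2 ≤ Fintype.card ι) (q₁ q₂ s₁ s₂ p₁ p₂ r₁ r₂ : ι) :
    mom μ q₁ q₂ s₁ s₂ p₁ p₂ r₁ r₂ * ((Fintype.card ι : ℂ) * ((Fintype.card ι : ℂ) ^ 2 - 1)) =
      (Fintype.card ι * (δ q₁ s₁ * δ q₂ s₂) - δ q₁ s₂ * δ q₂ s₁) * (δ p₁ r₁ * δ p₂ r₂) +
      (Fintype.card ι * (δ q₁ s₂ * δ q₂ s₁) - δ q₁ s₁ * δ q₂ s₂) * (δ p₁ r₂ * δ p₂ r₁) := by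
  obtain ⟨x, y, hxy⟩ := Fintype.exists_pair_of_one_lt_card hc
  have f := mom_form μ q₁ q₂ s₁ s₂ x y hxy
  have h1 := sum_mom1 μ q₁ q₂ s₁ s₂
  have h2 := sum_mom2 μ q₁ q₂ s₁ s₂
  rw [f p₁ p₂ r₁ r₂]
  generalize mom μ q₁ q₂ s₁ s₂ x y x y = A at *
  generalize mom μ q₁ q₂ s₁ s₂ x y y x = B at *
  simp only [f] at h1 h2
  generalize δ q₁ s₁ * δ q₂ s₂ = e1 at *
  generalize δ q₁ s₂ * δ q₂ s₁ = e2 at *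
  generalize δ p₁ r₁ * δ p₂ r₂ = e3 at *
  generalize δ p₁ r₂ * δ p₂ r₁ = e4 at *
  simp [δ, Finset.sum_add_distrib] at h1 h2
  rw [← h1, ← h2]
  ring

end aux

/-- A unitary `2`-design in `U(dk)` induces a channel `[2,k]`-design: the
two-copy Choi average of the induced channels equals the Haar two-copy Choi average. -/
theorem channel_design_of_unitary_two_design
    (d k M : ℕ) (hd : 1 ≤ d) (hk : 1 ≤ k) (hD : 2 ≤ d * k) (hM : 1 ≤ M)
    (μ : Measure (Matrix.unitaryGroup (Fin d × Fin k) ℂ)) [μ.IsHaarMeasure]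
    [IsProbabilityMeasure μ]
    (U : Fin M → Matrix.unitaryGroup (Fin d × Fin k) ℂ)
    (hU : ∀ p q r s : Fin 2 → (Fin d × Fin k),
      (1 / M : ℂ) * ∑ m, ∏ n, U m (p n) (q n) * (starRingEnd ℂ) (U m (r n) (s n)) =
        ∫ V : Matrix.unitaryGroup (Fin d × Fin k) ℂ,
          ∏ n, V (p n) (q n) * (starRingEnd ℂ) (V (r n) (s n)) ∂μ)
    (a₁ a₂ b₁ b₂ i₁ i₂ j₁ j₂ : Fin d) :
    (1 / M : ℂ) * ∑ m, (1 / (d : ℂ) ^ 2) * ∑ l₁ : Fin k, ∑ l₂ : Fin k,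
        U m (i₁, l₁) (a₁, (⟨0, hk⟩ : Fin k)) * U m (i₂, l₂) (a₂, (⟨0, hk⟩ : Fin k)) *
          (starRingEnd ℂ) (U m (j₁, l₁) (b₁, (⟨0, hk⟩ : Fin k))) *
          (starRingEnd ℂ) (U m (j₂, l₂) (b₂, (⟨0, hk⟩ : Fin k))) =
      ((k : ℂ) ^ 2 * (δ a₁ b₁ * δ a₂ b₂ * δ i₁ j₁ * δ i₂ j₂) +
          (k : ℂ) * (δ a₁ b₂ * δ a₂ b₁ * δ i₁ j₂ * δ i₂ j₁) -
          ((k : ℂ) ^ 2 / ((d : ℂ) * k)) * (δ a₁ b₂ * δ a₂ b₁ * δ i₁ j₁ * δ i₂ j₂) -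
          ((k : ℂ) / ((d : ℂ) * k)) * (δ a₁ b₁ * δ a₂ b₂ * δ i₁ j₂ * δ i₂ j₁)) /
        ((d : ℂ) ^ 2 * (((d : ℂ) * k) ^ 2 - 1)) := by
  have hE : ∀ p₁ p₂ q₁ q₂ r₁ r₂ s₁ s₂ : Fin d × Fin k,
      (1 / M : ℂ) * ∑ m, U m p₁ q₁ * U m p₂ q₂ * (starRingEnd ℂ) (U m r₁ s₁) *
        (starRingEnd ℂ) (U m r₂ s₂) = mom μ q₁ q₂ s₁ s₂ p₁ p₂ r₁ r₂ := by
    intro p₁ p₂ q₁ q₂ r₁ r₂ s₁ s₂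
    have h := hU ![p₁, p₂] ![q₁, q₂] ![r₁, r₂] ![s₁, s₂]
    simp only [Fin.prod_univ_two, Matrix.cons_val_zero, Matrix.cons_val_one] at h
    rw [mom]
    convert h using 3
    · ring
    · ring
  have hL : (1 / M : ℂ) * ∑ m, (1 / (d : ℂ) ^ 2) * ∑ l₁ : Fin k, ∑ l₂ : Fin k,
        U m (i₁, l₁) (a₁, (⟨0, hk⟩ : Fin k)) * U m (i₂, l₂) (a₂, (⟨0, hk⟩ : Fin k)) *
          (starRingEnd ℂ) (U m (j₁, l₁) (b₁, (⟨0, hk⟩ : Fin k))) *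
          (starRingEnd ℂ) (U m (j₂, l₂) (b₂, (⟨0, hk⟩ : Fin k))) =
      (1 / (d : ℂ) ^ 2) * ∑ l₁ : Fin k, ∑ l₂ : Fin k,
        mom μ (a₁, ⟨0, hk⟩) (a₂, ⟨0, hk⟩) (b₁, ⟨0, hk⟩) (b₂, ⟨0, hk⟩)
          (i₁, l₁) (i₂, l₂) (j₁, l₁) (j₂, l₂) := by
    simp only [← hE]
    simp only [← Finset.mul_sum]
    rw [mul_left_comm]
    congr 2
    rw [Finset.sum_comm]
    exact Finset.sum_congr rfl fun _ _ => Finset.sum_comm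
  have hd0 : (d : ℂ) ≠ 0 := by exact_mod_cast (by omega : d ≠ 0)
  have hk0 : (k : ℂ) ≠ 0 := by exact_mod_cast (by omega : k ≠ 0)
  have hD0 : ((d : ℂ) * k) ^ 2 - 1 ≠ 0 := by
    have h : (d * k) ^ 2 ≠ 1 := by nlinarith
    rw [sub_ne_zero]
    exact_mod_cast h
  have hcard : Fintype.card (Fin d × Fin k) = d * k := by simp
  have hm := fun l₁ l₂ : Fin k => mom_eq μ (by rw [hcard]; exact hD)
    (a₁, (⟨0, hk⟩ : Fin k)) (a₂, ⟨0, hk⟩) (b₁, ⟨0, hk⟩) (b₂, ⟨0, hk⟩)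
          (i₁, l₁) (i₂, l₂) (j₁, l₁) (j₂, l₂)
  simp only [hcard, Nat.cast_mul] at hm
  have hδ : ∀ (x y : Fin d) (u v : Fin k), δ (x, u) (y, v) = δ x y * δ u v := by
    intro x y u v
    simp only [δ, Prod.mk.injEq]
    split_ifs <;> simp_all
  have hδ1 : ∀ u : Fin k, δ u u = 1 := fun u => by simp [δ]
  simp only [hδ, hδ1, mul_one] at hm
  have hm' := fun l₁ l₂ => eq_div_of_mul_eq (mul_ne_zero (mul_ne_zero hd0 hk0) hD0) (hm l₁ l₂)
  have hs : ∀ A B C : ℂ, ∑ l₁ : Fin k, ∑ l₂ : Fin k,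
      (A + B * (δ i₁ j₂ * δ l₁ l₂ * (δ i₂ j₁ * δ l₂ l₁))) / C =
      (k ^ 2 * A + k * (B * (δ i₁ j₂ * δ i₂ j₁))) / C := by
    intro A B C
    simp only [← Finset.sum_div, Finset.sum_add_distrib]
    congr 2
    · simp; ring
    · simp [δ]
  rw [hL]
  simp only [hm']
  rw [hs]
  field_simp
  ring
end

section
/- Let d ≥ 1 and let (ψ_m)_{m<M} (M ≥ 1) be a complex projective 2-design of unit vectors in ℂ^d. Then the average purity of the decohered probability vectors is fixed: (1/M) Σ_{m<M} Σ_{i ∈ Fin d} |ψ_m(i)|⁴ = 2/(d+1). In particular, if all states of the design have the same probability vector up to permutation (as for isocoherent MUB in d = 4), each state satisfies Σ_i |ψ_m(i)|⁴ = 2/(d+1), which equals 2/5 for d = 4. -/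
open MeasureTheory Matrix

section helpers

/-- Reflection in the direction `v`. -/
noncomputable def reflMat {d : ℕ} (s : ℝ) (v : Fin d → ℂ) : Matrix (Fin d) (Fin d) ℂ :=
  1 - (s : ℂ) • vecMulVec v (star v)

lemma reflMat_mem {d : ℕ} (s : ℝ) (v : Fin d → ℂ) (h : (s : ℂ) * (star v ⬝ᵥ v) = 2) :
    reflMat s v ∈ Matrix.unitaryGroup (Fin d) ℂ := by
  have hs : star (reflMat s v) = reflMat s v := by
    unfold reflMat
    rw [Matrix.star_eq_conjTranspose]
    simp [Matrix.conjTranspose_sub, Matrix.conjTranspose_smul, Matrix.conjTranspose_vecMulVec]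
  rw [Matrix.mem_unitaryGroup_iff, hs]
  unfold reflMat
  have h2 : vecMulVec v (star v) * vecMulVec v (star v)
      = (star v ⬝ᵥ v) • vecMulVec v (star v) := by
    rw [Matrix.vecMulVec_mul_vecMulVec]
    ext a b
    simp [vecMulVec_apply]
    ring
  have h3 : ((s : ℂ) • vecMulVec v (star v)) * ((s : ℂ) • vecMulVec v (star v))
      = (2 : ℂ) • ((s : ℂ) • vecMulVec v (star v)) := by
    rw [smul_mul_smul_comm, h2, smul_smul, mul_assoc, h, smul_smul, mul_comm]
  rw [sub_mul, mul_sub, mul_sub, h3, two_smul]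
  simp

lemma reflMat_mulVec {d : ℕ} (s : ℝ) (v x : Fin d → ℂ) (a : Fin d) :
    (reflMat s v).mulVec x a = x a - s * v a * (star v ⬝ᵥ x) := by
  unfold reflMat
  rw [Matrix.sub_mulVec, Matrix.smul_mulVec, Matrix.vecMulVec_mulVec]
  simp
  ring

lemma exists_rot {d : ℕ} (i j : Fin d) (hij : i ≠ j) (c : ℂ) (hc : ‖c‖ = 1) :
    ∃ W : Matrix.unitaryGroup (Fin d) ℂ, ∀ x : Fin d → ℂ,
      ‖(W : Matrix (Fin d) (Fin d) ℂ).mulVec x i‖ ^ 2 *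
        ‖(W : Matrix (Fin d) (Fin d) ℂ).mulVec x j‖ ^ 2 =
        ‖x i ^ 2 - c ^ 2 * x j ^ 2‖ ^ 2 / 4 := by
  obtain ⟨r, hr⟩ : ∃ r : ℝ, r ^ 2 = 1 / 2 := ⟨√(1/2), Real.sq_sqrt (by norm_num)⟩
  have hrc : (r : ℂ) ^ 2 = 1 / 2 := by
    rw [← Complex.ofReal_pow, hr]; norm_num
  have hcc : (starRingEnd ℂ) c * c = 1 := by
    rw [mul_comm, Complex.mul_conj, Complex.normSq_eq_norm_sq, hc]; simp
  set v : Fin d → ℂ := Pi.single i (1 - 2 * (r : ℂ)) + Pi.single j ((starRingEnd ℂ) c) with hv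
  have hvi : v i = 1 - 2 * r := by simp [hv, hij]
  have hvj : v j = (starRingEnd ℂ) c := by simp [hv, hij.symm]
  have hdot : ∀ x : Fin d → ℂ, star v ⬝ᵥ x = (1 - 2 * r) * x i + c * x j := by
    intro x
    rw [hv, star_add, add_dotProduct, ← Pi.single_star, ← Pi.single_star,
      single_dotProduct, single_dotProduct]
    simp
  refine ⟨⟨reflMat (1 + r) v, reflMat_mem _ _ ?_⟩, fun x => ?_⟩
  · rw [hdot, hvi, hvj, mul_comm c, hcc]
    push_cast
    linear_combination (4 * (r : ℂ)) * hrc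
  · have h : (reflMat (1 + r) v).mulVec x i * (reflMat (1 + r) v).mulVec x j =
        (starRingEnd ℂ) c * (x i ^ 2 - c ^ 2 * x j ^ 2) / 2 := by
      have h1 : (reflMat (1 + r) v).mulVec x i = r * (x i + c * x j) := by
        rw [reflMat_mulVec, hdot, hvi]
        push_cast
        linear_combination (2 * c * x j + (- 4 * r) * x i) * hrc
      have h2 : (reflMat (1 + r) v).mulVec x j = r * ((starRingEnd ℂ) c * x i - x j) := by
        rw [reflMat_mulVec, hdot, hvj]
        push_cast
        linear_combination (2 * (starRingEnd ℂ) c * x i) * hrc - (1 + r) * x j * hcc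
      rw [h1, h2]
      linear_combination (x i + c * x j) * ((starRingEnd ℂ) c * x i - x j) * hrc
        + (c * x j ^ 2 + x i * x j) / 2 * hcc
    rw [← mul_pow, ← norm_mul]
    show ‖(reflMat (1 + r) v).mulVec x i * (reflMat (1 + r) v).mulVec x j‖ ^ 2 = _
    rw [h, norm_div, norm_mul, RCLike.norm_conj, hc]
    simp
    ring

lemma norm_mulVec_sum {d : ℕ} (V : Matrix.unitaryGroup (Fin d) ℂ) (x : Fin d → ℂ)
    (hx : ∑ i, ‖x i‖ ^ 2 = 1) :
    ∑ i, ‖(V : Matrix (Fin d) (Fin d) ℂ).mulVec x i‖ ^ 2 = 1 := by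
  have key : ∀ y : Fin d → ℂ, ((∑ i, ‖y i‖ ^ 2 : ℝ) : ℂ) = star y ⬝ᵥ y := by
    intro y
    simp [dotProduct, Complex.conj_mul']
  have h : ((∑ i, ‖(V : Matrix (Fin d) (Fin d) ℂ).mulVec x i‖ ^ 2 : ℝ) : ℂ) = 1 := by
    rw [key, Matrix.star_mulVec, Matrix.dotProduct_mulVec, Matrix.vecMul_vecMul,
      ← Matrix.star_eq_conjTranspose, Matrix.UnitaryGroup.star_mul_self, Matrix.vecMul_one,
      ← key, hx]
    simp
  exact_mod_cast h

lemma haar_sum {d : ℕ} 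
    (μ : Measure (Matrix.unitaryGroup (Fin d) ℂ)) [μ.IsHaarMeasure] [IsProbabilityMeasure μ]
    (x : Fin d → ℂ) (hx : ∑ i, ‖x i‖ ^ 2 = 1) :
    ∑ i, ∫ V : Matrix.unitaryGroup (Fin d) ℂ,
      ‖(V : Matrix (Fin d) (Fin d) ℂ).mulVec x i‖ ^ 4 ∂μ = 2 / (d + 1) := by
  set y : Matrix.unitaryGroup (Fin d) ℂ → Fin d → ℂ :=
    fun V => (V : Matrix (Fin d) (Fin d) ℂ).mulVec x with hy
  have hyc : ∀ i, Continuous fun V => y V i := by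
    intro i
    exact (continuous_apply i).comp (Continuous.matrix_mulVec continuous_subtype_val continuous_const)
  have hle : ∀ V i, ‖y V i‖ ^ 2 ≤ 1 := by
    intro V i
    rw [← norm_mulVec_sum V x hx]
    exact Finset.single_le_sum (f := fun i => ‖y V i‖ ^ 2) (fun _ _ => by positivity)
      (Finset.mem_univ i)
  have hle1 : ∀ V i, ‖y V i‖ ≤ 1 := by
    intro V i
    nlinarith [hle V i, norm_nonneg (y V i)]
  have hint : ∀ f : Matrix.unitaryGroup (Fin d) ℂ → ℝ, Continuous f → (∃ C, ∀ V, ‖f V‖ ≤ C) →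
      Integrable f μ := by
    rintro f hf ⟨C, hC⟩
    exact Integrable.of_bound hf.aestronglyMeasurable C (Filter.Eventually.of_forall hC)
  have hbint : ∀ i j, Integrable (fun V => ‖y V i‖ ^ 2 * ‖y V j‖ ^ 2) μ := by
    intro i j
    refine hint _ (((hyc i).norm.pow 2).mul ((hyc j).norm.pow 2)) ⟨1, fun V => ?_⟩
    rw [Real.norm_of_nonneg (by positivity)]
    exact mul_le_one₀ (hle V i) (by positivity) (hle V j)
  have haint : ∀ i, Integrable (fun V => ‖y V i‖ ^ 4) μ := by
    intro i
    convert hbint i i using 2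
    ring
  have hrot : ∀ i j, i ≠ j → ∀ c : ℂ, ‖c‖ = 1 →
      ∫ V, ‖y V i‖ ^ 2 * ‖y V j‖ ^ 2 ∂μ = ∫ V, ‖y V i ^ 2 - c ^ 2 * y V j ^ 2‖ ^ 2 / 4 ∂μ := by
    intro i j hij c hc
    obtain ⟨W, hW⟩ := exists_rot i j hij c hc
    rw [← integral_mul_left_eq_self (μ := μ) (fun V => ‖y V i‖ ^ 2 * ‖y V j‖ ^ 2) W]
    congr 1
    ext V
    rw [← hW (y V)]
    simp [hy, Matrix.mulVec_mulVec]
  have hcint : ∀ i j, ∀ c : ℂ, ‖c‖ = 1 →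
      Integrable (fun V => ‖y V i ^ 2 - c ^ 2 * y V j ^ 2‖ ^ 2 / 4) μ := by
    intro i j c hc
    refine hint _ ?_ ⟨1, fun V => ?_⟩
    · exact ((((hyc i).pow 2).sub (continuous_const.mul ((hyc j).pow 2))).norm.pow 2).div_const 4
    · rw [Real.norm_of_nonneg (by positivity)]
      have h1 : ‖y V i ^ 2 - c ^ 2 * y V j ^ 2‖ ≤ 2 := by
        refine (norm_sub_le _ _).trans ?_
        rw [norm_mul, norm_pow, norm_pow, norm_pow, hc]
        linarith [hle V i, hle V j]
      nlinarith [norm_nonneg (y V i ^ 2 - c ^ 2 * y V j ^ 2)]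
  have hb : ∀ i j, i ≠ j → ∫ V, ‖y V i‖ ^ 2 * ‖y V j‖ ^ 2 ∂μ =
      ((∫ V, ‖y V i‖ ^ 4 ∂μ) + ∫ V, ‖y V j‖ ^ 4 ∂μ) / 4 := by
    intro i j hij
    have e1 := hrot i j hij 1 (by simp)
    have e2 := hrot i j hij Complex.I (by simp)
    have e3 : (∫ V, ‖y V i ^ 2 - 1 ^ 2 * y V j ^ 2‖ ^ 2 / 4 ∂μ) +
        (∫ V, ‖y V i ^ 2 - Complex.I ^ 2 * y V j ^ 2‖ ^ 2 / 4 ∂μ) =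
        ((∫ V, ‖y V i‖ ^ 4 ∂μ) + ∫ V, ‖y V j‖ ^ 4 ∂μ) / 2 := by
      rw [← integral_add (hcint i j 1 (by simp)) (hcint i j Complex.I (by simp)),
        ← integral_add (haint i) (haint j), ← integral_div]
      congr 1
      ext V
      have := parallelogram_law_with_norm ℝ (y V i ^ 2) (y V j ^ 2)
      rw [norm_pow, norm_pow] at this
      simp only [Complex.I_sq, one_pow, one_mul, neg_mul, sub_neg_eq_add]
      nlinarith
    linarith
  set a : Fin d → ℝ := fun i => ∫ V, ‖y V i‖ ^ 4 ∂μ with ha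
  have htot : ∑ i, ∑ j, ∫ V, ‖y V i‖ ^ 2 * ‖y V j‖ ^ 2 ∂μ = 1 := by
    simp_rw [← integral_finset_sum _ (fun j _ => hbint _ j)]
    rw [← integral_finset_sum _ (fun i _ => integrable_finset_sum _ (fun j _ => hbint i j))]
    have : ∀ V, ∑ i, ∑ j, ‖y V i‖ ^ 2 * ‖y V j‖ ^ 2 = 1 := by
      intro V
      rw [← Finset.sum_mul_sum, norm_mulVec_sum V x hx, one_mul]
    simp [this]
  have hall : ∀ i j, ∫ V, ‖y V i‖ ^ 2 * ‖y V j‖ ^ 2 ∂μ =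
      (a i + a j) / 4 + if i = j then a i / 2 else 0 := by
    intro i j
    split_ifs with h
    · subst h
      have : ∫ V, ‖y V i‖ ^ 2 * ‖y V i‖ ^ 2 ∂μ = a i := by
        simp only [ha]; congr 1; ext V; ring
      rw [this]; ring
    · rw [hb i j h, add_zero]
  simp_rw [hall, Finset.sum_add_distrib, ← Finset.sum_div, Finset.sum_add_distrib] at htot
  simp [← Finset.mul_sum, ← Finset.sum_div] at htot
  rw [eq_div_iff (by positivity)]
  linarith

end helpers

/-- For a complex projective `2`-design, the average purity of the
decohered probability vectors is `2/(d+1)`; in particular, if all probability vectors agree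
up to permutation, each state has purity `2/(d+1)`. -/
theorem design_average_purity (d M : ℕ) (hd : 1 ≤ d) (hM : 1 ≤ M)
    (μ : Measure (Matrix.unitaryGroup (Fin d) ℂ)) [μ.IsHaarMeasure] [IsProbabilityMeasure μ]
    (ψ₀ : Fin d → ℂ) (hψ₀ : ∑ i, ‖ψ₀ i‖ ^ 2 = 1)
    (ψ : Fin M → (Fin d → ℂ)) (hψ : ∀ m, ∑ i, ‖ψ m i‖ ^ 2 = 1)
    (hdesign : ∀ p q : Fin 2 → Fin d,
      (1 / M : ℂ) * ∑ m, ∏ n, ψ m (p n) * (starRingEnd ℂ) (ψ m (q n)) =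
        ∫ V : Matrix.unitaryGroup (Fin d) ℂ,
          ∏ n, (V : Matrix (Fin d) (Fin d) ℂ).mulVec ψ₀ (p n) *
            (starRingEnd ℂ) ((V : Matrix (Fin d) (Fin d) ℂ).mulVec ψ₀ (q n)) ∂μ) :
    ((1 / M : ℝ) * ∑ m, ∑ i, ‖ψ m i‖ ^ 4 = 2 / (d + 1)) ∧
    ((∃ P : Fin d → ℝ, ∀ m, ∃ σ : Equiv.Perm (Fin d), ∀ i, ‖ψ m i‖ ^ 2 = P (σ i)) →
      ∀ m, ∑ i, ‖ψ m i‖ ^ 4 = 2 / (d + 1)) := by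
  have hM0 : (M : ℝ) ≠ 0 := by positivity
  have hi : ∀ i, (1 / M : ℝ) * ∑ m, ‖ψ m i‖ ^ 4 =
      ∫ V : Matrix.unitaryGroup (Fin d) ℂ,
        ‖(V : Matrix (Fin d) (Fin d) ℂ).mulVec ψ₀ i‖ ^ 4 ∂μ := by
    intro i
    have h := hdesign (fun _ => i) (fun _ => i)
    have e : ∀ z : ℂ, ∏ _n : Fin 2, z * (starRingEnd ℂ) z = ((‖z‖ ^ 4 : ℝ) : ℂ) := by
      intro z
      rw [Complex.mul_conj']
      simp
      ring
    simp only [e] at h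
    rw [integral_complex_ofReal] at h
    apply Complex.ofReal_injective
    rw [← h]
    push_cast
    rfl
  have h1 : (1 / M : ℝ) * ∑ m, ∑ i, ‖ψ m i‖ ^ 4 = 2 / (d + 1) := by
    rw [Finset.sum_comm, Finset.mul_sum, ← haar_sum μ ψ₀ hψ₀]
    exact Finset.sum_congr rfl fun i _ => hi i
  refine ⟨h1, ?_⟩
  rintro ⟨P, hP⟩ m
  have hs : ∀ m, ∑ i, ‖ψ m i‖ ^ 4 = ∑ i, P i ^ 2 := by
    intro m
    obtain ⟨σ, hσ⟩ := hP m
    rw [← Equiv.sum_comp σ (fun i => P i ^ 2)]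
    refine Finset.sum_congr rfl fun i _ => ?_
    rw [← hσ i]
    ring
  rw [hs m, ← h1]
  simp only [hs]
  simp
  field_simp
end

section
/- (The octahedron is a spherical 3-design.) Let σ be the normalized (probability) surface measure on the unit sphere S² ⊆ EuclideanSpace ℝ (Fin 3). Then for every p ∈ MvPolynomial (Fin 3) ℝ with totalDegree p ≤ 3, (1/6) Σ_{v ∈ {±e₁, ±e₂, ±e₃}} p(v) = ∫_{S²} p(x) dσ(x), where e₁, e₂, e₃ are the standard basis vectors (the six points being the vertices of a regular octahedron inscribed in the sphere). -/
open MeasureTheory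

/-- The normalized (probability) surface measure on the unit sphere
`S² ⊆ EuclideanSpace ℝ (Fin 3)`. -/
noncomputable def sphereProbMeasure :
    Measure (Metric.sphere (0 : EuclideanSpace ℝ (Fin 3)) 1) :=
  ((volume : Measure (EuclideanSpace ℝ (Fin 3))).toSphere Set.univ)⁻¹ •
    (volume : Measure (EuclideanSpace ℝ (Fin 3))).toSphere


local notation "E3" => EuclideanSpace ℝ (Fin 3)
local notation "S2" => Metric.sphere (0 : EuclideanSpace ℝ (Fin 3)) 1

noncomputable def sphMap (A : E3 ≃ₗᵢ[ℝ] E3) : S2 → S2 := fun x => ⟨A x, by simp⟩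

lemma sphMap_cont (A : E3 ≃ₗᵢ[ℝ] E3) : Continuous (sphMap A) :=
  (A.continuous.comp continuous_subtype_val).subtype_mk _

open scoped Pointwise in
lemma toSphere_preimage (A : E3 ≃ₗᵢ[ℝ] E3) (s : Set S2) (hs : MeasurableSet s) :
    (volume : Measure E3).toSphere (sphMap A ⁻¹' s) = (volume : Measure E3).toSphere s := by
  rw [Measure.toSphere_apply' _ hs, Measure.toSphere_apply' _ ((sphMap_cont A).measurable hs)]
  congr 1
  have h : Set.Ioo (0:ℝ) 1 • ((↑) '' (sphMap A ⁻¹' s) : Set E3)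
      = A ⁻¹' (Set.Ioo (0:ℝ) 1 • ((↑) '' s : Set E3)) := by
    ext x
    simp only [Set.mem_smul, Set.mem_image, Set.mem_preimage]
    constructor
    · rintro ⟨r, hr, _, ⟨y, hy, rfl⟩, rfl⟩
      exact ⟨r, hr, _, ⟨_, hy, rfl⟩, by simp [sphMap]⟩
    · rintro ⟨r, hr, _, ⟨y, hy, rfl⟩, h⟩
      refine ⟨r, hr, _, ⟨⟨A.symm y, by simp⟩, ?_, rfl⟩, ?_⟩
      · simpa [sphMap] using hy
      · apply A.injective
        simpa using h
  rw [h]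
  exact A.measurePreserving.measure_preimage_emb A.toHomeomorph.measurableEmbedding _

instance : IsProbabilityMeasure sphereProbMeasure := by
  constructor
  rw [sphereProbMeasure, Measure.smul_apply, smul_eq_mul]
  refine ENNReal.inv_mul_cancel ?_ (measure_ne_top _ _)
  rw [Ne, Measure.measure_univ_eq_zero]
  exact Measure.toSphere_ne_zero _

lemma sph_mp (A : E3 ≃ₗᵢ[ℝ] E3) :
    MeasurePreserving (sphMap A) sphereProbMeasure sphereProbMeasure := by
  refine ⟨(sphMap_cont A).measurable, ?_⟩
  ext s hs
  rw [Measure.map_apply (sphMap_cont A).measurable hs]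
  simp only [sphereProbMeasure, Measure.smul_apply, toSphere_preimage A s hs]

lemma sph_integral_inv (A : E3 ≃ₗᵢ[ℝ] E3) (f : S2 → ℝ) (hf : Continuous f) :
    ∫ x, f (sphMap A x) ∂sphereProbMeasure = ∫ x, f x ∂sphereProbMeasure := by
  rw [← integral_map (sphMap_cont A).aemeasurable hf.aestronglyMeasurable, (sph_mp A).map_eq]

lemma integ (f : S2 → ℝ) (hf : Continuous f) : Integrable f sphereProbMeasure :=
  hf.integrable_of_hasCompactSupport (HasCompactSupport.of_compactSpace f)

lemma coord_cont (i : Fin 3) : Continuous (fun x : S2 => (x : E3) i) := by fun_prop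

noncomputable def refl3 (i : Fin 3) : E3 ≃ₗᵢ[ℝ] E3 :=
  LinearIsometryEquiv.piLpCongrRight 2
    (fun j => if j = i then LinearIsometryEquiv.neg ℝ else LinearIsometryEquiv.refl ℝ ℝ)

lemma K_odd (s : Fin 3 → ℕ) (i : Fin 3) (h : Odd (s i)) :
    ∫ x : S2, ∏ j, (x : E3) j ^ s j ∂sphereProbMeasure = 0 := by
  have h1 := sph_integral_inv (refl3 i) (fun x => ∏ j, (x : E3) j ^ s j) (by fun_prop)
  have h2 : ∀ x : S2, ∏ j, ((sphMap (refl3 i) x : S2) : E3) j ^ s j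
      = - ∏ j, (x : E3) j ^ s j := by
    intro x
    have : ∀ j, ((sphMap (refl3 i) x : S2) : E3) j = if j = i then -(x : E3) j else (x : E3) j := by
      intro j
      simp only [sphMap, refl3, LinearIsometryEquiv.piLpCongrRight_apply]
      split_ifs <;> simp
    simp only [this]
    rw [← Finset.mul_prod_erase _ _ (Finset.mem_univ i),
      ← Finset.mul_prod_erase Finset.univ (fun j => (x : E3) j ^ s j) (Finset.mem_univ i)]
    rw [if_pos rfl, h.neg_pow, neg_mul]
    congr 2
    apply Finset.prod_congr rfl
    intro j hj
    rw [if_neg (Finset.ne_of_mem_erase hj)]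
  simp only [h2, integral_neg] at h1
  linarith

lemma sq_eq (i j : Fin 3) :
    ∫ x : S2, (x : E3) i ^ 2 ∂sphereProbMeasure = ∫ x : S2, (x : E3) j ^ 2 ∂sphereProbMeasure := by
  have h1 := sph_integral_inv (LinearIsometryEquiv.piLpCongrLeft 2 ℝ ℝ (Equiv.swap i j))
    (fun x => (x : E3) j ^ 2) (by fun_prop)
  rw [← h1]
  congr 1
  ext x
  simp [sphMap, LinearIsometryEquiv.piLpCongrLeft_apply, Equiv.piCongrLeft'_apply]

lemma sq_val (i : Fin 3) : ∫ x : S2, (x : E3) i ^ 2 ∂sphereProbMeasure = 1 / 3 := by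
  have h : ∫ x : S2, ((x : E3) 0 ^ 2 + (x : E3) 1 ^ 2 + (x : E3) 2 ^ 2) ∂sphereProbMeasure = 1 := by
    have : ∀ x : S2, ((x : E3) 0 ^ 2 + (x : E3) 1 ^ 2 + (x : E3) 2 ^ 2) = 1 := by
      intro x
      have hx : ‖(x : E3)‖ = 1 := by simp
      have := EuclideanSpace.real_norm_sq_eq (x : E3)
      rw [hx, Fin.sum_univ_three] at this
      linarith
    simp [this]
  rw [integral_add (integ _ (by fun_prop)) (integ _ (by fun_prop)),
    integral_add (integ _ (by fun_prop)) (integ _ (by fun_prop)),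
    sq_eq 0 i, sq_eq 1 i, sq_eq 2 i] at h
  linarith

lemma mono_case (s : Fin 3 → ℕ) (hs : s 0 + s 1 + s 2 ≤ 3) :
    (1 / 6 : ℝ) * ∑ i : Fin 3, (∏ j, (Pi.single i (1 : ℝ) : Fin 3 → ℝ) j ^ s j +
      ∏ j, (-Pi.single i (1 : ℝ) : Fin 3 → ℝ) j ^ s j)
    = ∫ x : S2, ∏ j, (x : E3) j ^ s j ∂sphereProbMeasure := by
  by_cases hodd : ∃ i, Odd (s i)
  · obtain ⟨i, hi⟩ := hodd
    rw [K_odd s i hi]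
    have h0 : s i ≠ 0 := by rintro h; simp [h] at hi
    rw [mul_eq_zero]; right
    apply Finset.sum_eq_zero
    intro k _
    by_cases hk : k = i
    · subst hk
      rw [← Finset.mul_prod_erase _ _ (Finset.mem_univ k),
        ← Finset.mul_prod_erase Finset.univ
          (fun j => (-Pi.single k (1 : ℝ) : Fin 3 → ℝ) j ^ s j) (Finset.mem_univ k)]
      have : ∀ j ∈ Finset.univ.erase k, (-Pi.single k (1 : ℝ) : Fin 3 → ℝ) j ^ s j
          = (Pi.single k (1 : ℝ) : Fin 3 → ℝ) j ^ s j := by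
        intro j hj
        simp [Pi.single_eq_of_ne (Finset.ne_of_mem_erase hj)]
      rw [Finset.prod_congr rfl this]
      simp [hi.neg_pow]
    · rw [Finset.prod_eq_zero (Finset.mem_univ i), Finset.prod_eq_zero (Finset.mem_univ i)]
      · simp
      · simp [Pi.single_eq_of_ne (Ne.symm hk), h0]
      · simp [Pi.single_eq_of_ne (Ne.symm hk), h0]
  · push Not at hodd
    have h0 := hodd 0
    have h1 := hodd 1
    have h2 := hodd 2
    rw [Nat.not_odd_iff] at h0 h1 h2
    have hc : (s 0 = 0 ∧ s 1 = 0 ∧ s 2 = 0) ∨ (s 0 = 2 ∧ s 1 = 0 ∧ s 2 = 0) ∨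
      (s 0 = 0 ∧ s 1 = 2 ∧ s 2 = 0) ∨ (s 0 = 0 ∧ s 1 = 0 ∧ s 2 = 2) := by omega
    rcases hc with ⟨a, b, c⟩ | ⟨a, b, c⟩ | ⟨a, b, c⟩ | ⟨a, b, c⟩ <;>
      simp only [Fin.prod_univ_three, Fin.sum_univ_three, a, b, c, pow_zero, mul_one, one_mul,
        sq_val] <;> simp [Pi.single_apply] <;> norm_num

theorem octahedron_is_spherical_three_design
    (p : MvPolynomial (Fin 3) ℝ) (hp : p.totalDegree ≤ 3) :
    (1 / 6 : ℝ) * ∑ i : Fin 3,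
        (MvPolynomial.eval (Pi.single i (1 : ℝ)) p +
          MvPolynomial.eval (-Pi.single i (1 : ℝ)) p) =
      ∫ x : Metric.sphere (0 : EuclideanSpace ℝ (Fin 3)) 1,
        MvPolynomial.eval (fun j => (x : EuclideanSpace ℝ (Fin 3)) j) p ∂sphereProbMeasure := by
  simp only [MvPolynomial.eval_eq']
  rw [integral_finsetSum _ (fun d _ => integ _ (by fun_prop))]
  simp only [← Finset.sum_add_distrib]
  rw [Finset.sum_comm, Finset.mul_sum]
  apply Finset.sum_congr rfl
  intro d hd
  have hdeg := (MvPolynomial.le_totalDegree hd).trans hp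
  rw [Finsupp.sum_fintype _ _ (fun _ => rfl), Fin.sum_univ_three] at hdeg
  rw [integral_const_mul, ← mono_case d hdeg]
  simp only [← mul_add, ← Finset.mul_sum]
  ring
end

section
/- (Mixed-state designs from bipartite projective designs.) Let d ≥ 1, k ≥ 1, t ≥ 1, fix a unit vector ψ₀ ∈ ℂ^{Fin d × Fin k}, and let (ψ_m)_{m<M} (M ≥ 1) be a complex projective t-design of unit vectors in ℂ^{Fin d × Fin k} (with respect to the Haar probability measure on U(Fin d × Fin k)). Define the reduced density matrices ρ_m ∈ Matrix (Fin d) (Fin d) ℂ by ρ_m(i,j) = Σ_{l ∈ Fin k} ψ_m(i,l) · conj(ψ_m(j,l)), and similarly ρ_U(i,j) = Σ_l (Uψ₀)(i,l) · conj((Uψ₀)(j,l)) for U ∈ U(Fin d × Fin k). Then the reduced states form a t-design for the induced measure on mixed states: for all tuples p, q : Fin t → Fin d, (1/M) Σ_{m<M} ∏_{n<t} ρ_m(p n, q n) = ∫_{U(Fin d × Fin k)} ∏_{n<t} ρ_U(p n, q n) dHaar(U). -/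
open MeasureTheory Matrix

/-- **mixed-state designs from bipartite projective designs.** Partial trace
of a complex projective `t`-design on `ℂ^{d·k}` yields a `t`-design for the induced measure
on mixed states of dimension `d`. -/
theorem mixed_state_design_of_bipartite_projective_design
    (d k t M : ℕ) (hd : 1 ≤ d) (hk : 1 ≤ k) (ht : 1 ≤ t) (hM : 1 ≤ M)
    (μ : Measure (Matrix.unitaryGroup (Fin d × Fin k) ℂ)) [μ.IsHaarMeasure]
    [IsProbabilityMeasure μ]
    (ψ₀ : Fin d × Fin k → ℂ) (hψ₀ : ∑ i, ‖ψ₀ i‖ ^ 2 = 1)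
    (ψ : Fin M → (Fin d × Fin k → ℂ)) (hψ : ∀ m, ∑ i, ‖ψ m i‖ ^ 2 = 1)
    (hdesign : ∀ p q : Fin t → (Fin d × Fin k),
      (1 / M : ℂ) * ∑ m, ∏ n, ψ m (p n) * (starRingEnd ℂ) (ψ m (q n)) =
        ∫ V : Matrix.unitaryGroup (Fin d × Fin k) ℂ,
          ∏ n, (V : Matrix (Fin d × Fin k) (Fin d × Fin k) ℂ).mulVec ψ₀ (p n) *
            (starRingEnd ℂ)
              ((V : Matrix (Fin d × Fin k) (Fin d × Fin k) ℂ).mulVec ψ₀ (q n)) ∂μ) :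
    ∀ p q : Fin t → Fin d,
      (1 / M : ℂ) * ∑ m, ∏ n,
          (∑ l : Fin k, ψ m (p n, l) * (starRingEnd ℂ) (ψ m (q n, l))) =
        ∫ V : Matrix.unitaryGroup (Fin d × Fin k) ℂ,
          ∏ n, (∑ l : Fin k,
            (V : Matrix (Fin d × Fin k) (Fin d × Fin k) ℂ).mulVec ψ₀ (p n, l) *
              (starRingEnd ℂ)
                ((V : Matrix (Fin d × Fin k) (Fin d × Fin k) ℂ).mulVec ψ₀ (q n, l))) ∂μ := by
  intro p q
  have hb : ∀ (V : Matrix.unitaryGroup (Fin d × Fin k) ℂ) (i : Fin d × Fin k),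
      ‖(V : Matrix (Fin d × Fin k) (Fin d × Fin k) ℂ).mulVec ψ₀ i‖ ≤ ∑ j, ‖ψ₀ j‖ := by
    intro V i
    refine (norm_sum_le _ _).trans (Finset.sum_le_sum fun j _ => ?_)
    rw [norm_mul]
    exact mul_le_of_le_one_left (norm_nonneg _) (entry_norm_bound_of_unitary V.2 i j)
  have hc : ∀ i : Fin d × Fin k, Continuous
      fun V : Matrix.unitaryGroup (Fin d × Fin k) ℂ =>
        (V : Matrix (Fin d × Fin k) (Fin d × Fin k) ℂ).mulVec ψ₀ i := fun i =>
    (continuous_apply i).comp (Continuous.matrix_mulVec continuous_subtype_val continuous_const)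
  have hint : ∀ p q : Fin t → (Fin d × Fin k), Integrable
      (fun V : Matrix.unitaryGroup (Fin d × Fin k) ℂ =>
        ∏ n, (V : Matrix (Fin d × Fin k) (Fin d × Fin k) ℂ).mulVec ψ₀ (p n) *
            (starRingEnd ℂ)
              ((V : Matrix (Fin d × Fin k) (Fin d × Fin k) ℂ).mulVec ψ₀ (q n))) μ := by
    intro p q
    refine Integrable.of_bound (C := ∏ _n : Fin t, ((∑ j, ‖ψ₀ j‖) * (∑ j, ‖ψ₀ j‖))) ?_ ?_
    · refine Continuous.aestronglyMeasurable ?_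
      exact continuous_finsetProd _ fun n _ =>
        (hc (p n)).mul (Complex.continuous_conj.comp (hc (q n)))
    · refine Filter.Eventually.of_forall fun V => ?_
      rw [norm_prod]
      refine Finset.prod_le_prod (fun _ _ => norm_nonneg _) fun n _ => ?_
      rw [norm_mul, RCLike.norm_conj]
      exact mul_le_mul (hb V _) (hb V _) (norm_nonneg _) ((norm_nonneg _).trans (hb V (p n)))
  simp only [Finset.prod_univ_sum, Fintype.piFinset_univ]
  rw [integral_finsetSum _ fun l _ => hint (fun n => (p n, l n)) (fun n => (q n, l n)),
    Finset.sum_comm, Finset.mul_sum]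
  exact Finset.sum_congr rfl fun l _ => hdesign (fun n => (p n, l n)) (fun n => (q n, l n))
end
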